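/- Suppose V is a finite set with |V| ≥ 2 and s ≠ t are two designated vertices of V, and c assigns to each edge a nonnegative real number such that c satisfies the triangle inequality c({u,w}) ≤ c({u,v}) + c({v,w}) for all pairwise distinct u, v, w ∈ V. Then for every feasible solution x of the subtour elimination LP for s–t path TSP there exists a Hamiltonian s–t path, i.e. an enumeration v_0 = s, v_1, …, v_{n−1} = t of all vertices of V without repetition, whose cost ∑_{i=0}^{n−2} c({v_i, v_{i+1}}) is at most (3/2 + 1/34) · ∑_{e edge} c(e)·x(e). -/

import Mathlib

/-!
A connected multigraph on `V` whose odd-degree vertices are exactly `s` and `t` has an Eulerian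
`s`–`t` trail, and shortcutting that trail gives a Hamiltonian path of no larger cost
(`ham_of_multigraph`). It therefore suffices to find such a multigraph of cost at most `26/17` times
the LP cost; this is `exists_valid`, proved for strictly positive costs. The general case follows by
applying it to `c + ε`, since there are only finitely many Hamiltonian paths.

**Joins.** A nonnegative vector with mass at least `1` on every `T`-odd cut costs at least as much
as some `T`-join (`joinThm`). The proof is by induction on the number of vertices: take an optimal
extreme point. A tight odd cut with two vertices on each side is contracted on either side and
the two joins are glued; a vertex with one support neighbour is removed; otherwise counting support
edges against tight stars leaves only four vertices.

**Trees.** Write `z(L) = 2 - x(δ(L))`. The narrow cuts, the `s`–`t` cuts with `z(L) > 0`, form a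
chain. The vector `x` is a convex combination of spanning trees `T`, each coming with an upper
level set `I` of `z` whose cuts `T` crosses exactly once, such that each narrow cut `L` lies in `I`
with total weight `z(L)` (`layered_decomposition`). The trees are removed from `x` one after the
other; after weight `r` has been removed, the next one has to cross once every cut with `z(L) > r`,
and has to lie in the minimal face of the spanning tree polytope containing the remaining vector.
Such a tree exists by `face_lemma`: among the trees of this face one minimizes the number of
crossings with the chain, and uncrossing of tight sets shows that the minimizer is connected on both
sides of each cut.

**Tours.** For a pair `(T, I)`, the edges of `T` in the cuts of `I` are deleted and a join correcting
the parities is added. The result may be disconnected; each edge of the join reconnects the largest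
cut of `I` it crosses, and the tree edges of the remaining cuts are put back twice. Every edge
pays for this in advance through the modified cost `c + 2 h` (`Comb.tour`), where `payment` bounds
the effect of `h`. As a fractional join serves `x / 2` plus `1/16` of the `s`–`t` path `P` in `T`,
plus a correction of mass `η(L) = max (z(L) / 2 - 1/16) 0` on each narrow cut (`tour_one`). A second
tour is `T` with the edges off `P` doubled (`tour_two`). Weighting the two tours by `16/17` and
`1/17` cancels the cost of `P`; averaging over the trees, the corrections are paid for by the deleted
edges because `η ≤ z ^ 2`, which is `(z - 1/4) ^ 2 ≥ 0`. What remains is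
`(16/17) * (3/2) + (1/17) * 2 = 26/17 = 3/2 + 1/34`.
-/

open Finset

noncomputable section
open scoped Classical

/-- `δ(U)`: the set of edges (unordered pairs of distinct vertices) with exactly one
endpoint in `U`. -/
def cutEdges {V : Type*} [Fintype V] (U : Finset V) : Finset (Sym2 V) :=
  Finset.univ.filter fun e => ∃ u v : V, e = s(u, v) ∧ u ∈ U ∧ v ∉ U

/-- `f(U) = 1` if `|U ∩ {s,t}| = 1` and `f(U) = 2` otherwise. -/
def lpBound {V : Type*} [Fintype V] (s t : V) (U : Finset V) : ℝ :=
  if (U ∩ {s, t}).card = 1 then 1 else 2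

/-- `x` is a feasible solution of the subtour elimination LP for `s`–`t` path TSP. -/
def SubtourLP {V : Type*} [Fintype V] (s t : V) (x : Sym2 V → ℝ) : Prop :=
  (∀ e : Sym2 V, 0 ≤ x e) ∧
  (∀ v : V, ∑ e ∈ cutEdges {v}, x e = lpBound s t {v}) ∧
  (∀ U : Finset V, U.Nonempty → U ≠ Finset.univ → lpBound s t U ≤ ∑ e ∈ cutEdges U, x e)

namespace STPath

/-! ### Eulerian trails and shortcutting -/

/-- Total cost of the consecutive pairs of a list of vertices. -/
def lcost {V : Type*} (c : Sym2 V → ℝ) (l : List V) : ℝ :=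
  ((l.zip l.tail).map fun p => c s(p.1, p.2)).sum

lemma lcost_cons_cons {V : Type*} (c : Sym2 V → ℝ) (a b : V) (l : List V) :
    lcost c (a :: b :: l) = c s(a, b) + lcost c (b :: l) := by
  simp [lcost]

lemma lcost_append {V : Type*} (c : Sym2 V → ℝ) (l : List V) (a b : V) (m : List V)
    (hl : l.getLast? = some a) :
    lcost c (l ++ b :: m) = lcost c l + c s(a, b) + lcost c (b :: m) := by
  induction l with
  | nil => simp at hl
  | cons x l ih =>
    cases l with
    | nil => simp at hl; subst hl; simp [lcost]
    | cons y l =>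
      have := ih (by simpa using hl)
      simp only [List.cons_append, lcost_cons_cons] at this ⊢
      rw [this]; ring

/-- An Eulerian trail through the component of `a`, for a multigraph whose odd-degree vertices
are exactly `a` and `b` (none if `a = b`). The component is expressed by closure of the vertex
set of the list under adjacency, and only the edges inside that set are paid for. -/
lemma euler_trail {V : Type*} (c : Sym2 V → ℝ) (hc : ∀ e, 0 ≤ c e) (n : ℕ) :
    ∀ (M : Multiset (Sym2 V)) (a b : V), Multiset.card M = n → (∀ e ∈ M, ¬ e.IsDiag) →
    (∀ v, Even (M.countP (v ∈ ·) + (if v = a then 1 else 0) + (if v = b then 1 else 0))) →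
    ∃ l : List V, l.head? = some a ∧ l.getLast? = some b ∧
      (∀ u v, u ∈ l → s(u, v) ∈ M → v ∈ l) ∧
      lcost c l ≤ ((M.filter fun e => ∀ v ∈ e, v ∈ l).map c).sum := by
  have hmono : ∀ M N : Multiset (Sym2 V), M ≤ N → (M.map c).sum ≤ (N.map c).sum := by
    intro M N h
    obtain ⟨K, rfl⟩ := Multiset.le_iff_exists_add.1 h
    rw [Multiset.map_add, Multiset.sum_add]
    have : 0 ≤ (K.map c).sum := Multiset.sum_nonneg (by
      intro x hx; obtain ⟨e, -, rfl⟩ := Multiset.mem_map.1 hx; exact hc e)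
    linarith
  induction n using Nat.strong_induction_on with
  | _ n ih =>
  intro M a b hn hd hpar
  by_cases hE : ∃ w, s(a, w) ∈ M
  swap
  · have h0 : M.countP (a ∈ ·) = 0 := by
      rw [Multiset.countP_eq_zero]
      intro e he hae
      obtain ⟨w, rfl⟩ := Sym2.mem_iff_exists.1 hae
      exact hE ⟨w, he⟩
    have hab : a = b := by
      by_contra hab
      have := hpar a
      rw [h0] at this
      simp [hab] at this
    subst hab
    refine ⟨[a], by simp, by simp, ?_, ?_⟩
    · intro u v hu hv
      simp at hu; subst hu; exact absurd ⟨v, hv⟩ hE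
    · simp only [lcost, List.tail_cons, List.zip_nil_right, List.map_nil, List.sum_nil]
      exact Multiset.sum_nonneg (by
        intro x hx; obtain ⟨e, -, rfl⟩ := Multiset.mem_map.1 hx; exact hc e)
  obtain ⟨w, hw⟩ := hE
  obtain ⟨M', rfl⟩ := Multiset.exists_cons_of_mem hw
  have haw : a ≠ w := fun h => hd _ hw (by simp [h])
  simp only [Multiset.card_cons] at hn
  have hd' : ∀ e ∈ M', ¬ e.IsDiag := fun e he => hd e (Multiset.mem_cons_of_mem he)
  have hpar' : ∀ v, Even (M'.countP (v ∈ ·) + (if v = w then 1 else 0)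
      + (if v = b then 1 else 0)) := by
    intro v
    have := hpar v
    rw [Multiset.countP_cons] at this
    simp only [Sym2.mem_iff] at this
    by_cases h1 : v = a
    · subst h1
      simp only [haw, true_or, if_true, if_false] at this ⊢
      rw [Nat.even_iff] at this ⊢; omega
    · by_cases h2 : v = w
      · subst h2; simpa [h1] using this
      · simpa [h1, h2] using this
  obtain ⟨l, hl1, hl2, hl3, hl4⟩ := ih _ (by omega) M' w b rfl hd' hpar'
  have hwl : w ∈ l := List.mem_of_mem_head? hl1
  have hbl : b ∈ l := List.mem_of_mem_getLast? hl2
  obtain ⟨l', rfl⟩ : ∃ l', l = w :: l' := by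
    cases l with
    | nil => simp at hl1
    | cons y l => simp at hl1; subst hl1; exact ⟨l, rfl⟩
  by_cases hal : a ∈ w :: l'
  · refine ⟨a :: w :: l', by simp, by simpa using hl2, ?_, ?_⟩
    · intro u v hu huv
      have hu' : u ∈ w :: l' := by
        rcases List.mem_cons.1 hu with rfl | h
        · exact hal
        · exact h
      rcases Multiset.mem_cons.1 huv with h | h
      · rcases Sym2.eq_iff.1 h with ⟨rfl, rfl⟩ | ⟨rfl, rfl⟩ <;> simp
      · exact List.mem_cons_of_mem _ (hl3 u v hu' h)
    · rw [lcost_cons_cons, Multiset.filter_cons_of_pos _ (by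
        intro v hv; rcases Sym2.mem_iff.1 hv with rfl | rfl <;> simp), Multiset.map_cons,
        Multiset.sum_cons]
      have : lcost c (w :: l') ≤ ((M'.filter fun e => ∀ v ∈ e, v ∈ a :: w :: l').map c).sum := by
        refine hl4.trans (hmono _ _ (Multiset.monotone_filter_right _ ?_))
        intro e he v hv; exact List.mem_cons_of_mem _ (he v hv)
      linarith
  · set M1 := M'.filter fun e => ∀ v ∈ e, v ∉ w :: l' with hM1
    have hpar1 : ∀ v, Even (M1.countP (v ∈ ·) + (if v = a then 1 else 0)
        + (if v = a then 1 else 0)) := by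
      intro v
      have h2 : Even (M1.countP (v ∈ ·)) := by
        by_cases hv : v ∈ w :: l'
        · have : M1.countP (v ∈ ·) = 0 := by
            rw [Multiset.countP_eq_zero]
            intro e he hve
            exact (Multiset.mem_filter.1 he).2 v hve hv
          rw [this]; simp
        · have h3 : M1.countP (v ∈ ·) = M'.countP (v ∈ ·) := by
            rw [hM1, Multiset.countP_filter]
            apply Multiset.countP_congr rfl
            intro e he
            simp only [eq_iff_iff, and_iff_left_iff_imp]
            intro hve y hy hyl
            obtain ⟨q, rfl⟩ := Sym2.mem_iff_exists.1 hve
            rcases Sym2.mem_iff.1 hy with rfl | rfl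
            · exact hv hyl
            · exact hv (hl3 _ v hyl (by rw [Sym2.eq_swap]; exact he))
          have := hpar' v
          have e1 : v ≠ w := fun h => hv (h ▸ hwl)
          have e2 : v ≠ b := fun h => hv (h ▸ hbl)
          rw [h3]; simpa [e1, e2] using this
      rw [Nat.even_iff] at h2 ⊢; split_ifs <;> omega
    have hcard1 : Multiset.card M1 ≤ Multiset.card M' :=
      Multiset.card_le_card (Multiset.filter_le _ _)
    obtain ⟨l1, h11, h12, h13, h14⟩ := ih _ (by omega) M1 a a rfl
      (fun e he => hd' e (Multiset.mem_of_mem_filter he)) hpar1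
    have hal1 : a ∈ l1 := List.mem_of_mem_head? h11
    refine ⟨l1 ++ w :: l', ?_, ?_, ?_, ?_⟩
    · rw [List.head?_append, h11]; simp
    · rw [List.getLast?_append, hl2]; simp
    · intro u v hu huv
      rw [List.mem_append] at hu ⊢
      rcases Multiset.mem_cons.1 huv with h | h
      · rcases Sym2.eq_iff.1 h with ⟨rfl, rfl⟩ | ⟨rfl, rfl⟩
        · exact Or.inr hwl
        · exact Or.inl hal1
      · by_cases hul : u ∈ w :: l'
        · exact Or.inr (hl3 u v hul h)
        by_cases hvl : v ∈ w :: l'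
        · exact Or.inr hvl
        refine Or.inl (h13 u v (hu.resolve_right hul) ?_)
        rw [hM1, Multiset.mem_filter]
        refine ⟨h, ?_⟩
        intro y hy
        rcases Sym2.mem_iff.1 hy with rfl | rfl <;> assumption
    · rw [lcost_append c l1 a w l' h12, Multiset.filter_cons_of_pos _ (by
        intro v hv; rcases Sym2.mem_iff.1 hv with rfl | rfl <;> simp [hal1]), Multiset.map_cons,
        Multiset.sum_cons]
      have hsplit : (M1.filter fun e => ∀ v ∈ e, v ∈ l1) + (M'.filter fun e => ∀ v ∈ e, v ∈ w :: l')
          ≤ M'.filter fun e => ∀ v ∈ e, v ∈ l1 ++ w :: l' := by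
        rw [← Multiset.filter_add_not (fun e : Sym2 V => ∀ v ∈ e, v ∉ w :: l')
          (M'.filter fun e => ∀ v ∈ e, v ∈ l1 ++ w :: l')]
        apply add_le_add
        · rw [hM1, Multiset.filter_filter, Multiset.filter_filter]
          apply Multiset.monotone_filter_right
          rintro e ⟨h1, h2⟩
          exact ⟨h2, fun v hv => List.mem_append_left _ (h1 v hv)⟩
        · rw [Multiset.filter_filter]
          apply Multiset.monotone_filter_right
          intro e h1
          refine ⟨?_, fun v hv => List.mem_append_right _ (h1 v hv)⟩
          intro h2
          induction e using Sym2.ind with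
          | _ p q => exact h2 p (by simp) (h1 p (by simp))
      have := hmono _ _ hsplit
      rw [Multiset.map_add, Multiset.sum_add] at this
      linarith

/-- Passing to a sublist with the same end points does not increase the cost. -/
lemma lcost_sublist {V : Type*} (c : Sym2 V → ℝ)
    (htri : ∀ u v w : V, c s(u, w) ≤ c s(u, v) + c s(v, w)) (b : V) {l₁ l₂ : List V}
    (h : l₁.Sublist l₂) : ∀ a, lcost c (a :: (l₁ ++ [b])) ≤ lcost c (a :: (l₂ ++ [b])) := by
  have key : ∀ a x y (m : List V), lcost c (a :: y :: m) ≤ c s(a, x) + lcost c (x :: y :: m) := by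
    intro a x y m
    rw [lcost_cons_cons, lcost_cons_cons]
    linarith [htri a x y]
  induction h with
  | slnil => intro a; rfl
  | @cons l₁ l₂ x h ih =>
    intro a
    rw [List.cons_append, lcost_cons_cons]
    have h1 := ih x
    have h2 : lcost c (a :: (l₁ ++ [b])) ≤ c s(a, x) + lcost c (x :: (l₁ ++ [b])) := by
      cases l₁ with
      | nil => exact key a x b []
      | cons y m => exact key a x y (m ++ [b])
    linarith
  | @cons_cons l₁ l₂ x h ih =>
    intro a
    rw [List.cons_append, List.cons_append, lcost_cons_cons, lcost_cons_cons]
    linarith [ih x]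

/-- A connected multigraph with odd degree exactly at `s` and `t` yields a Hamiltonian
`s`–`t` path of no larger cost. -/
lemma ham_of_multigraph {V : Type*} [Fintype V] (s t : V) (hst : s ≠ t)
    (c : Sym2 V → ℝ) (hc0 : ∀ e : Sym2 V, ¬ e.IsDiag → 0 ≤ c e)
    (htri : ∀ u v w : V, u ≠ v → v ≠ w → u ≠ w → c s(u, w) ≤ c s(u, v) + c s(v, w))
    (M : Multiset (Sym2 V)) (hd : ∀ e ∈ M, ¬ e.IsDiag)
    (hpar : ∀ v, Even (M.countP (v ∈ ·) + (if v = s then 1 else 0) + (if v = t then 1 else 0)))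
    (hconn : ∀ U : Finset V, U.Nonempty → U ≠ univ → ∃ e ∈ M, e ∈ cutEdges U) :
    ∃ l : List V, l.Nodup ∧ (∀ v : V, v ∈ l) ∧ l.head? = some s ∧ l.getLast? = some t ∧
      lcost c l ≤ (M.map c).sum := by
  set c0 : Sym2 V → ℝ := fun e => if e.IsDiag then 0 else c e with hc0def
  have hc0n : ∀ e, 0 ≤ c0 e := by
    intro e; simp only [hc0def]; split_ifs with h
    · exact le_rfl
    · exact hc0 e h
  have htri0 : ∀ u v w : V, c0 s(u, w) ≤ c0 s(u, v) + c0 s(v, w) := by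
    intro u v w
    by_cases h1 : u = w
    · subst h1
      have := hc0n s(u, v)
      have := hc0n s(v, u)
      have h3 : c0 s(u, u) = 0 := by simp [hc0def]
      linarith
    by_cases h2 : u = v
    · subst h2; simp [hc0def]
    by_cases h3 : v = w
    · subst h3; simp [hc0def]
    simpa [hc0def, h1, h2, h3] using htri u v w h2 h3 h1
  obtain ⟨l, hl1, hl2, hl3, hl4⟩ := euler_trail c0 hc0n _ M s t rfl hd hpar
  have hall : ∀ v, v ∈ l := by
    by_contra hcon
    push Not at hcon
    obtain ⟨v, hv⟩ := hcon
    obtain ⟨e, heM, he⟩ := hconn l.toFinset ⟨s, by simpa using List.mem_of_mem_head? hl1⟩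
      (by intro h; exact hv (by simpa using (h ▸ mem_univ v : v ∈ l.toFinset)))
    simp only [cutEdges, mem_filter, mem_univ, true_and, List.mem_toFinset] at he
    obtain ⟨u, w, rfl, hu, hw⟩ := he
    exact hw (hl3 u w hu heM)
  obtain ⟨mid, rfl⟩ : ∃ mid, l = s :: (mid ++ [t]) := by
    cases l with
    | nil => simp at hl1
    | cons y l =>
      simp at hl1; subst hl1
      rcases List.eq_nil_or_concat l with rfl | ⟨m, z, rfl⟩
      · simp at hl2; exact absurd hl2 hst
      · refine ⟨m, ?_⟩
        simp [List.getLast?_cons] at hl2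
        simp [hl2]
  set m' := (mid.filter fun v => v ≠ s ∧ v ≠ t).dedup with hm'
  have hsub : m'.Sublist mid := (List.dedup_sublist _).trans List.filter_sublist
  have hmem' : ∀ v, v ∈ m' ↔ v ∈ mid ∧ v ≠ s ∧ v ≠ t := by
    intro v; simp [hm']
  have hnd : (s :: (m' ++ [t])).Nodup := by
    rw [List.nodup_cons, List.nodup_append]
    refine ⟨?_, List.nodup_dedup _, by simp, ?_⟩
    · simp [hmem', hst]
    · intro a ha b hb; simp at hb; subst hb; exact ((hmem' a).1 ha).2.2
  refine ⟨s :: (m' ++ [t]), hnd, ?_, by simp, ?_, ?_⟩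
  · intro v
    have := hall v
    simp only [List.mem_cons, List.mem_append, hmem', List.not_mem_nil, or_false] at this ⊢
    tauto
  · simp [List.getLast?_cons]
  · have h1 := lcost_sublist c0 htri0 t hsub s
    have h2 : ((M.filter fun e => ∀ v ∈ e, v ∈ s :: (mid ++ [t])).map c0).sum = (M.map c).sum := by
      rw [Multiset.filter_eq_self.2 (fun e _ v _ => hall v)]
      congr 1
      apply Multiset.map_congr rfl
      intro e he; simp [hc0def, hd e he]
    have h3 : ∀ l : List V, l.Nodup → lcost c l = lcost c0 l := by
      intro l hl
      induction l with
      | nil => simp [lcost]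
      | cons a l ih =>
        cases l with
        | nil => simp [lcost]
        | cons b l =>
          rw [lcost_cons_cons, lcost_cons_cons, ih (List.nodup_cons.1 hl).2]
          have : a ≠ b := by
            rintro rfl; simp at hl
          simp [hc0def, this]
    rw [h3 _ hnd]
    exact h1.trans (hl4.trans (le_of_eq (by convert h2)))

end STPath

namespace STPath

/-! ### Minimum-cost joins -/

lemma mem_cut {V : Type*} [Fintype V] {U : Finset V} {a b : V} :
    s(a, b) ∈ cutEdges U ↔ (a ∈ U ∧ b ∉ U) ∨ (a ∉ U ∧ b ∈ U) := by
  simp only [cutEdges, mem_filter, mem_univ, true_and]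
  constructor
  · rintro ⟨u, v, h, hu, hv⟩
    rcases Sym2.eq_iff.1 h with ⟨rfl, rfl⟩ | ⟨rfl, rfl⟩
    · exact Or.inl ⟨hu, hv⟩
    · exact Or.inr ⟨hv, hu⟩
  · rintro (⟨h1, h2⟩ | ⟨h1, h2⟩)
    · exact ⟨a, b, rfl, h1, h2⟩
    · exact ⟨b, a, Sym2.eq_swap, h2, h1⟩

lemma not_diag_of_cut {V : Type*} [Fintype V] {U : Finset V} {e : Sym2 V} (h : e ∈ cutEdges U) :
    ¬ e.IsDiag := by
  induction e using Sym2.ind with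
  | _ a b =>
    rw [mem_cut] at h
    rw [Sym2.mk_isDiag_iff]
    rintro rfl
    tauto

/-- The edges (non-diagonal pairs) with both end points in `A`. -/
def edgesIn {V : Type*} (A : Finset V) : Finset (Sym2 V) := A.sym2.filter fun e => ¬ e.IsDiag

lemma mem_edgesIn {V : Type*} {A : Finset V} {a b : V} :
    s(a, b) ∈ edgesIn A ↔ a ∈ A ∧ b ∈ A ∧ a ≠ b := by
  simp [edgesIn, and_assoc]

/-- `J` is a `T`-join on the vertex set `A`. -/
def IsJoin {V : Type*} (A T : Finset V) (J : Finset (Sym2 V)) : Prop :=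
  J ⊆ edgesIn A ∧ ∀ v, Odd (#{e ∈ J | v ∈ e}) ↔ v ∈ T

/-- The least cost of an `S`-join on `B`. -/
def minJoin {V : Type*} (c : Sym2 V → ℝ) (B S : Finset V) : ℝ :=
  sInf ((fun J => ∑ e ∈ J, c e) '' {J | IsJoin B S J})

lemma exists_join {V : Type*} {B S : Finset V} (hS : S ⊆ B) (he : Even #S) :
    ∃ J, IsJoin B S J := by
  rcases B.eq_empty_or_nonempty with rfl | ⟨a, ha⟩
  · refine ⟨∅, by simp, ?_⟩
    rw [subset_empty.1 hS]; simp
  set J : Finset (Sym2 V) := (S.erase a).image fun v => s(a, v) with hJ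
  have hinj : ∀ u v : V, s(a, u) = s(a, v) → u = v := by
    intro u v h; exact Sym2.congr_right.1 h
  refine ⟨J, ?_, ?_⟩
  · intro e h
    obtain ⟨v, hv, rfl⟩ := mem_image.1 h
    rw [mem_erase] at hv
    exact mem_edgesIn.2 ⟨ha, hS hv.2, hv.1.symm⟩
  · intro v
    by_cases hva : v = a
    · subst hva
      have h1 : J.filter (v ∈ ·) = J := by
        apply filter_true_of_mem
        intro e h
        obtain ⟨u, hu, rfl⟩ := mem_image.1 h
        simp
      have h2 : #J = #(S.erase v) := card_image_of_injective _ (fun u v h => hinj u v h)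
      rw [h1, h2]
      by_cases hv : v ∈ S
      · have := card_erase_add_one hv
        simp only [hv, iff_true]
        rw [← this] at he
        rw [Nat.even_iff] at he; rw [Nat.odd_iff]; omega
      · rw [erase_eq_of_notMem hv]
        simp only [hv, iff_false, Nat.not_odd_iff_even]; exact he
    · have h1 : J.filter (v ∈ ·) = if v ∈ S then {s(a, v)} else ∅ := by
        ext e
        simp only [hJ, mem_filter, mem_image, mem_erase]
        constructor
        · rintro ⟨⟨u, ⟨hu1, hu2⟩, rfl⟩, hv⟩
          rw [Sym2.mem_iff] at hv
          rcases hv with rfl | rfl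
          · exact absurd rfl hva
          · simp [hu2]
        · split_ifs with h
          · intro he'
            rw [mem_singleton] at he'; subst he'
            exact ⟨⟨v, ⟨hva, h⟩, rfl⟩, by simp⟩
          · simp
      rw [h1]; split_ifs with h <;> simp [h]

lemma minJoin_nonneg {V : Type*} {c : Sym2 V → ℝ} (hc : ∀ e, ¬ e.IsDiag → 0 < c e)
    (B S : Finset V) : 0 ≤ minJoin c B S := by
  apply Real.sInf_nonneg
  rintro _ ⟨J, hJ, rfl⟩
  exact sum_nonneg fun e he => (hc e (mem_filter.1 (hJ.1 he)).2).le

lemma minJoin_le {V : Type*} {c : Sym2 V → ℝ} (hc : ∀ e, ¬ e.IsDiag → 0 < c e)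
    {B S : Finset V} {J : Finset (Sym2 V)} (hJ : IsJoin B S J) : minJoin c B S ≤ ∑ e ∈ J, c e := by
  refine csInf_le ⟨0, ?_⟩ ⟨J, hJ, rfl⟩
  rintro _ ⟨J, hJ, rfl⟩
  exact sum_nonneg fun e he => (hc e (mem_filter.1 (hJ.1 he)).2).le

lemma exists_minJoin {V : Type*} (c : Sym2 V → ℝ)
    {B S : Finset V} (hS : S ⊆ B) (he : Even #S) :
    ∃ J, IsJoin B S J ∧ ∑ e ∈ J, c e = minJoin c B S := by
  have hfin : {J : Finset (Sym2 V) | IsJoin B S J}.Finite :=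
    (edgesIn B).powerset.finite_toSet.subset fun J hJ => by simpa using hJ.1
  have h := Set.Nonempty.csInf_mem
    ((show {J | IsJoin B S J}.Nonempty from exists_join hS he).image fun J => ∑ e ∈ J, c e)
    (hfin.image _)
  obtain ⟨J, hJ, h⟩ := h
  exact ⟨J, hJ, h⟩

/-- The push-forward of an edge vector on `A` along a vertex map. -/
def push {V : Type*} (A : Finset V) (r : V → V) (y : Sym2 V → ℝ) (e : Sym2 V) : ℝ :=
  ∑ f ∈ edgesIn A with Sym2.map r f = e, y f

lemma sum_push {V : Type*} [Fintype V] (A A' : Finset V) (r : V → V) (hr : ∀ a ∈ A, r a ∈ A')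
    (y g : Sym2 V → ℝ) (p : Sym2 V → Prop) [DecidablePred p] :
    ∑ e ∈ edgesIn A' with p e, g e * push A r y e =
      ∑ f ∈ edgesIn A with ¬ (Sym2.map r f).IsDiag ∧ p (Sym2.map r f), g (Sym2.map r f) * y f := by
  have h := sum_fiberwise_of_maps_to (s := (edgesIn A).filter
      fun f => ¬ (Sym2.map r f).IsDiag ∧ p (Sym2.map r f)) (t := (edgesIn A').filter p)
      (g := Sym2.map r) (f := fun f => g (Sym2.map r f) * y f) (by
        intro f hf
        induction f using Sym2.ind with
        | _ a b =>
          simp only [mem_filter, mem_edgesIn, Sym2.map_mk] at hf ⊢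
          exact ⟨⟨hr a hf.1.1, hr b hf.1.2.1, by simpa using hf.2.1⟩, hf.2.2⟩)
  rw [← h]
  apply sum_congr rfl
  intro e he
  rw [push, mul_sum, filter_filter]
  have he' := mem_filter.1 he
  apply sum_congr
  · ext f
    simp only [mem_filter]
    constructor
    · rintro ⟨h1, h2⟩
      exact ⟨h1, ⟨by rw [h2]; exact (mem_filter.1 he'.1).2, by rw [h2]; exact he'.2⟩, h2⟩
    · rintro ⟨h1, -, h2⟩; exact ⟨h1, h2⟩
  · intro f hf
    rw [(mem_filter.1 hf).2.2]

/-- `y` is a fractional `T`-join dominator on `A`: nonnegative and at least one on each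
`T`-odd cut. -/
def JoinFeas {V : Type*} [Fintype V] (A T : Finset V) (y : Sym2 V → ℝ) : Prop :=
  (∀ e, 0 ≤ y e) ∧ ∀ U ⊆ A, Odd #(U ∩ T) → 1 ≤ ∑ e ∈ edgesIn A with e ∈ cutEdges U, y e

lemma push_feas {V : Type*} [Fintype V] {A A' T T' : Finset V} {r : V → V}
    (hr : ∀ a ∈ A, r a ∈ A') {y : Sym2 V → ℝ} (hy : JoinFeas A T y)
    (hpar : ∀ W ⊆ A', Odd #(W ∩ T') → Odd #({a ∈ A | r a ∈ W} ∩ T)) :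
    JoinFeas A' T' (push A r y) := by
  refine ⟨fun e => sum_nonneg fun f _ => hy.1 f, fun W hW hodd => ?_⟩
  refine (hy.2 _ (filter_subset _ _) (hpar W hW hodd)).trans (le_of_eq ?_)
  have := sum_push A A' r hr y (fun _ => 1) (fun e => e ∈ cutEdges W)
  simp only [one_mul] at this
  rw [this]
  apply sum_congr _ (fun _ _ => rfl)
  ext f
  simp only [mem_filter, and_congr_right_iff]
  intro hf
  induction f using Sym2.ind with
  | _ a b =>
    rw [mem_edgesIn] at hf
    rw [Sym2.map_mk, mem_cut, mem_cut]
    simp only [mem_filter, hf.1, hf.2.1, true_and]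
    constructor
    · intro h
      refine ⟨?_, h⟩
      rw [Sym2.mk_isDiag_iff]; intro h'; rw [h'] at h; tauto
    · exact fun h => h.2

end STPath

namespace STPath

/-! ### Contracting tight odd cuts -/

/-- The integrality statement for joins on the vertex set `A`: every fractional dominator
costs at least as much as some join. -/
def JoinThm {V : Type*} [Fintype V] (A : Finset V) : Prop :=
  ∀ T ⊆ A, Even #T → ∀ c : Sym2 V → ℝ, (∀ e, ¬ e.IsDiag → 0 < c e) → ∀ y, JoinFeas A T y →
    ∃ J, IsJoin A T J ∧ ∑ e ∈ J, c e ≤ ∑ e ∈ edgesIn A, c e * y e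

lemma filter_mem_of_edgesIn {V : Type*} {B : Finset V} {J : Finset (Sym2 V)} (hJ : J ⊆ edgesIn B)
    {v : V} (hv : v ∉ B) : J.filter (v ∈ ·) = ∅ := by
  apply filter_false_of_mem
  intro e he hve
  obtain ⟨w, rfl⟩ := Sym2.mem_iff_exists.1 hve
  exact hv (mem_edgesIn.1 (hJ he)).1

/-- Contracting the complement of `B`, for a tight odd cut: the average over the cut edges `e` of
the cost of completing `e` inside `B` is at most the cost of `y` inside `B`. The completion costs
are hidden in the costs of the edges at the contracted vertex, with a large constant `K` that
forces the join to use just one of them. -/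
lemma contract_side {V : Type*} [Fintype V] {A B T : Finset V}
    (IH : ∀ A' : Finset V, #A' < #A → JoinThm A') (hBA : B ⊆ A)
    (hodd : Odd #(B ∩ T)) (hU : 2 ≤ #(A \ B)) {c : Sym2 V → ℝ}
    (hc : ∀ e, ¬ e.IsDiag → 0 < c e) {y : Sym2 V → ℝ} (hy : JoinFeas A T y) (hT : T ⊆ A)
    (hTe : Even #T)
    (htight : ∑ e ∈ edgesIn A with e ∈ cutEdges B, y e = 1) :
    ∑ e ∈ edgesIn A with e ∈ cutEdges B, minJoin c B (symmDiff (B ∩ T) (B.filter (· ∈ e))) * y e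
      ≤ ∑ e ∈ edgesIn B, c e * y e := by
  obtain ⟨u, hu⟩ : (A \ B).Nonempty := card_pos.1 (by omega)
  obtain ⟨huA, huB⟩ := mem_sdiff.1 hu
  set r : V → V := fun v => if v ∈ B then v else u with hr
  set α : Sym2 V → ℝ := fun e => minJoin c B (symmDiff (B ∩ T) (B.filter (· ∈ e))) with hα
  have hα0 : ∀ e, 0 ≤ α e := fun e => minJoin_nonneg hc _ _
  set K : ℝ := 1 + 2 * ∑ e, α e with hK
  have hαK : ∀ e, 2 * α e + 1 ≤ K := by
    intro e
    have := single_le_sum (f := α) (fun e _ => hα0 e) (mem_univ e)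
    linarith
  set c1 : Sym2 V → ℝ := fun e => if u ∈ e then K - α e else c e with hc1
  have hc1pos : ∀ e, ¬ e.IsDiag → 0 < c1 e := by
    intro e he
    simp only [hc1]; split_ifs
    · have := hαK e; have := hα0 e; linarith
    · exact hc e he
  have hcardA : #A = #B + #(A \ B) := by
    rw [card_sdiff_of_subset hBA]; have := card_le_card hBA; omega
  have hTsplit : #T = #(B ∩ T) + #((A \ B) ∩ T) := by
    rw [← card_union_of_disjoint]
    · congr 1; ext v
      simp only [mem_union, mem_inter, mem_sdiff]
      have := @hT v
      tauto
    · rw [disjoint_left]; intro v; simp only [mem_inter, mem_sdiff]; tauto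
  have huBT : u ∉ B ∩ T := fun h => huB (mem_inter.1 h).1
  obtain ⟨J, hJ, hJc⟩ := IH (insert u B) (by rw [card_insert_of_notMem huB]; omega)
    (insert u (B ∩ T)) (insert_subset_insert _ inter_subset_left)
    (by rw [card_insert_of_notMem huBT]; exact hodd.add_one)
    c1 hc1pos (push A r y) (push_feas (by
      intro a ha; simp only [hr]; split_ifs with h <;> simp [h]) hy (by
      intro W hW hWodd
      have e1 : (A.filter fun a => r a ∈ W) ∩ T =
          ((W ∩ (B ∩ T)) ∪ (if u ∈ W then (A \ B) ∩ T else ∅)) := by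
        ext v
        have := @hT v
        have := @hBA v
        simp only [mem_inter, mem_filter, mem_union, hr]
        by_cases hvB : v ∈ B
        · by_cases huW : u ∈ W <;> simp [hvB, huW] <;> tauto
        · by_cases huW : u ∈ W <;> simp [hvB, huW]
      have e2 : W ∩ insert u (B ∩ T) = (W ∩ (B ∩ T)) ∪ (if u ∈ W then {u} else ∅) := by
        ext v
        simp only [mem_inter, mem_insert, mem_union]
        by_cases huW : u ∈ W
        · by_cases hvu : v = u
          · subst hvu; simp [huW]
          · simp [huW, hvu]
        · by_cases hvu : v = u
          · subst hvu; simp [huW]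
          · simp [huW, hvu]
      rw [e2, card_union_of_disjoint (by
        split_ifs
        · rw [disjoint_singleton_right]; simp [huB]
        · simp)] at hWodd
      rw [e1, card_union_of_disjoint (by
        split_ifs
        · rw [disjoint_left]; intro v; simp only [mem_inter, mem_sdiff]; tauto
        · simp)]
      split_ifs at hWodd ⊢ with h
      · rw [card_singleton] at hWodd
        rw [Nat.odd_iff] at *; rw [Nat.even_iff] at hTe; omega
      · exact hWodd))
  -- the cost of the pushed-forward vector
  have hcost : ∑ e ∈ edgesIn (insert u B), c1 e * push A r y e =
      ∑ e ∈ edgesIn B, c e * y e + K - ∑ e ∈ edgesIn A with e ∈ cutEdges B, α e * y e := by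
    have h1 := sum_push A (insert u B) r (by
      intro a ha; simp only [hr]; split_ifs with h <;> simp [h]) y c1 (fun _ => True)
    simp only [filter_true, and_true] at h1
    rw [h1]
    have h2 : (edgesIn A).filter (fun f => ¬ (Sym2.map r f).IsDiag) =
        edgesIn B ∪ (edgesIn A).filter (· ∈ cutEdges B) := by
      ext f
      induction f using Sym2.ind with
      | _ a b =>
        simp only [mem_filter, mem_union, mem_edgesIn, mem_cut, Sym2.map_mk, Sym2.mk_isDiag_iff, hr]
        have := @hBA a
        have := @hBA b
        by_cases ha : a ∈ B <;> by_cases hb : b ∈ B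
        · simp [ha, hb]; tauto
        · have : a ≠ u := fun h => huB (h ▸ ha)
          simp [ha, hb, this]
        · have : u ≠ b := fun h => huB (h ▸ hb)
          simp [ha, hb, this]
        · simp [ha, hb]
    rw [h2, sum_union (by
      rw [disjoint_left]; intro f
      induction f using Sym2.ind with
      | _ a b =>
        simp only [mem_filter, mem_edgesIn, mem_cut]; tauto)]
    have h3 : ∑ f ∈ edgesIn B, c1 (Sym2.map r f) * y f = ∑ e ∈ edgesIn B, c e * y e := by
      apply sum_congr rfl
      intro f hf
      induction f using Sym2.ind with
      | _ a b =>
        obtain ⟨ha, hb, hab⟩ := mem_edgesIn.1 hf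
        have h4 : u ≠ a := fun h => huB (h ▸ ha)
        have h5 : u ≠ b := fun h => huB (h ▸ hb)
        simp [hr, ha, hb, hc1, h4, h5]
    have h4 : ∑ f ∈ edgesIn A with f ∈ cutEdges B, c1 (Sym2.map r f) * y f =
        ∑ f ∈ edgesIn A with f ∈ cutEdges B, (K * y f - α f * y f) := by
      apply sum_congr rfl
      intro f hf
      have key : ∀ a b : V, a ∈ B → b ∉ B → c1 (Sym2.map r s(a, b)) = K - α s(a, b) := by
        intro a b ha hb
        have h7 : Sym2.map r s(a, b) = s(a, u) := by simp [hr, ha, hb]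
        rw [h7]
        simp only [hc1, Sym2.mem_iff, or_true, if_true, hα]
        congr 3
        apply filter_congr
        intro v hv
        have : v ≠ b := fun h => hb (h ▸ hv)
        have : v ≠ u := fun h => huB (h ▸ hv)
        simp [*]
      induction f using Sym2.ind with
      | _ a b =>
        rw [mem_filter, mem_cut] at hf
        rcases hf.2 with ⟨h1, h2⟩ | ⟨h1, h2⟩
        · rw [key a b h1 h2]; ring
        · rw [Sym2.eq_swap, key b a h2 h1]; ring
    rw [h3, h4, sum_sub_distrib, ← mul_sum, htight]; ring
  -- the join pays at least `K`
  have hKJ : K ≤ ∑ e ∈ J, c1 e := by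
    rw [← sum_filter_add_sum_filter_not J (u ∈ ·)]
    have hoddu : Odd #(J.filter (u ∈ ·)) := (hJ.2 u).2 (mem_insert_self _ _)
    have hJ'B : J.filter (fun e => ¬ u ∈ e) ⊆ edgesIn B := by
      intro e he
      rw [mem_filter] at he
      have := hJ.1 he.1
      have h2 := he.2
      induction e using Sym2.ind with
      | _ a b =>
        rw [mem_edgesIn] at this ⊢
        simp only [Sym2.mem_iff, not_or] at h2
        simp only [mem_insert] at this
        exact ⟨this.1.resolve_left fun h => h2.1 h.symm,
          this.2.1.resolve_left fun h => h2.2 h.symm, this.2.2⟩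
    have hrest : ∑ e ∈ J.filter (fun e => ¬ u ∈ e), c1 e =
        ∑ e ∈ J.filter (fun e => ¬ u ∈ e), c e := by
      apply sum_congr rfl
      intro e he; simp [hc1, (mem_filter.1 he).2]
    rw [hrest]
    have hrest0 : 0 ≤ ∑ e ∈ J.filter (fun e => ¬ u ∈ e), c e :=
      sum_nonneg fun e he => (hc e (mem_filter.1 (hJ'B he)).2).le
    by_cases h1 : #(J.filter (u ∈ ·)) = 1
    · obtain ⟨e, he⟩ := card_eq_one.1 h1
      rw [he, sum_singleton]
      have heu : u ∈ e := (mem_filter.1 (he ▸ mem_singleton_self e : e ∈ J.filter (u ∈ ·))).2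
      have hjoin : IsJoin B (symmDiff (B ∩ T) (B.filter (· ∈ e))) (J.filter fun e => ¬ u ∈ e) := by
        refine ⟨hJ'B, fun v => ?_⟩
        by_cases hv : v ∈ B
        · have hvu : v ≠ u := fun h => huB (h ▸ hv)
          have h5 := hJ.2 v
          rw [← filter_union_filter_not_eq (u ∈ ·) J, filter_union, card_union_of_disjoint (by
            rw [disjoint_left]; intro f; simp only [mem_filter]; tauto), he] at h5
          simp only [mem_insert, hvu, false_or, mem_inter, hv, true_and] at h5
          rw [mem_symmDiff]
          simp only [mem_inter, hv, true_and, mem_filter]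
          by_cases hve : v ∈ e
          · simp only [filter_singleton, hve, if_true, card_singleton] at h5
            simp only [hve, not_true, and_false, true_and, false_or]
            rw [← h5]
            rw [Nat.not_odd_iff_even, add_comm, Nat.even_add_one, Nat.not_even_iff_odd]
          · simp only [filter_singleton, hve, if_false, card_empty, zero_add] at h5
            simp only [hve, not_false_eq_true, and_true, false_and, or_false]
            exact h5
        · rw [filter_mem_of_edgesIn hJ'B hv]
          simp [mem_symmDiff, hv]
      have := minJoin_le hc hjoin
      simp only [hc1, heu, if_true]
      linarith [show α e ≤ ∑ e ∈ J.filter (fun e => ¬ u ∈ e), c e from this]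
    · have h2 : 2 ≤ #(J.filter (u ∈ ·)) := by
        rw [Nat.odd_iff] at hoddu; omega
      have h3 : #(J.filter (u ∈ ·)) • (K / 2) ≤ ∑ e ∈ J.filter (u ∈ ·), c1 e := by
        apply card_nsmul_le_sum
        intro e he
        simp only [hc1, (mem_filter.1 he).2, if_true]
        linarith [hαK e]
      rw [nsmul_eq_mul] at h3
      have h4 : (2 : ℝ) ≤ #(J.filter (u ∈ ·)) := by exact_mod_cast h2
      have h5 : 0 ≤ K := by have := hαK s(u,u); have := hα0 s(u,u); linarith
      nlinarith
  linarith

end STPath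

namespace STPath

lemma odd_card_symmDiff {α : Type*} (S T : Finset α) :
    Odd #(symmDiff S T) ↔ ¬ (Odd #S ↔ Odd #T) := by
  have h1 : #(symmDiff S T) = #(S \ T) + #(T \ S) := by
    rw [symmDiff_def, sup_eq_union, card_union_of_disjoint disjoint_sdiff_sdiff]
  have h2 := card_sdiff_add_card_inter S T
  have h3 := card_sdiff_add_card_inter T S
  rw [inter_comm] at h3
  rw [h1, ← h2, ← h3]
  simp only [Nat.odd_iff]
  omega

lemma cutIn_compl {V : Type*} [Fintype V] {A U : Finset V} :
    (edgesIn A).filter (· ∈ cutEdges (A \ U)) = (edgesIn A).filter (· ∈ cutEdges U) := by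
  ext e
  induction e using Sym2.ind with
  | _ a b => simp only [mem_filter, mem_edgesIn, mem_cut, mem_sdiff]; tauto

lemma sum_edgesIn_split {V : Type*} [Fintype V] {A U : Finset V} (hU : U ⊆ A) (g : Sym2 V → ℝ) :
    ∑ e ∈ edgesIn A, g e = ∑ e ∈ edgesIn U, g e + ∑ e ∈ edgesIn (A \ U), g e +
      ∑ e ∈ edgesIn A with e ∈ cutEdges U, g e := by
  rw [← sum_union, ← sum_union]
  · apply sum_congr _ fun _ _ => rfl
    ext e
    induction e using Sym2.ind with
    | _ a b =>
      simp only [mem_union, mem_filter, mem_edgesIn, mem_cut, mem_sdiff]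
      have := @hU a; have := @hU b; tauto
  · rw [disjoint_left]; intro e
    induction e using Sym2.ind with
    | _ a b =>
      simp only [mem_union, mem_filter, mem_edgesIn, mem_cut, mem_sdiff]
      tauto
  · rw [disjoint_left]; intro e
    induction e using Sym2.ind with
    | _ a b =>
      simp only [mem_edgesIn, mem_sdiff]
      tauto

/-- A tight odd cut with at least two vertices on both sides reduces the problem to the two
contractions. -/
lemma join_of_tight {V : Type*} [Fintype V] {A U T : Finset V}
    (IH : ∀ A' : Finset V, #A' < #A → JoinThm A') (hUA : U ⊆ A)
    (hodd : Odd #(U ∩ T)) (hU2 : 2 ≤ #U) (hU : 2 ≤ #(A \ U)) {c : Sym2 V → ℝ}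
    (hc : ∀ e, ¬ e.IsDiag → 0 < c e) {y : Sym2 V → ℝ} (hy : JoinFeas A T y) (hT : T ⊆ A)
    (hTe : Even #T)
    (htight : ∑ e ∈ edgesIn A with e ∈ cutEdges U, y e = 1) :
    ∃ J, IsJoin A T J ∧ ∑ e ∈ J, c e ≤ ∑ e ∈ edgesIn A, c e * y e := by
  have hsd : A \ (A \ U) = U := by rw [Finset.sdiff_sdiff_eq_self hUA]
  have hodd' : Odd #((A \ U) ∩ T) := by
    have : #T = #(U ∩ T) + #((A \ U) ∩ T) := by
      rw [← card_union_of_disjoint]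
      · congr 1; ext v
        simp only [mem_union, mem_inter, mem_sdiff]
        have := @hT v
        tauto
      · rw [disjoint_left]; intro v; simp only [mem_inter, mem_sdiff]; tauto
    rw [Nat.odd_iff] at *; rw [Nat.even_iff] at hTe; omega
  have h1 := contract_side IH hUA hodd hU hc hy hT hTe htight
  have h2 := contract_side IH (sdiff_subset (s := A) (t := U)) hodd' (by rwa [hsd]) hc hy hT hTe
    (by rw [cutIn_compl]; exact htight)
  rw [cutIn_compl] at h2
  set α : Sym2 V → ℝ := fun e => minJoin c U (symmDiff (U ∩ T) (U.filter (· ∈ e))) with hα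
  set β : Sym2 V → ℝ :=
    fun e => minJoin c (A \ U) (symmDiff ((A \ U) ∩ T) ((A \ U).filter (· ∈ e))) with hβ
  set C := ∑ e ∈ edgesIn A, c e * y e with hC
  obtain ⟨e, he, hle⟩ : ∃ e ∈ (edgesIn A).filter (· ∈ cutEdges U), c e + α e + β e ≤ C := by
    by_contra hcon
    push Not at hcon
    obtain ⟨e, he, hye⟩ : ∃ e ∈ (edgesIn A).filter (· ∈ cutEdges U), y e ≠ 0 := by
      apply exists_ne_zero_of_sum_ne_zero; rw [htight]; norm_num
    have h3 : ∑ e ∈ (edgesIn A).filter (· ∈ cutEdges U), C * y e <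
        ∑ e ∈ (edgesIn A).filter (· ∈ cutEdges U), (c e * y e + α e * y e + β e * y e) := by
      apply sum_lt_sum
      · intro e he; have := hcon e he; have := hy.1 e; nlinarith
      · refine ⟨e, he, ?_⟩
        have := hcon e he; have := lt_of_le_of_ne (hy.1 e) hye.symm; nlinarith
    rw [← mul_sum, htight, sum_add_distrib, sum_add_distrib] at h3
    have h4 := sum_edgesIn_split hUA fun e => c e * y e
    simp only [hα, hβ] at h3
    linarith
  obtain ⟨heA, heU⟩ := mem_filter.1 he
  -- exactly one end point of `e` lies on each side
  have hone : ∀ B : Finset V, e ∈ cutEdges B → #(B.filter (· ∈ e)) = 1 := by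
    intro B hB
    have key : ∀ a b : V, a ∈ B → b ∉ B → #(B.filter (· ∈ s(a, b))) = 1 := by
      intro a b ha hb
      rw [card_eq_one]
      refine ⟨a, ?_⟩
      ext v
      simp only [mem_filter, Sym2.mem_iff, mem_singleton]
      constructor
      · rintro ⟨h1, rfl | rfl⟩
        · rfl
        · exact absurd h1 hb
      · rintro rfl; exact ⟨ha, Or.inl rfl⟩
    induction e using Sym2.ind with
    | _ a b =>
      rcases mem_cut.1 hB with ⟨h1, h2⟩ | ⟨h1, h2⟩
      · exact key a b h1 h2
      · rw [Sym2.eq_swap]; exact key b a h2 h1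
  have heU' : e ∈ cutEdges (A \ U) := by
    have : e ∈ (edgesIn A).filter (· ∈ cutEdges (A \ U)) := by rw [cutIn_compl]; exact he
    exact (mem_filter.1 this).2
  have heven : ∀ B : Finset V, Odd #(B ∩ T) → e ∈ cutEdges B →
      Even #(symmDiff (B ∩ T) (B.filter (· ∈ e))) := by
    intro B h1 h2
    rw [← Nat.not_odd_iff_even, odd_card_symmDiff, hone B h2]
    simp [h1]
  have hsub : ∀ B : Finset V, symmDiff (B ∩ T) (B.filter (· ∈ e)) ⊆ B := by
    intro B v hv
    rw [mem_symmDiff] at hv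
    simp only [mem_inter, mem_filter] at hv
    tauto
  obtain ⟨J1, hJ1, hJ1c⟩ := exists_minJoin c (hsub U) (heven U hodd heU)
  obtain ⟨J2, hJ2, hJ2c⟩ := exists_minJoin c (hsub (A \ U)) (heven (A \ U) hodd' heU')
  have hd1 : Disjoint J1 J2 := by
    rw [disjoint_left]; intro f hf hf'
    have h1 := hJ1.1 hf
    have h2 := hJ2.1 hf'
    induction f using Sym2.ind with
    | _ a b =>
      rw [mem_edgesIn] at h1 h2
      exact (mem_sdiff.1 h2.1).2 h1.1
  have hd2 : e ∉ J1 ∪ J2 := by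
    intro h
    induction e using Sym2.ind with
    | _ a b =>
      rw [mem_cut] at heU
      rcases mem_union.1 h with h | h
      · have := mem_edgesIn.1 (hJ1.1 h); tauto
      · have := mem_edgesIn.1 (hJ2.1 h); simp only [mem_sdiff] at this; tauto
  refine ⟨insert e (J1 ∪ J2), ⟨?_, ?_⟩, ?_⟩
  · intro f hf
    rcases mem_insert.1 hf with rfl | hf
    · exact heA
    · rcases mem_union.1 hf with hf | hf
      · have := hJ1.1 hf
        induction f using Sym2.ind with
        | _ a b => rw [mem_edgesIn] at this ⊢; exact ⟨hUA this.1, hUA this.2.1, this.2.2⟩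
      · have := hJ2.1 hf
        induction f using Sym2.ind with
        | _ a b =>
          rw [mem_edgesIn] at this ⊢
          exact ⟨sdiff_subset this.1, sdiff_subset this.2.1, this.2.2⟩
  · intro v
    have hcard : #((insert e (J1 ∪ J2)).filter (v ∈ ·)) =
        (if v ∈ e then 1 else 0) + #(J1.filter (v ∈ ·)) + #(J2.filter (v ∈ ·)) := by
      rw [filter_insert, filter_union]
      have h5 : #(J1.filter (v ∈ ·) ∪ J2.filter (v ∈ ·)) =
          #(J1.filter (v ∈ ·)) + #(J2.filter (v ∈ ·)) :=
        card_union_of_disjoint (disjoint_filter_filter hd1)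
      split_ifs with h
      · rw [card_insert_of_notMem, h5]
        · ring
        · rw [← filter_union]; exact fun h => hd2 (mem_filter.1 h).1
      · rw [h5]; ring
    rw [hcard]
    have k1 := hJ1.2 v
    have k2 := hJ2.2 v
    rw [mem_symmDiff] at k1 k2
    simp only [mem_inter, mem_filter, mem_sdiff] at k1 k2
    by_cases hvA : v ∈ A
    swap
    · have q1 : ¬ v ∈ e := by
        intro h
        obtain ⟨w, rfl⟩ := Sym2.mem_iff_exists.1 h
        exact hvA (mem_edgesIn.1 heA).1
      have q2 : v ∉ U := fun h => hvA (hUA h)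
      have q3 : v ∉ T := fun h => hvA (hT h)
      rw [filter_mem_of_edgesIn hJ1.1 q2,
        filter_mem_of_edgesIn hJ2.1 (fun h => hvA (mem_sdiff.1 h).1)]
      simp [q1, q3]
    · by_cases hvU : v ∈ U
      · rw [filter_mem_of_edgesIn hJ2.1 (fun h => (mem_sdiff.1 h).2 hvU)]
        simp only [hvU, true_and] at k1
        by_cases hve : v ∈ e
        · simp only [hve, not_true, and_false, true_and, false_or, if_true, card_empty] at k1 ⊢
          rw [add_zero, add_comm, Nat.odd_add_one, k1, not_not]
        · simp only [hve, not_false_eq_true, and_true, false_and, or_false, if_false,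
            card_empty] at k1 ⊢
          rw [zero_add, add_zero, k1]
      · rw [filter_mem_of_edgesIn hJ1.1 hvU]
        simp only [hvU, hvA, not_false_eq_true, true_and] at k2
        by_cases hve : v ∈ e
        · simp only [hve, not_true, and_false, true_and, false_or, if_true, card_empty] at k2 ⊢
          rw [add_zero, add_comm, Nat.odd_add_one, k2, not_not]
        · simp only [hve, not_false_eq_true, and_true, false_and, or_false, if_false,
            card_empty] at k2 ⊢
          rw [zero_add, zero_add, k2]
  · rw [sum_insert hd2, sum_union hd1, hJ1c, hJ2c]
    simp only [hα, hβ] at hle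
    linarith

/-- A vertex whose only support neighbour is `a` can be removed. -/
lemma join_of_leaf {V : Type*} [Fintype V] {A T : Finset V}
    (IH : ∀ A' : Finset V, #A' < #A → JoinThm A') {v a : V} (hv : v ∈ A) (ha : a ∈ A) (hav : a ≠ v)
    {c : Sym2 V → ℝ}
    (hc : ∀ e, ¬ e.IsDiag → 0 < c e) {y : Sym2 V → ℝ} (hy : JoinFeas A T y) (hT : T ⊆ A)
    (hTe : Even #T) (hleaf : ∀ e ∈ edgesIn A, v ∈ e → e ≠ s(v, a) → y e = 0) :
    ∃ J, IsJoin A T J ∧ ∑ e ∈ J, c e ≤ ∑ e ∈ edgesIn A, c e * y e := by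
  set r : V → V := fun w => if w = v then a else w with hr
  set T' : Finset V := symmDiff (T.erase v) (if v ∈ T then {a} else ∅) with hT'
  have hvT' : v ∉ T' := by
    rw [hT', mem_symmDiff]; split_ifs <;> simp [hav.symm]
  have hT'A : T' ⊆ A.erase v := by
    intro w hw
    rw [mem_erase]
    refine ⟨fun h => hvT' (h ▸ hw), ?_⟩
    rw [hT', mem_symmDiff] at hw
    rcases hw with h | h
    · exact hT (mem_erase.1 h.1).2
    · have h := h.1
      split_ifs at h
      · rw [mem_singleton] at h; rw [h]; exact ha
      · simp at h
  have hmaps : ∀ b ∈ A, r b ∈ A.erase v := by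
    intro b hb; simp only [hr]; split_ifs with h
    · exact mem_erase.2 ⟨hav, ha⟩
    · exact mem_erase.2 ⟨h, hb⟩
  obtain ⟨J, hJ, hJc⟩ := IH (A.erase v) (card_erase_lt_of_mem hv) T' hT'A (by
      rw [← Nat.not_odd_iff_even, hT', odd_card_symmDiff]
      by_cases h : v ∈ T
      · have := card_erase_add_one h
        simp only [h, if_true, card_singleton, odd_one, iff_true, not_not]
        rw [← this, Nat.even_add_one, Nat.not_even_iff_odd] at hTe; exact hTe
      · simp only [h, if_false, card_empty, Nat.not_odd_zero, iff_false, not_not,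
          erase_eq_of_notMem h]
        rwa [Nat.not_odd_iff_even])
    c hc (push A r y) (push_feas hmaps hy (by
      intro W hW hWodd
      have hvW : v ∉ W := fun h => (mem_erase.1 (hW h)).1 rfl
      have e1 : (A.filter fun x => r x ∈ W) ∩ T =
          symmDiff (W ∩ T.erase v) (if v ∈ T ∧ a ∈ W then {v} else ∅) := by
        ext w
        simp only [mem_inter, mem_filter, mem_symmDiff, mem_erase, hr]
        by_cases hwv : w = v
        · subst hwv; by_cases h1 : w ∈ T <;> by_cases h2 : a ∈ W <;> simp [h1, h2, hv]
        · have := @hT w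
          by_cases h1 : v ∈ T <;> by_cases h2 : a ∈ W <;> simp [h1, h2, hwv] <;> tauto
      have e2 : W ∩ T' = symmDiff (W ∩ T.erase v) (if v ∈ T ∧ a ∈ W then {a} else ∅) := by
        ext w
        simp only [hT', mem_inter, mem_symmDiff]
        by_cases hwa : w = a
        · subst hwa; by_cases h1 : v ∈ T <;> by_cases h2 : w ∈ W <;> simp [h1, h2]
        · by_cases h1 : v ∈ T <;> by_cases h2 : a ∈ W <;> simp [h1, h2, hwa]
      rw [e2, odd_card_symmDiff] at hWodd
      rw [e1, odd_card_symmDiff]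
      split_ifs at hWodd ⊢ <;> simpa using hWodd))
  have hvaA : s(v, a) ∈ edgesIn A := mem_edgesIn.2 ⟨hv, ha, hav.symm⟩
  have hsubE : edgesIn (A.erase v) ⊆ (edgesIn A).erase s(v, a) := by
    intro e he
    induction e using Sym2.ind with
    | _ p q =>
      rw [mem_edgesIn] at he
      simp only [mem_erase] at he
      rw [mem_erase, mem_edgesIn]
      refine ⟨?_, he.1.2, he.2.1.2, he.2.2⟩
      intro h
      rcases Sym2.eq_iff.1 h with ⟨rfl, rfl⟩ | ⟨rfl, rfl⟩
      · exact he.1.1 rfl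
      · exact he.2.1.1 rfl
  have hJva : s(v, a) ∉ J := by
    intro h
    have := hsubE (hJ.1 h)
    simp at this
  have hcost : ∑ e ∈ edgesIn (A.erase v), c e * push A r y e =
      ∑ e ∈ (edgesIn A).erase s(v, a), c e * y e := by
    have h1 := sum_push A (A.erase v) r hmaps y c (fun _ => True)
    simp only [filter_true, and_true] at h1
    rw [h1]
    rw [← sum_filter_add_sum_filter_not ((edgesIn A).erase s(v, a)) (v ∈ ·),
      sum_eq_zero (s := ((edgesIn A).erase s(v, a)).filter (v ∈ ·)), zero_add]
    · rw [← sum_filter_add_sum_filter_not ((edgesIn A).filter _) (v ∈ ·),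
        sum_eq_zero (s := ((edgesIn A).filter _).filter (v ∈ ·)), zero_add]
      · apply sum_congr
        · ext e
          induction e using Sym2.ind with
          | _ p q =>
            simp only [mem_filter, mem_erase, mem_edgesIn, Sym2.map_mk, Sym2.mk_isDiag_iff,
              Sym2.mem_iff, not_or, hr, Sym2.eq_iff, ne_eq]
            constructor
            · rintro ⟨⟨h1, h2⟩, h3, h4⟩
              exact ⟨⟨by tauto, h1⟩, h3, h4⟩
            · rintro ⟨⟨h1, h2⟩, h3, h4⟩
              refine ⟨⟨h2, ?_⟩, h3, h4⟩
              rw [if_neg (fun h => h3 h.symm), if_neg (fun h => h4 h.symm)]; exact h2.2.2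
        · intro e he
          have := (mem_filter.1 he).2
          have h2 : Sym2.map r e = e := by
            induction e using Sym2.ind with
            | _ p q =>
              simp only [Sym2.mem_iff, not_or] at this
              simp only [Sym2.map_mk, hr]
              rw [if_neg (fun h => this.1 h.symm), if_neg (fun h => this.2 h.symm)]
          rw [h2]
      · intro e he
        simp only [mem_filter] at he
        rw [hleaf e he.1.1 he.2, mul_zero]
        rintro rfl
        apply he.1.2
        simp [hr, hav]
    · intro e he
      simp only [mem_filter, mem_erase] at he
      rw [hleaf e he.1.2 he.2 he.1.1, mul_zero]
  have hsum := sum_erase_add (edgesIn A) (fun e => c e * y e) hvaA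
  have hJA : J ⊆ edgesIn A := fun e he => erase_subset _ _ (hsubE (hJ.1 he))
  have hcva := hc s(v, a) (by simp [hav.symm])
  by_cases hvT : v ∈ T
  · have hy1 : 1 ≤ y s(v, a) := by
      have := hy.2 {v} (by simpa using hv) (by simp [hvT])
      rwa [sum_eq_single s(v, a)] at this
      · intro e he hne
        rw [mem_filter] at he
        refine hleaf e he.1 ?_ hne
        induction e using Sym2.ind with
        | _ p q =>
          rw [mem_cut] at he
          simp only [mem_singleton] at he
          rw [Sym2.mem_iff]; tauto
      · intro h
        exact absurd (mem_filter.2 ⟨hvaA, mem_cut.2 (Or.inl (by simp [hav]))⟩) h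
    refine ⟨insert s(v, a) J, ⟨insert_subset hvaA hJA, ?_⟩, ?_⟩
    · intro w
      rw [filter_insert]
      have hw := hJ.2 w
      simp only [hT', hvT, if_true, mem_symmDiff, mem_erase, mem_singleton] at hw
      split_ifs with h
      · rw [card_insert_of_notMem (fun h => hJva (mem_filter.1 h).1), Nat.odd_add_one, hw]
        rcases Sym2.mem_iff.1 h with rfl | rfl
        · simp [hvT, hav.symm]
        · simp [hav]
      · rw [hw]
        simp only [Sym2.mem_iff, not_or] at h
        simp [h.1, h.2]
    · rw [sum_insert hJva]
      nlinarith
  · refine ⟨J, ⟨hJA, ?_⟩, ?_⟩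
    · intro w
      rw [hJ.2 w, hT', mem_symmDiff]
      simp [hvT]
    · have := mul_nonneg hcva.le (hy.1 s(v, a))
      linarith

end STPath

namespace STPath

/-! ### Extreme points and integrality for joins -/

/-- A fractional dominator of minimum cost that is an extreme point of the set of optima. -/
lemma exists_vertex {V : Type*} [Fintype V] {A T : Finset V} {c : Sym2 V → ℝ}
    (hc : ∀ e, ¬ e.IsDiag → 0 < c e) {y0 : Sym2 V → ℝ} (hy0 : JoinFeas A T y0) :
    ∃ y, JoinFeas A T y ∧ ∑ e ∈ edgesIn A, c e * y e ≤ ∑ e ∈ edgesIn A, c e * y0 e ∧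
      ∀ d : Sym2 V → ℝ, (∀ e, e ∉ edgesIn A → d e = 0) → JoinFeas A T (fun e => y e + d e) →
        JoinFeas A T (fun e => y e - d e) → d = 0 := by
  set φ : (Sym2 V → ℝ) → ℝ := fun y => ∑ e ∈ edgesIn A, c e * y e with hφ
  have hφc : Continuous φ := by
    simp only [hφ]; fun_prop
  have hpos : ∀ e ∈ edgesIn A, 0 < c e := fun e he => hc e (mem_filter.1 he).2
  set P : Set (Sym2 V → ℝ) := {y | JoinFeas A T y ∧ ∀ e, e ∉ edgesIn A → y e = 0} with hP
  have hPcl : IsClosed P := by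
    have h : P = (⋂ e, {y : Sym2 V → ℝ | 0 ≤ y e}) ∩
        (⋂ U : Finset V, ⋂ (_ : U ⊆ A), ⋂ (_ : Odd #(U ∩ T)),
          {y : Sym2 V → ℝ | 1 ≤ ∑ e ∈ edgesIn A with e ∈ cutEdges U, y e}) ∩
        (⋂ e, ⋂ (_ : e ∉ edgesIn A), {y : Sym2 V → ℝ | y e = 0}) := by
      ext y; simp [hP, JoinFeas]
    rw [h]
    refine ((isClosed_iInter fun e => ?_).inter (isClosed_iInter fun U => isClosed_iInter fun _ =>
      isClosed_iInter fun _ => ?_)).inter (isClosed_iInter fun e => isClosed_iInter fun _ => ?_)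
    · exact isClosed_le continuous_const (continuous_apply e)
    · exact isClosed_le continuous_const (by fun_prop)
    · exact isClosed_eq (continuous_apply e) continuous_const
  have hcomp : ∀ C : ℝ, IsCompact (P ∩ {y | φ y ≤ C}) := by
    intro C
    apply IsCompact.of_isClosed_subset (s := Set.pi Set.univ fun e => Set.Icc (0 : ℝ)
        (if e ∈ edgesIn A then C / c e else 0))
      (isCompact_univ_pi fun e => isCompact_Icc)
      (hPcl.inter (isClosed_le hφc continuous_const))
    rintro y ⟨⟨h1, h2⟩, h3⟩ e -
    refine ⟨h1.1 e, ?_⟩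
    split_ifs with he
    · rw [le_div_iff₀ (hpos e he)]
      have h4 : c e * y e ≤ φ y :=
        single_le_sum (f := fun e => c e * y e)
          (fun e he => mul_nonneg (hpos e he).le (h1.1 e)) he
      have h3 : φ y ≤ C := h3
      linarith
    · rw [h2 e he]
  set y1 : Sym2 V → ℝ := fun e => if e ∈ edgesIn A then y0 e else 0 with hy1
  have hy1P : y1 ∈ P := by
    refine ⟨⟨fun e => ?_, fun U hU hodd => ?_⟩, fun e he => by simp [hy1, he]⟩
    · simp only [hy1]; split_ifs
      · exact hy0.1 e
      · exact le_rfl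
    · refine (hy0.2 U hU hodd).trans (le_of_eq ?_)
      apply sum_congr rfl
      intro e he; simp [hy1, (mem_filter.1 he).1]
  have hφ1 : φ y1 = φ y0 := by
    apply sum_congr rfl
    intro e he; simp [hy1, he]
  obtain ⟨ym, ⟨hymP, hym1⟩, hym⟩ := (hcomp (φ y1)).exists_isMinOn ⟨y1, hy1P, show φ y1 ≤ φ y1 from le_rfl⟩
    hφc.continuousOn
  have hmin : ∀ z ∈ P, φ ym ≤ φ z := by
    intro z hz
    by_cases h : φ z ≤ φ y1
    · exact hym ⟨hz, h⟩
    · have : φ ym ≤ φ y1 := hym1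
      linarith
  obtain ⟨y, hy⟩ := (hcomp (φ ym)).extremePoints_nonempty ⟨ym, hymP, show φ ym ≤ φ ym from le_rfl⟩
  obtain ⟨⟨hyP, hyφ⟩, hext⟩ := mem_extremePoints.1 hy
  have hyφ : φ y ≤ φ ym := hyφ
  refine ⟨y, hyP.1, ?_, ?_⟩
  · have : φ ym ≤ φ y1 := hym1
    show φ y ≤ φ y0
    linarith
  · intro d hd hplus hminus
    have hp : (fun e => y e + d e) ∈ P := ⟨hplus, fun e he => by
      show y e + d e = 0
      rw [hyP.2 e he, hd e he, add_zero]⟩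
    have hm : (fun e => y e - d e) ∈ P := ⟨hminus, fun e he => by
      show y e - d e = 0
      rw [hyP.2 e he, hd e he, sub_zero]⟩
    have hsum : φ (fun e => y e + d e) + φ (fun e => y e - d e) = 2 * φ y := by
      simp only [hφ]; rw [← sum_add_distrib, mul_sum]
      apply sum_congr rfl; intros; ring
    have h1 := hmin _ hp
    have h2 := hmin _ hm
    have h3 := hext _ ⟨hp, show φ _ ≤ φ ym by linarith⟩ _ ⟨hm, show φ _ ≤ φ ym by linarith⟩
      ⟨1 / 2, 1 / 2, by norm_num, by norm_num, by norm_num, by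
        ext e; simp only [Pi.add_apply, Pi.smul_apply, smul_eq_mul]; ring⟩
    ext e
    have := congrFun h3.1 e
    simp only [Pi.zero_apply]
    have : y e + d e = y e := this
    linarith

lemma sum_stars {V : Type*} [Fintype V] {A U : Finset V} (hU : U ⊆ A) (y : Sym2 V → ℝ) :
    ∑ v ∈ U, ∑ e ∈ edgesIn A with v ∈ e, y e =
      2 * ∑ e ∈ edgesIn U, y e + ∑ e ∈ edgesIn A with e ∈ cutEdges U, y e := by
  have h1 : ∑ v ∈ U, ∑ e ∈ edgesIn A with v ∈ e, y e =
      ∑ e ∈ edgesIn A, (#(U.filter (· ∈ e)) : ℝ) * y e := by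
    simp_rw [sum_filter]
    rw [sum_comm]
    apply sum_congr rfl
    intro e _
    rw [← sum_filter, sum_const, nsmul_eq_mul]
  rw [h1, sum_edgesIn_split hU, mul_sum]
  have key : ∀ a b : V, a ≠ b → (#(U.filter (· ∈ s(a, b))) : ℝ) =
      (if a ∈ U then 1 else 0) + (if b ∈ U then 1 else 0) := by
    intro a b hab
    have : U.filter (· ∈ s(a, b)) = ({a, b} : Finset V).filter (· ∈ U) := by
      ext v; simp only [mem_filter, Sym2.mem_iff, mem_insert, mem_singleton]; tauto
    rw [this, card_filter, sum_pair hab]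
    push_cast; rfl
  have e1 : ∑ e ∈ edgesIn U, (#(U.filter (· ∈ e)) : ℝ) * y e = ∑ e ∈ edgesIn U, 2 * y e := by
    apply sum_congr rfl
    intro e he
    induction e using Sym2.ind with
    | _ a b =>
      obtain ⟨ha, hb, hab⟩ := mem_edgesIn.1 he
      rw [key a b hab]; simp only [ha, hb, if_true]; norm_num
  have e2 : ∑ e ∈ edgesIn (A \ U), (#(U.filter (· ∈ e)) : ℝ) * y e = 0 := by
    apply sum_eq_zero
    intro e he
    induction e using Sym2.ind with
    | _ a b =>
      obtain ⟨ha, hb, hab⟩ := mem_edgesIn.1 he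
      rw [key a b hab]; simp [(mem_sdiff.1 ha).2, (mem_sdiff.1 hb).2]
  have e3 : ∑ e ∈ edgesIn A with e ∈ cutEdges U, (#(U.filter (· ∈ e)) : ℝ) * y e =
      ∑ e ∈ edgesIn A with e ∈ cutEdges U, y e := by
    apply sum_congr rfl
    intro e he
    induction e using Sym2.ind with
    | _ a b =>
      obtain ⟨h1, h2⟩ := mem_filter.1 he
      rw [key a b (mem_edgesIn.1 h1).2.2]
      rcases mem_cut.1 h2 with h | h <;> simp [h.1, h.2]
  rw [e1, e2, e3]; ring

lemma cut_singleton {V : Type*} [Fintype V] {A : Finset V} {v : V} :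
    (edgesIn A).filter (· ∈ cutEdges {v}) = (edgesIn A).filter (v ∈ ·) := by
  ext e
  induction e using Sym2.ind with
  | _ a b =>
    simp only [mem_filter, mem_edgesIn, mem_cut, mem_singleton, Sym2.mem_iff]
    constructor
    · rintro ⟨h, h' | h'⟩
      · exact ⟨h, Or.inl h'.1.symm⟩
      · exact ⟨h, Or.inr h'.2.symm⟩
    · rintro ⟨h, rfl | rfl⟩
      · exact ⟨h, Or.inl ⟨rfl, fun h' => h.2.2 h'.symm⟩⟩
      · exact ⟨h, Or.inr ⟨h.2.2, rfl⟩⟩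

lemma matching_isJoin {V : Type*} {A : Finset V} {p q r w : V} (hA : A = {p, q, r, w})
    (h1 : p ≠ q) (h2 : p ≠ r) (h3 : p ≠ w) (h4 : q ≠ r) (h5 : q ≠ w) (h6 : r ≠ w) :
    IsJoin A A {s(p, q), s(r, w)} := by
  refine ⟨?_, ?_⟩
  · intro e he
    rw [mem_insert, mem_singleton] at he
    rcases he with rfl | rfl <;> rw [mem_edgesIn, hA] <;> simp [*]
  · intro v
    have hne : s(p, q) ≠ s(r, w) := by simp [h2, h3]
    rw [hA, filter_insert, filter_singleton]
    simp only [Sym2.mem_iff, mem_insert, mem_singleton]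
    by_cases e1 : v = p ∨ v = q
    · have e2 : ¬ (v = r ∨ v = w) := by
        rcases e1 with rfl | rfl <;> simp [*]
      simp only [e1, e2, if_true, if_false]; simp; tauto
    · by_cases e2 : v = r ∨ v = w
      · simp only [e1, e2, if_true, if_false]; simp
      · simp only [e1, e2, if_false]; simp; tauto

/-- The case of four vertices, all of them in `T` with tight stars: `y` is a convex combination of
the three perfect matchings. -/
lemma join_of_four {V : Type*} [Fintype V] {A : Finset V} {p q r w : V} (hA : A = {p, q, r, w})
    (h1 : p ≠ q) (h2 : p ≠ r) (h3 : p ≠ w) (h4 : q ≠ r) (h5 : q ≠ w) (h6 : r ≠ w)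
    (c : Sym2 V → ℝ) {y : Sym2 V → ℝ} (hy : ∀ e, 0 ≤ y e)
    (hstar : ∀ v ∈ A, ∑ e ∈ edgesIn A with v ∈ e, y e = 1) :
    ∃ J, IsJoin A A J ∧ ∑ e ∈ J, c e ≤ ∑ e ∈ edgesIn A, c e * y e := by
  have hE : edgesIn A = {s(p, q), s(p, r), s(p, w), s(q, r), s(q, w), s(r, w)} := by
    ext e
    induction e using Sym2.ind with
    | _ a b =>
      rw [mem_edgesIn, hA]
      simp only [mem_insert, mem_singleton, Sym2.eq_iff]
      constructor
      · rintro ⟨rfl | rfl | rfl | rfl, rfl | rfl | rfl | rfl, hab⟩ <;> simp_all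
      · rintro ((⟨rfl, rfl⟩ | ⟨rfl, rfl⟩) | (⟨rfl, rfl⟩ | ⟨rfl, rfl⟩) | (⟨rfl, rfl⟩ | ⟨rfl, rfl⟩) |
          (⟨rfl, rfl⟩ | ⟨rfl, rfl⟩) | (⟨rfl, rfl⟩ | ⟨rfl, rfl⟩) | (⟨rfl, rfl⟩ | ⟨rfl, rfl⟩)) <;>
          simp [*, Ne.symm]
  have hsum : ∀ g : Sym2 V → ℝ, ∑ e ∈ edgesIn A, g e =
      g s(p, q) + g s(p, r) + g s(p, w) + g s(q, r) + g s(q, w) + g s(r, w) := by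
    intro g
    have h1' := h1.symm; have h2' := h2.symm; have h3' := h3.symm
    have h4' := h4.symm; have h5' := h5.symm; have h6' := h6.symm
    rw [hE, sum_insert, sum_insert, sum_insert, sum_insert, sum_insert, sum_singleton]
    · ring
    all_goals simp only [mem_insert, mem_singleton, Sym2.eq_iff]; simp [*]
  have hpA : p ∈ A := by simp [hA]
  have hqA : q ∈ A := by simp [hA]
  have hrA : r ∈ A := by simp [hA]
  have hwA : w ∈ A := by simp [hA]
  have sp := hstar p hpA
  have sq := hstar q hqA
  have sr := hstar r hrA
  have sw := hstar w hwA
  rw [sum_filter, hsum] at sp sq sr sw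
  simp only [Sym2.mem_iff, h1, h2, h3, h4, h5, h6, h1.symm, h2.symm, h3.symm, h4.symm, h5.symm,
    h6.symm, or_true, or_false, if_true, if_false] at sp sq sr sw
  rw [hsum]
  have hne1 : s(p, q) ≠ s(r, w) := by simp [h2, h3]
  have hne2 : s(p, r) ≠ s(q, w) := by simp [h1, h3]
  have hne3 : s(p, w) ≠ s(q, r) := by simp [h1, h2]
  have e1 : y s(r, w) = y s(p, q) := by linarith
  have e2 : y s(q, w) = y s(p, r) := by linarith
  have e3 : y s(q, r) = y s(p, w) := by linarith
  have n1 := hy s(p, q)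
  have n2 := hy s(p, r)
  have n3 := hy s(p, w)
  have e4 : y s(p, q) = 1 - y s(p, r) - y s(p, w) := by linarith
  by_contra hcon
  push Not at hcon
  have k1 := hcon _ (matching_isJoin hA h1 h2 h3 h4 h5 h6)
  have k2 := hcon _ (matching_isJoin (p := p) (q := r) (r := q) (w := w)
    (by rw [hA]; ext v; simp; tauto) h2 h1 h3 h4.symm h6 h5)
  have k3 := hcon _ (matching_isJoin (p := p) (q := w) (r := q) (w := r)
    (by rw [hA]; ext v; simp; tauto) h3 h1 h2 h5.symm h6.symm h4)
  rw [sum_pair hne1] at k1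
  rw [sum_pair hne2] at k2
  rw [sum_pair hne3] at k3
  rw [e1, e2, e3] at k1 k2 k3
  set C := c s(p, q) * y s(p, q) + c s(p, r) * y s(p, r) + c s(p, w) * y s(p, w) +
    c s(q, r) * y s(p, w) + c s(q, w) * y s(p, r) + c s(r, w) * y s(p, q) with hC
  have m1 := mul_le_mul_of_nonneg_right k1.le n1
  have m2 := mul_le_mul_of_nonneg_right k2.le n2
  have m3 := mul_le_mul_of_nonneg_right k3.le n3
  have m4 : C * y s(p, q) + C * y s(p, r) + C * y s(p, w) = C := by rw [e4]; ring
  have t1 : y s(p, q) = 0 := by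
    by_contra h
    have := mul_lt_mul_of_pos_right k1 (lt_of_le_of_ne n1 (Ne.symm h))
    linarith
  have t2 : y s(p, r) = 0 := by
    by_contra h
    have := mul_lt_mul_of_pos_right k2 (lt_of_le_of_ne n2 (Ne.symm h))
    linarith
  have t3 : y s(p, w) = 0 := by
    by_contra h
    have := mul_lt_mul_of_pos_right k3 (lt_of_le_of_ne n3 (Ne.symm h))
    linarith
  rw [t1, t2, t3] at e4
  norm_num at e4

end STPath

namespace STPath

/-- If no odd cut with two vertices on each side is tight, extremality bounds the number of
support edges by the number of tight stars. -/
lemma support_card_le {V : Type*} [Fintype V] {A T : Finset V} {y : Sym2 V → ℝ}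
    (hTe : Even #T) (hT : T ⊆ A) (hy : JoinFeas A T y)
    (hext : ∀ d : Sym2 V → ℝ, (∀ e, e ∉ edgesIn A → d e = 0) → JoinFeas A T (fun e => y e + d e) →
        JoinFeas A T (fun e => y e - d e) → d = 0)
    (hslack : ∀ U ⊆ A, Odd #(U ∩ T) → 2 ≤ #U → 2 ≤ #(A \ U) →
      ∑ e ∈ edgesIn A with e ∈ cutEdges U, y e ≠ 1) :
    #{e ∈ edgesIn A | 0 < y e} ≤ #{v ∈ T | ∑ e ∈ edgesIn A with v ∈ e, y e = 1} := by
  set S := (edgesIn A).filter fun e => 0 < y e with hS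
  set Θ := T.filter fun v => ∑ e ∈ edgesIn A with v ∈ e, y e = 1 with hΘ
  by_contra hlt
  push Not at hlt
  let φ : (S → ℝ) →ₗ[ℝ] (Θ → ℝ) :=
    { toFun := fun d v => ∑ e : S, if v.1 ∈ e.1 then d e else 0
      map_add' := by
        intro d d'; ext v; simp only [Pi.add_apply]; rw [← sum_add_distrib]
        apply sum_congr rfl; intros; split_ifs <;> simp
      map_smul' := by
        intro a d; ext v; simp only [Pi.smul_apply, smul_eq_mul, RingHom.id_apply]; rw [mul_sum]
        apply sum_congr rfl; intros; split_ifs <;> simp }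
  have hker : LinearMap.ker φ ≠ ⊥ := LinearMap.ker_ne_bot_of_finrank_lt (by simpa using hlt)
  obtain ⟨d0, hd0, hd0ne⟩ := Submodule.exists_mem_ne_zero_of_ne_bot hker
  set d : Sym2 V → ℝ := fun e => if h : e ∈ S then d0 ⟨e, h⟩ else 0 with hd
  have hdS : ∀ e, e ∉ S → d e = 0 := by intro e he; simp [hd, he]
  have hdstar : ∀ v ∈ Θ, ∑ e ∈ edgesIn A with v ∈ e, d e = 0 := by
    intro v hv
    have h1 : ∑ e : S, (if v ∈ e.1 then d0 e else 0) = 0 :=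
      congrFun (LinearMap.mem_ker.1 hd0) ⟨v, hv⟩
    have h2 : ∑ e : S, (if v ∈ e.1 then d0 e else 0) = ∑ e ∈ S, if v ∈ e then d e else 0 := by
      rw [← sum_coe_sort S]
      apply sum_congr rfl
      intro e _; simp [hd]
    rw [h2] at h1
    rw [sum_filter]
    refine Eq.trans (Eq.symm ?_) h1
    apply sum_subset (filter_subset _ _)
    intro e he hne
    rw [hdS e hne]; simp
  -- small multiples of `d` keep feasibility
  have hev : ∀ᶠ ε in nhds (0 : ℝ), JoinFeas A T (fun e => y e + ε * d e) := by
    have h1 : ∀ᶠ ε in nhds (0 : ℝ), ∀ e, 0 ≤ y e + ε * d e := by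
      rw [Filter.eventually_all]
      intro e
      by_cases he : e ∈ S
      · have hcont : Continuous fun ε : ℝ => y e + ε * d e := by fun_prop
        have : (0 : ℝ) < y e + 0 * d e := by simpa using (mem_filter.1 he).2
        filter_upwards [hcont.continuousAt.eventually_const_lt this] with ε h using h.le
      · rw [hdS e he]; simpa using hy.1 e
    have h2 : ∀ᶠ ε in nhds (0 : ℝ), ∀ U : Finset V, U ⊆ A → Odd #(U ∩ T) →
        1 ≤ ∑ e ∈ edgesIn A with e ∈ cutEdges U, (y e + ε * d e) := by
      rw [Filter.eventually_all]
      intro U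
      by_cases hU : U ⊆ A ∧ Odd #(U ∩ T)
      swap
      · exact Filter.Eventually.of_forall fun ε h1 h2 => absurd ⟨h1, h2⟩ hU
      obtain ⟨hUA, hodd⟩ := hU
      have hone := hy.2 U hUA hodd
      by_cases htight : ∑ e ∈ edgesIn A with e ∈ cutEdges U, y e = 1
      · -- a tight cut is the star of a vertex of `Θ`
        obtain ⟨v, hv, hUv⟩ : ∃ v ∈ T, (edgesIn A).filter (· ∈ cutEdges U) =
            (edgesIn A).filter (v ∈ ·) := by
          have hor : #U ≤ 1 ∨ #(A \ U) ≤ 1 := by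
            by_contra h
            push Not at h
            exact hslack U hUA hodd h.1 h.2 htight
          rcases hor with h | h
          · have hne : (U ∩ T).Nonempty := card_pos.1 hodd.pos
            obtain ⟨v, hv⟩ := hne
            have : U = {v} := by
              apply (eq_of_subset_of_card_le _ (by simpa using h)).symm
              simpa using (mem_inter.1 hv).1
            exact ⟨v, (mem_inter.1 hv).2, by rw [this, cut_singleton]⟩
          · have hsp : #T = #(U ∩ T) + #((A \ U) ∩ T) := by
              rw [← card_union_of_disjoint]
              · congr 1; ext v
                simp only [mem_union, mem_inter, mem_sdiff]
                have := @hT v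
                tauto
              · rw [disjoint_left]; intro v; simp only [mem_inter, mem_sdiff]; tauto
            have hodd' : Odd #((A \ U) ∩ T) := by
              rw [Nat.odd_iff] at *; rw [Nat.even_iff] at hTe; omega
            obtain ⟨v, hv⟩ : ((A \ U) ∩ T).Nonempty := card_pos.1 hodd'.pos
            have : A \ U = {v} := by
              apply (eq_of_subset_of_card_le _ (by simpa using h)).symm
              simpa using mem_sdiff.1 (mem_inter.1 hv).1
            exact ⟨v, (mem_inter.1 hv).2, by rw [← cutIn_compl, this, cut_singleton]⟩
        have hvΘ : v ∈ Θ := mem_filter.2 ⟨hv, by rw [← hUv]; exact htight⟩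
        refine Filter.Eventually.of_forall fun ε _ _ => ?_
        rw [sum_add_distrib, ← mul_sum, htight, hUv, hdstar v hvΘ]; simp
      · have hlt1 := lt_of_le_of_ne hone (Ne.symm htight)
        have hcont : Continuous fun ε : ℝ =>
            ∑ e ∈ edgesIn A with e ∈ cutEdges U, (y e + ε * d e) := by fun_prop
        have : (1 : ℝ) < ∑ e ∈ edgesIn A with e ∈ cutEdges U, (y e + 0 * d e) := by
          simpa using hlt1
        filter_upwards [hcont.continuousAt.eventually_const_lt this] with ε h _ _ using h.le
    filter_upwards [h1, h2] with ε h1 h2 using ⟨h1, h2⟩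
  have hneg : ∀ᶠ ε in nhds (0 : ℝ), JoinFeas A T (fun e => y e + (-ε) * d e) := by
    have : Filter.Tendsto (fun ε : ℝ => -ε) (nhds 0) (nhds 0) := by
      have := (continuous_neg (G := ℝ)).tendsto 0
      simpa using this
    exact this.eventually hev
  obtain ⟨ε, ⟨h1, h2⟩, hε⟩ := (((hev.and hneg).filter_mono nhdsWithin_le_nhds).and
    (self_mem_nhdsWithin (a := (0 : ℝ)) (s := Set.Ioi 0))).exists
  have hε : 0 < ε := hε
  have hz := hext (fun e => ε * d e) (by
      intro e he
      show ε * d e = 0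
      rw [hdS e (fun h => he (mem_filter.1 h).1), mul_zero]) h1
    (by simpa [sub_eq_add_neg] using h2)
  apply hd0ne
  ext e
  have := congrFun hz e.1
  simp only [Pi.zero_apply, mul_eq_zero, hε.ne', false_or] at this
  simpa [hd] using this

/-- Fractional dominators of the `T`-odd cuts cost at least as much as a cheapest `T`-join. -/
theorem joinThm {V : Type*} [Fintype V] (n : ℕ) : ∀ A : Finset V, #A = n → JoinThm A := by
  induction n using Nat.strong_induction_on with
  | _ n ih =>
  intro A hn T hT hTe c hc y0 hy0
  have IH : ∀ A' : Finset V, #A' < #A → JoinThm A' := fun A' h => ih _ (hn ▸ h) A' rfl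
  obtain ⟨y, hy, hle, hext⟩ := exists_vertex hc hy0
  suffices h : ∃ J, IsJoin A T J ∧ ∑ e ∈ J, c e ≤ ∑ e ∈ edgesIn A, c e * y e by
    obtain ⟨J, h1, h2⟩ := h
    exact ⟨J, h1, h2.trans hle⟩
  rcases T.eq_empty_or_nonempty with rfl | hTne
  · refine ⟨∅, ⟨by simp, by simp⟩, ?_⟩
    rw [sum_empty]
    exact sum_nonneg fun e he => mul_nonneg (hc e (mem_filter.1 he).2).le (hy.1 e)
  by_cases htight : ∃ U ⊆ A, Odd #(U ∩ T) ∧ 2 ≤ #U ∧ 2 ≤ #(A \ U) ∧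
      ∑ e ∈ edgesIn A with e ∈ cutEdges U, y e = 1
  · obtain ⟨U, h1, h2, h3, h4, h5⟩ := htight
    exact join_of_tight IH h1 h2 h3 h4 hc hy hT hTe h5
  push Not at htight
  have hA2 : 2 ≤ #A := by
    have : 0 < #T := card_pos.2 hTne
    have h2 : 2 ≤ #T := by rw [Nat.even_iff] at hTe; omega
    exact h2.trans (card_le_card hT)
  set S := (edgesIn A).filter fun e => 0 < y e with hS
  have hSd : ∀ e ∈ S, e ∈ edgesIn A := fun e he => (mem_filter.1 he).1
  by_cases hleaf : ∃ v ∈ A, #(S.filter (v ∈ ·)) ≤ 1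
  · obtain ⟨v, hv, hcard⟩ := hleaf
    obtain ⟨a, ha, hav, hl⟩ : ∃ a ∈ A, a ≠ v ∧ ∀ e ∈ S, v ∈ e → e = s(v, a) := by
      rcases (S.filter (v ∈ ·)).eq_empty_or_nonempty with h0 | ⟨e, he⟩
      · obtain ⟨a, ha, hav⟩ := exists_mem_ne (by omega : 1 < #A) v
        refine ⟨a, ha, hav, fun e he hve => ?_⟩
        have : e ∈ S.filter (v ∈ ·) := mem_filter.2 ⟨he, hve⟩
        rw [h0] at this; simp at this
      · obtain ⟨heS, hve⟩ := mem_filter.1 he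
        obtain ⟨a, rfl⟩ := Sym2.mem_iff_exists.1 hve
        obtain ⟨-, ha, hva⟩ := mem_edgesIn.1 (hSd _ heS)
        refine ⟨a, ha, hva.symm, fun f hf hvf => ?_⟩
        exact card_le_one.1 hcard _ (mem_filter.2 ⟨hf, hvf⟩) _ he
    refine join_of_leaf IH hv ha hav hc hy hT hTe ?_
    intro e he hve hne
    by_contra h0
    exact hne (hl e (mem_filter.2 ⟨he, lt_of_le_of_ne (hy.1 e) (Ne.symm h0)⟩) hve)
  push Not at hleaf
  have hcard := support_card_le hTe hT hy hext
    (fun U h1 h2 h3 h4 => htight U h1 h2 h3 h4)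
  rw [← hS] at hcard
  set Θ := T.filter fun v => ∑ e ∈ edgesIn A with v ∈ e, y e = 1 with hΘ
  have hdeg : ∑ v ∈ A, #(S.filter (v ∈ ·)) = 2 * #S := by
    have h1 : ∑ v ∈ A, #(S.filter (v ∈ ·)) = ∑ e ∈ S, #(A.filter (· ∈ e)) := by
      simp_rw [card_filter]
      rw [sum_comm]
    rw [h1, mul_comm, ← smul_eq_mul, ← sum_const]
    apply sum_congr rfl
    intro e he
    have := hSd e he
    induction e using Sym2.ind with
    | _ a b =>
      obtain ⟨ha, hb, hab⟩ := mem_edgesIn.1 this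
      have : A.filter (· ∈ s(a, b)) = {a, b} := by
        ext v; simp only [mem_filter, Sym2.mem_iff, mem_insert, mem_singleton]
        constructor
        · exact fun h => h.2
        · rintro (rfl | rfl) <;> simp [*]
      rw [this, card_pair hab]
  have hdeg2 : 2 * #A ≤ ∑ v ∈ A, #(S.filter (v ∈ ·)) := by
    rw [mul_comm, ← smul_eq_mul, ← sum_const]
    exact sum_le_sum fun v hv => hleaf v hv
  have hΘT : #Θ ≤ #T := card_le_card (filter_subset _ _)
  have hTA := card_le_card hT
  have hTeq : T = A := eq_of_subset_of_card_le hT (by omega)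
  have hΘeq : Θ = T := eq_of_subset_of_card_le (filter_subset _ _) (by omega)
  subst hTeq
  have hstar : ∀ v ∈ T, ∑ e ∈ edgesIn T with v ∈ e, y e = 1 := by
    intro v hv
    rw [← hΘeq] at hv
    exact (mem_filter.1 hv).2
  have hdegeq : ∀ v ∈ T, #(S.filter (v ∈ ·)) = 2 := by
    by_contra hcon
    push Not at hcon
    obtain ⟨v, hv, hne⟩ := hcon
    have : ∑ v ∈ T, 2 < ∑ v ∈ T, #(S.filter (v ∈ ·)) :=
      sum_lt_sum (fun v hv => hleaf v hv) ⟨v, hv, lt_of_le_of_ne (hleaf v hv) (Ne.symm hne)⟩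
    rw [sum_const, smul_eq_mul] at this
    omega
  obtain ⟨v, hv⟩ := hTne
  obtain ⟨e, f, hef, hSv⟩ := card_eq_two.1 (hdegeq v hv)
  have heS : e ∈ S.filter (v ∈ ·) := by rw [hSv]; simp
  have hfS : f ∈ S.filter (v ∈ ·) := by rw [hSv]; simp
  obtain ⟨heS, hve⟩ := mem_filter.1 heS
  obtain ⟨hfS, hvf⟩ := mem_filter.1 hfS
  obtain ⟨a, rfl⟩ := Sym2.mem_iff_exists.1 hve
  obtain ⟨b, rfl⟩ := Sym2.mem_iff_exists.1 hvf
  have hab : a ≠ b := fun h => hef (by rw [h])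
  obtain ⟨-, ha, hva⟩ := mem_edgesIn.1 (hSd _ heS)
  obtain ⟨-, hb, hvb⟩ := mem_edgesIn.1 (hSd _ hfS)
  have hsum1 : y s(v, a) + y s(v, b) = 1 := by
    rw [← hstar v hv, ← sum_pair hef, ← hSv]
    apply sum_subset
    · exact filter_subset_filter _ (filter_subset _ _)
    · intro g hg hg'
      by_contra h0
      obtain ⟨h1, h2⟩ := mem_filter.1 hg
      exact hg' (mem_filter.2 ⟨mem_filter.2 ⟨h1, lt_of_le_of_ne (hy.1 g) (Ne.symm h0)⟩, h2⟩)
  set U : Finset V := {v, a, b} with hU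
  have hUT : U ⊆ T := by
    intro w hw; simp only [hU, mem_insert, mem_singleton] at hw
    rcases hw with rfl | rfl | rfl <;> assumption
  have hU3 : #U = 3 := by rw [hU, card_insert_of_notMem (by simp [hva, hvb]), card_pair hab]
  have hcutU : ∑ e ∈ edgesIn T with e ∈ cutEdges U, y e ≤ 1 := by
    have h1 := sum_stars hUT y
    rw [sum_congr rfl (fun w hw => hstar w (hUT hw)), sum_const, hU3] at h1
    have h2 : y s(v, a) + y s(v, b) ≤ ∑ e ∈ edgesIn U, y e := by
      rw [← sum_pair hef]
      apply sum_le_sum_of_subset_of_nonneg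
      · intro g hg
        rw [mem_insert, mem_singleton] at hg
        rcases hg with rfl | rfl <;> rw [mem_edgesIn] <;> simp [hU, hva, hvb]
      · intro g _ _; exact hy.1 g
    norm_num at h1
    linarith
  have hUodd : Odd #(U ∩ T) := by
    rw [inter_eq_left.2 hUT, hU3]; decide
  have hUtight : ∑ e ∈ edgesIn T with e ∈ cutEdges U, y e = 1 :=
    le_antisymm hcutU (hy.2 U hUT hUodd)
  have hrest : #(T \ U) = 1 := by
    have h1 : ¬ 2 ≤ #(T \ U) := fun h => htight U hUT hUodd (by omega) h hUtight
    have h2 := card_sdiff_add_card_eq_card hUT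
    rw [Nat.even_iff] at hTe
    omega
  obtain ⟨w, hw⟩ := card_eq_one.1 hrest
  have hwmem : w ∈ T \ U := by rw [hw]; simp
  have hwU : w ∉ U := (mem_sdiff.1 hwmem).2
  simp only [hU, mem_insert, mem_singleton, not_or] at hwU
  have hTfour : T = {v, a, b, w} := by
    rw [← sdiff_union_of_subset hUT, hw, hU]
    ext z; simp only [mem_union, mem_insert, mem_singleton]; tauto
  exact join_of_four hTfour hva hvb (Ne.symm hwU.1) hab (Ne.symm hwU.2.1) (Ne.symm hwU.2.2)
    c hy.1 hstar

end STPath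

namespace STPath
set_option linter.unusedSectionVars false

/-! ### Tight sets of the spanning tree polytope -/

/-- The mass of `y` on the edges inside `U`. -/
def ins {V : Type*} (y : Sym2 V → ℝ) (U : Finset V) : ℝ := ∑ e ∈ edgesIn U, y e

/-- `y` lies in `N` times the forest polytope. -/
structure Sub {V : Type*} (y : Sym2 V → ℝ) (N : ℝ) : Prop where
  nonneg : ∀ e, 0 ≤ y e
  le : ∀ U : Finset V, U.Nonempty → ins y U ≤ N * (#U - 1)

/-- A nonempty set whose forest constraint holds with equality. -/
def Tight {V : Type*} (y : Sym2 V → ℝ) (N : ℝ) (U : Finset V) : Prop :=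
  U.Nonempty ∧ ins y U = N * (#U - 1)

/-- The indicator vector of an edge set. -/
def ind {V : Type*} (T : Finset (Sym2 V)) (e : Sym2 V) : ℝ := if e ∈ T then 1 else 0

variable {V : Type*} [Fintype V]

lemma edgesIn_mono {U W : Finset V} (h : U ⊆ W) : edgesIn U ⊆ edgesIn W := by
  intro e he
  induction e using Sym2.ind with
  | _ a b => rw [mem_edgesIn] at *; exact ⟨h he.1, h he.2.1, he.2.2⟩

lemma mem_of_edgesIn {U : Finset V} {e : Sym2 V} (he : e ∈ edgesIn U) {v : V} (hv : v ∈ e) :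
    v ∈ U := by
  obtain ⟨w, rfl⟩ := Sym2.mem_iff_exists.1 hv
  exact (mem_edgesIn.1 he).1

/-- The mass inside vertex sets is supermodular; the defect is the mass between the differences. -/
lemma ins_uncross (y : Sym2 V → ℝ) (U W : Finset V) :
    ins y U + ins y W +
      ∑ e ∈ edgesIn univ with e ∈ cutEdges (U \ W) ∧ e ∈ cutEdges (W \ U), y e =
    ins y (U ∩ W) + ins y (U ∪ W) := by
  have key : ∀ X : Finset V, ins y X = ∑ e ∈ edgesIn univ, if e ∈ edgesIn X then y e else 0 := by
    intro X
    rw [← sum_filter, ins]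
    apply sum_congr _ fun _ _ => rfl
    ext e; rw [mem_filter]
    exact ⟨fun h => ⟨edgesIn_mono (subset_univ X) h, h⟩, fun h => h.2⟩
  rw [key U, key W, key (U ∩ W), key (U ∪ W), sum_filter, ← sum_add_distrib, ← sum_add_distrib,
    ← sum_add_distrib]
  apply sum_congr rfl
  intro e he
  induction e using Sym2.ind with
  | _ a b =>
    have hab := (mem_edgesIn.1 he).2.2
    simp only [mem_edgesIn, mem_cut, mem_inter, mem_union, mem_sdiff]
    by_cases h1 : a ∈ U <;> by_cases h2 : a ∈ W <;> by_cases h3 : b ∈ U <;> by_cases h4 : b ∈ W <;>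
      simp [h1, h2, h3, h4, hab]

/-- Tight sets that meet are closed under intersection and union. -/
lemma tight_uncross {y : Sym2 V → ℝ} {N : ℝ} (h : Sub y N) {U W : Finset V}
    (hU : Tight y N U) (hW : Tight y N W) (hne : (U ∩ W).Nonempty) :
    Tight y N (U ∩ W) ∧ Tight y N (U ∪ W) ∧
      ∀ e, e ∈ cutEdges (U \ W) → e ∈ cutEdges (W \ U) → y e = 0 := by
  have h1 := ins_uncross y U W
  have h2 := h.le (U ∩ W) hne
  have hne' : (U ∪ W).Nonempty := hU.1.mono subset_union_left
  have h3 := h.le (U ∪ W) hne'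
  have h4 : (#(U ∩ W) : ℝ) + #(U ∪ W) = #U + #W := by
    exact_mod_cast card_inter_add_card_union U W
  have h5 : 0 ≤ ∑ e ∈ edgesIn univ with e ∈ cutEdges (U \ W) ∧ e ∈ cutEdges (W \ U), y e :=
    sum_nonneg fun e _ => h.nonneg e
  have h6 := hU.2
  have h7 := hW.2
  have h8 : N * #(U ∩ W) + N * #(U ∪ W) = N * #U + N * #W := by
    rw [← mul_add, h4, mul_add]
  refine ⟨⟨hne, by linarith⟩, ⟨hne', by linarith⟩, ?_⟩
  have h9 : ∑ e ∈ edgesIn univ with e ∈ cutEdges (U \ W) ∧ e ∈ cutEdges (W \ U), y e = 0 := by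
    linarith
  intro e he1 he2
  refine (sum_eq_zero_iff_of_nonneg fun e _ => h.nonneg e).1 h9 e ?_
  rw [mem_filter]
  refine ⟨?_, he1, he2⟩
  simp [edgesIn, not_diag_of_cut he1]

lemma ins_le_cross {y : Sym2 V → ℝ} {N : ℝ} (h : Sub y N) {S C : Finset V}
    (h1 : (S ∩ C).Nonempty) (h2 : (S \ C).Nonempty) :
    ins y S ≤ N * (#S - 2) + ∑ e ∈ edgesIn S with e ∈ cutEdges C, y e := by
  have e1 := sum_edgesIn_split (inter_subset_left : S ∩ C ⊆ S) y
  rw [sdiff_inter_self_left] at e1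
  have e2 : (edgesIn S).filter (· ∈ cutEdges (S ∩ C)) = (edgesIn S).filter (· ∈ cutEdges C) := by
    ext e
    induction e using Sym2.ind with
    | _ a b => simp only [mem_filter, mem_edgesIn, mem_cut, mem_inter]; tauto
  rw [e2] at e1
  have e3 := h.le _ h1
  have e4 := h.le _ h2
  have e5 : (#S : ℝ) = #(S \ C) + #(S ∩ C) := by
    exact_mod_cast (card_sdiff_add_card_inter S C).symm
  simp only [ins] at *
  rw [e1, e5]
  linarith

lemma tight_cross {y : Sym2 V → ℝ} {N : ℝ} (h : Sub y N) {S C : Finset V} (hS : Tight y N S)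
    (h1 : (S ∩ C).Nonempty) (h2 : (S \ C).Nonempty) :
    N ≤ ∑ e ∈ edgesIn S with e ∈ cutEdges C, y e := by
  have e1 := ins_le_cross h h1 h2
  rw [hS.2] at e1
  linarith

lemma exists_cross {y : Sym2 V → ℝ} {N : ℝ} (h : Sub y N) {S C : Finset V}
    (hS : N * (#S - 2) < ins y S)
    (h1 : (S ∩ C).Nonempty) (h2 : (S \ C).Nonempty) :
    ∃ e ∈ edgesIn S, e ∈ cutEdges C ∧ 0 < y e := by
  have e1 := ins_le_cross h h1 h2
  by_contra hcon
  push Not at hcon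
  have : ∑ e ∈ edgesIn S with e ∈ cutEdges C, y e ≤ 0 := by
    apply sum_nonpos
    intro e he
    rw [mem_filter] at he
    exact hcon e he.1 he.2
  linarith

/-- The inclusion-wise least tight set containing the edge `e`, if there is any. -/
def hull (y : Sym2 V → ℝ) (N : ℝ) (e : Sym2 V) : Finset V :=
  univ.filter fun v => ∀ S, Tight y N S → e ∈ edgesIn S → v ∈ S

lemma hull_subset {y : Sym2 V → ℝ} {N : ℝ} {e : Sym2 V} {S : Finset V} (hS : Tight y N S)
    (he : e ∈ edgesIn S) : hull y N e ⊆ S := by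
  intro v hv
  exact (mem_filter.1 hv).2 S hS he

lemma mem_hull {y : Sym2 V → ℝ} {N : ℝ} {e : Sym2 V} (hd : ¬ e.IsDiag) :
    e ∈ edgesIn (hull y N e) := by
  rw [edgesIn, mem_filter, mem_sym2_iff]
  refine ⟨fun v hv => mem_filter.2 ⟨mem_univ _, fun S _ he => mem_of_edgesIn he hv⟩, hd⟩

lemma hull_tight {y : Sym2 V → ℝ} {N : ℝ} (h : Sub y N) {e : Sym2 V} {S : Finset V}
    (hS : Tight y N S) (he : e ∈ edgesIn S) : Tight y N (hull y N e) := by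
  obtain ⟨R, hR, hmin⟩ := exists_min_image
    (univ.filter fun S : Finset V => Tight y N S ∧ e ∈ edgesIn S) card ⟨S, by simp [hS, he]⟩
  simp only [mem_filter, mem_univ, true_and] at hR hmin
  have : hull y N e = R := by
    apply Subset.antisymm (hull_subset hR.1 hR.2)
    intro v hv
    refine mem_filter.2 ⟨mem_univ _, fun W hW heW => ?_⟩
    have heRW : e ∈ edgesIn (R ∩ W) := by
      have h1 := hR.2
      induction e using Sym2.ind with
      | _ a b => rw [mem_edgesIn] at *; simp only [mem_inter]; tauto
    have hne : (R ∩ W).Nonempty := by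
      induction e using Sym2.ind with
      | _ a b => exact ⟨a, (mem_edgesIn.1 heRW).1⟩
    have hcard := hmin _ ⟨(tight_uncross h hR.1 hW hne).1, heRW⟩
    have := eq_of_subset_of_card_le inter_subset_left hcard
    rw [← this] at hv
    exact (mem_inter.1 hv).2
  rw [this]; exact hR.1

lemma ins_ind (T : Finset (Sym2 V)) (U : Finset V) :
    ins (ind T) U = #{e ∈ T | e ∈ edgesIn U} := by
  rw [ins]
  simp only [ind]
  rw [← sum_filter, sum_const, nsmul_eq_mul, mul_one]
  congr 2
  ext e; simp only [mem_filter]; tauto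

/-- `T` is the edge set of a forest. -/
def Forest (T : Finset (Sym2 V)) : Prop := T ⊆ edgesIn univ ∧ Sub (ind T) 1

lemma ind_pos {T : Finset (Sym2 V)} {e : Sym2 V} : 0 < ind T e ↔ e ∈ T := by
  simp only [ind]; split_ifs with h <;> simp [h]

lemma forest_iff {T : Finset (Sym2 V)} : Forest T ↔ T ⊆ edgesIn univ ∧
    ∀ U : Finset V, U.Nonempty → #{e ∈ T | e ∈ edgesIn U} + 1 ≤ #U := by
  constructor
  · rintro ⟨h1, h2⟩
    refine ⟨h1, fun U hU => ?_⟩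
    have := h2.le U hU
    rw [ins_ind] at this
    have : (#{e ∈ T | e ∈ edgesIn U} : ℝ) + 1 ≤ #U := by linarith
    exact_mod_cast this
  · rintro ⟨h1, h2⟩
    refine ⟨h1, fun e => by simp only [ind]; split_ifs <;> norm_num, fun U hU => ?_⟩
    have := h2 U hU
    rw [ins_ind]
    have : (#{e ∈ T | e ∈ edgesIn U} : ℝ) + 1 ≤ #U := by exact_mod_cast this
    linarith

/-- For a forest, the tight sets are the vertex sets of subtrees. -/
abbrev TT (T : Finset (Sym2 V)) (U : Finset V) : Prop := Tight (ind T) 1 U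

lemma tt_iff {T : Finset (Sym2 V)} {U : Finset V} :
    TT T U ↔ U.Nonempty ∧ #{e ∈ T | e ∈ edgesIn U} + 1 = #U := by
  rw [TT, Tight, ins_ind, and_congr_right_iff]
  intro _
  constructor
  · intro h
    have : (#{e ∈ T | e ∈ edgesIn U} : ℝ) + 1 = #U := by linarith
    exact_mod_cast this
  · intro h
    have : (#{e ∈ T | e ∈ edgesIn U} : ℝ) + 1 = #U := by exact_mod_cast h
    linarith

lemma tt_singleton {T : Finset (Sym2 V)} (v : V) : TT T {v} := by
  rw [tt_iff]
  refine ⟨singleton_nonempty v, ?_⟩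
  rw [card_singleton, Nat.add_eq_right, card_eq_zero]
  apply filter_false_of_mem
  intro e _ he
  induction e using Sym2.ind with
  | _ a b =>
    rw [mem_edgesIn] at he
    simp only [mem_singleton] at he
    exact he.2.2 (he.1.trans he.2.1.symm)

lemma tt_cross {T : Finset (Sym2 V)} (hT : Forest T) {S C : Finset V} (hS : TT T S)
    (h1 : (S ∩ C).Nonempty) (h2 : (S \ C).Nonempty) :
    ∃ e ∈ T, e ∈ edgesIn S ∧ e ∈ cutEdges C := by
  obtain ⟨e, h3, h4, h5⟩ := exists_cross hT.2 (by rw [hS.2]; linarith) h1 h2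
  exact ⟨e, ind_pos.1 h5, h3, h4⟩

/-- Two disjoint subtrees joined by a tree edge form a subtree. -/
lemma tt_join {T : Finset (Sym2 V)} (hT : Forest T) {U W : Finset V} (hU : TT T U) (hW : TT T W)
    (hd : Disjoint U W) {a b : V} (hab : s(a, b) ∈ T) (ha : a ∈ U) (hb : b ∈ W) :
    TT T (U ∪ W) := by
  have h1 := hT.2.le (U ∪ W) (hU.1.mono subset_union_left)
  refine ⟨hU.1.mono subset_union_left, le_antisymm h1 ?_⟩
  have h2 := ins_uncross (ind T) U W
  have h3 : ind T s(a, b) ≤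
      ∑ e ∈ edgesIn univ with e ∈ cutEdges (U \ W) ∧ e ∈ cutEdges (W \ U), ind T e := by
    apply single_le_sum (f := ind T) (fun e _ => hT.2.nonneg e)
    rw [mem_filter]
    refine ⟨hT.1 hab, ?_, ?_⟩
    · rw [sdiff_eq_self_of_disjoint hd, mem_cut]
      exact Or.inl ⟨ha, fun h => disjoint_left.1 hd h hb⟩
    · rw [sdiff_eq_self_of_disjoint hd.symm, mem_cut]
      exact Or.inr ⟨fun h => disjoint_left.1 hd ha h, hb⟩
  rw [disjoint_iff_inter_eq_empty.1 hd] at h2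
  have h4 : ins (ind T) ∅ = 0 := by simp [ins, edgesIn]
  have h5 : ind T s(a, b) = 1 := by simp [ind, hab]
  have h6 := hU.2
  have h7 := hW.2
  rw [card_union_of_disjoint hd]
  push_cast
  linarith

/-- Every vertex of `X` lies in a maximal subtree inside `X`; it absorbs all subtrees inside `X`
that meet it. -/
lemma exists_comp {T : Finset (Sym2 V)} (hT : Forest T) {X : Finset V} {u : V} (hu : u ∈ X) :
    ∃ C ⊆ X, u ∈ C ∧ TT T C ∧ (∀ W ⊆ X, TT T W → (W ∩ C).Nonempty → W ⊆ C) ∧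
      (∀ e ∈ T, e ∈ edgesIn X → e ∉ cutEdges C) := by
  obtain ⟨C, hC, hmax⟩ := exists_max_image
    (univ.filter fun C : Finset V => C ⊆ X ∧ u ∈ C ∧ TT T C) card
    ⟨{u}, by simp [hu, tt_singleton]⟩
  simp only [mem_filter, mem_univ, true_and] at hC hmax
  obtain ⟨hCX, huC, hC⟩ := hC
  refine ⟨C, hCX, huC, hC, ?_, ?_⟩
  · intro W hWX hW hne
    have h1 := hmax (W ∪ C) ⟨union_subset hWX hCX, mem_union_right _ huC,
      (tight_uncross hT.2 hW hC hne).2.1⟩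
    have h2 := eq_of_subset_of_card_le (subset_union_right : C ⊆ W ∪ C) h1
    rw [h2]; exact subset_union_left
  · intro e heT heX hcut
    have key : ∀ a b, s(a, b) ∈ T → s(a, b) ∈ edgesIn X → a ∈ C → b ∉ C → False := by
      intro a b hT' hX' ha hb
      have h1 := tt_join hT hC (tt_singleton b) (by simpa using hb) hT' ha (mem_singleton_self b)
      have h2 := hmax (C ∪ {b}) ⟨union_subset hCX (by simpa using (mem_edgesIn.1 hX').2.1),
        mem_union_left _ huC, h1⟩
      rw [card_union_of_disjoint (by simpa using hb), card_singleton] at h2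
      omega
    induction e using Sym2.ind with
    | _ a b =>
      rcases mem_cut.1 hcut with ⟨h1, h2⟩ | ⟨h1, h2⟩
      · exact key a b heT heX h1 h2
      · rw [Sym2.eq_swap] at heT heX; exact key b a heT heX h2 h1

lemma card_filter_exchange {T : Finset (Sym2 V)} {e f : Sym2 V} (he : e ∈ T) (hf : f ∉ T)
    (U : Finset V) :
    #{g ∈ insert f (T.erase e) | g ∈ edgesIn U} + (if e ∈ edgesIn U then 1 else 0) =
      #{g ∈ T | g ∈ edgesIn U} + (if f ∈ edgesIn U then 1 else 0) := by
  have h1 : #{g ∈ T.erase e | g ∈ edgesIn U} + (if e ∈ edgesIn U then 1 else 0) =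
      #{g ∈ T | g ∈ edgesIn U} := by
    conv_rhs => rw [← insert_erase he, filter_insert]
    split_ifs with h
    · rw [card_insert_of_notMem (by simp)]
    · rfl
  rw [filter_insert, ← h1]
  split_ifs with h2 h3 h3
  · rw [card_insert_of_notMem (by simp [hf])]
  · rw [card_insert_of_notMem (by simp [hf])]
  all_goals ring

lemma forest_exchange {T : Finset (Sym2 V)} (hT : Forest T) {e f : Sym2 V} (he : e ∈ T)
    (hf : f ∉ T) (hfd : ¬ f.IsDiag) (heS : e ∈ edgesIn (hull (ind T) 1 f)) :
    Forest (insert f (T.erase e)) := by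
  rw [forest_iff] at hT ⊢
  refine ⟨?_, fun U hU => ?_⟩
  · apply insert_subset
    · simp [edgesIn, hfd]
    · exact (erase_subset _ _).trans hT.1
  · have h1 := card_filter_exchange he hf U
    have h2 := hT.2 U hU
    by_cases hfU : f ∈ edgesIn U
    · by_cases htt : TT T U
      · have : e ∈ edgesIn U := edgesIn_mono (hull_subset htt hfU) heS
        simp only [this, hfU, if_true] at h1
        omega
      · rw [tt_iff] at htt
        have : #{e ∈ T | e ∈ edgesIn U} + 1 ≠ #U := fun h => htt ⟨hU, h⟩
        simp only [hfU, if_true] at h1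
        omega
    · simp only [hfU, if_false] at h1
      omega

end STPath

namespace STPath

/-! ### Trees in the minimal face -/
set_option linter.unusedSectionVars false
variable {V : Type*} [Fintype V]

lemma cut_rep {U : Finset V} {e : Sym2 V} (he : e ∈ cutEdges U) :
    ∃ a b, e = s(a, b) ∧ a ∈ U ∧ b ∉ U := (mem_filter.1 he).2

lemma ne_of_pos_edge {U : Finset V} {a b : V} (h : s(a, b) ∈ edgesIn U) : a ≠ b :=
  (mem_edgesIn.1 h).2.2

/-- If two intersecting tight sets both fail to contain an edge of the support, then so does their
union. -/
lemma union_avoid {y : Sym2 V → ℝ} {N : ℝ} (h : Sub y N) {U W : Finset V}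
    (hU : Tight y N U) (hW : Tight y N W) (hne : (U ∩ W).Nonempty) {f : Sym2 V} (hf : 0 < y f)
    (h1 : f ∉ edgesIn U) (h2 : f ∉ edgesIn W) : f ∉ edgesIn (U ∪ W) := by
  intro h3
  have h4 := (tight_uncross h hU hW hne).2.2 f
  induction f using Sym2.ind with
  | _ a b =>
    simp only [mem_edgesIn, mem_union, mem_cut, mem_sdiff] at *
    have : y s(a, b) = 0 := h4 (by tauto) (by tauto)
    linarith

lemma forest_empty : Forest (∅ : Finset (Sym2 V)) := by
  rw [forest_iff]
  refine ⟨empty_subset _, fun U hU => ?_⟩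
  have := hU.card_pos
  simp; omega

lemma forest_insert {T : Finset (Sym2 V)} (hT : Forest T) {f : Sym2 V} (hfd : ¬ f.IsDiag)
    (hno : ∀ S, TT T S → f ∉ edgesIn S) : Forest (insert f T) := by
  rw [forest_iff] at hT ⊢
  refine ⟨insert_subset (by simp [edgesIn, hfd]) hT.1, fun U hU => ?_⟩
  have h2 := hT.2 U hU
  rw [filter_insert]
  split_ifs with hfU
  · have : #{e ∈ T | e ∈ edgesIn U} + 1 ≠ #U := fun h => hno U (tt_iff.2 ⟨hU, h⟩) hfU
    have := card_insert_le f {e ∈ T | e ∈ edgesIn U}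
    omega
  · exact h2

/-- `T` is a forest in the support of `y` that is connected on every tight set: an integral point
of the minimal face of the spanning tree polytope containing `y / N`. -/
structure FTree (y : Sym2 V → ℝ) (N : ℝ) (T : Finset (Sym2 V)) : Prop where
  forest : Forest T
  supp : ∀ e ∈ T, 0 < y e
  tt : ∀ U, Tight y N U → TT T U

/-- A forest in the support of `y` with the largest total number of edges inside the tight sets is
connected on each of them. -/
lemma exists_ftree {y : Sym2 V → ℝ} {N : ℝ} (h : Sub y N) (hN : 0 < N) (hV : Tight y N univ) :
    ∃ T, FTree y N T := by
  obtain ⟨T, hT, hmax⟩ := exists_max_image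
    (univ.filter fun T : Finset (Sym2 V) => Forest T ∧ ∀ e ∈ T, 0 < y e)
    (fun T => ∑ U ∈ univ.filter (fun U => Tight y N U), #{e ∈ T | e ∈ edgesIn U})
    ⟨∅, by simp [forest_empty]⟩
  simp only [mem_filter, mem_univ, true_and] at hT hmax
  obtain ⟨hT, hTs⟩ := hT
  refine ⟨T, hT, hTs, ?_⟩
  by_contra hcon
  push Not at hcon
  obtain ⟨U0, hU0⟩ := hcon
  obtain ⟨U, hU, hmin⟩ := exists_min_image
    (univ.filter fun U : Finset V => Tight y N U ∧ ¬ TT T U) card ⟨U0, by simpa using hU0⟩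
  simp only [mem_filter, mem_univ, true_and] at hU hmin
  obtain ⟨hU, hnU⟩ := hU
  have hsm : ∀ W, Tight y N W → W ⊂ U → TT T W := by
    intro W hW hWU
    by_contra hn
    have := hmin W ⟨hW, hn⟩
    have := card_lt_card hWU
    omega
  obtain ⟨u0, hu0⟩ := hU.1
  obtain ⟨C, hCU, hu0C, hC, habs, hclosed⟩ := exists_comp hT hu0
  have hCne : (U \ C).Nonempty := by
    rw [sdiff_nonempty]; intro hUC
    exact hnU (by rw [Subset.antisymm hUC hCU]; exact hC)
  obtain ⟨f, hfU, hfC, hfy⟩ := exists_cross h (by rw [hU.2]; nlinarith)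
    ⟨u0, mem_inter.2 ⟨hu0, hu0C⟩⟩ hCne
  have hfT : f ∉ T := fun hf => hclosed f hf hfU hfC
  have hfd := not_diag_of_cut hfC
  obtain ⟨u, v, rfl, huC, hvC⟩ := cut_rep hfC
  have huU := (mem_edgesIn.1 hfU).1
  have hvU := (mem_edgesIn.1 hfU).2.1
  by_cases hno : ∀ S, TT T S → s(u, v) ∉ edgesIn S
  · have h1 := hmax (insert s(u, v) T) ⟨forest_insert hT hfd hno, by
      intro e he; rcases mem_insert.1 he with rfl | he
      · exact hfy
      · exact hTs e he⟩
    refine absurd h1 (not_le.2 (sum_lt_sum ?_ ⟨U, by simpa using hU, ?_⟩))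
    · intro W _
      exact card_le_card (filter_subset_filter _ (subset_insert _ _))
    · rw [filter_insert, if_pos hfU, card_insert_of_notMem (by simp [hfT])]
      omega
  push Not at hno
  obtain ⟨S0, hS0, hfS0⟩ := hno
  have hS := hull_tight hT.2 hS0 hfS0
  have hexch : ∀ e ∈ T, e ∈ edgesIn (hull (ind T) 1 s(u, v)) → e ∉ edgesIn U →
      s(u, v) ∉ edgesIn (hull y N e) := by
    intro e heT heS heU hfe
    have h1 := hmax (insert s(u, v) (T.erase e)) ⟨forest_exchange hT heT hfT hfd heS, by
      intro e' he; rcases mem_insert.1 he with rfl | he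
      · exact hfy
      · exact hTs e' (mem_of_mem_erase he)⟩
    refine absurd h1 (not_le.2 (sum_lt_sum ?_ ⟨U, by simpa using hU, ?_⟩))
    · intro W hW
      have h2 := card_filter_exchange heT hfT W
      by_cases heW : e ∈ edgesIn W
      · have : s(u, v) ∈ edgesIn W :=
          edgesIn_mono (hull_subset (by simpa using hW) heW) hfe
        simp only [this, heW, if_true] at h2; omega
      · simp only [heW, if_false] at h2; omega
    · have h2 := card_filter_exchange heT hfT U
      simp only [heU, hfU, if_true, if_false] at h2; omega
  -- the closure of `C` under tight sets that avoid the edge `uv`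
  set P : Finset V → Prop := fun W => Tight y N W ∧ s(u, v) ∉ edgesIn W ∧ (W ∩ C).Nonempty with hP
  have hPC : ∀ W, P W → W ∩ U ⊆ C := by
    rintro W ⟨hW, hfW, hWC⟩
    have h1 : ((W ∩ U) ∩ C).Nonempty := by
      rwa [inter_assoc, inter_eq_right.2 hCU]
    have h2 := (tight_uncross h hW hU (h1.mono inter_subset_left)).1
    refine habs _ inter_subset_right (hsm _ h2 ?_) h1
    refine (inter_subset_right).ssubset_of_ne fun heq => hfW ?_
    exact edgesIn_mono (inter_eq_right.1 heq) hfU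
  set Cp : Finset V := univ.filter fun a => a ∈ C ∨ ∃ W, P W ∧ a ∈ W with hCp
  have memCp : ∀ a, a ∈ Cp ↔ a ∈ C ∨ ∃ W, P W ∧ a ∈ W := by simp [hCp]
  have hCpU : ∀ a ∈ Cp, a ∈ U → a ∈ C := by
    intro a ha haU
    rcases (memCp a).1 ha with h1 | ⟨W, hW, haW⟩
    · exact h1
    · exact hPC W hW (mem_inter.2 ⟨haW, haU⟩)
  have hfS := mem_hull (y := ind T) (N := 1) hfd
  obtain ⟨e, heT, heS, hecut⟩ := tt_cross hT hS (C := Cp)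
    ⟨u, mem_inter.2 ⟨(mem_edgesIn.1 hfS).1, (memCp u).2 (Or.inl huC)⟩⟩
    ⟨v, mem_sdiff.2 ⟨(mem_edgesIn.1 hfS).2.1, fun hv => hvC (hCpU v hv hvU)⟩⟩
  have hed := not_diag_of_cut hecut
  by_cases heU : e ∈ edgesIn U
  · apply hclosed e heT heU
    obtain ⟨p, q, rfl, hp, hq⟩ := cut_rep hecut
    rw [mem_edgesIn] at heU
    rw [mem_cut]
    exact Or.inl ⟨hCpU p hp heU.1, fun hqC => hq ((memCp q).2 (Or.inl hqC))⟩
  · have h1 := hexch e heT heS heU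
    have hW := hull_tight h hV (e := e) (by simp [edgesIn, hed])
    have heW := mem_hull (y := y) (N := N) hed
    obtain ⟨p, q, rfl, hp, hq⟩ := cut_rep hecut
    have hpW := (mem_edgesIn.1 heW).1
    have hqW := (mem_edgesIn.1 heW).2.1
    apply hq
    rw [memCp]
    right
    rcases (memCp p).1 hp with hpC | ⟨W, hPW, hpW'⟩
    · exact ⟨_, ⟨hW, h1, p, mem_inter.2 ⟨hpW, hpC⟩⟩, hqW⟩
    · have hne : (W ∩ hull y N s(p, q)).Nonempty := ⟨p, mem_inter.2 ⟨hpW', hpW⟩⟩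
      refine ⟨W ∪ hull y N s(p, q), ⟨(tight_uncross h hPW.1 hW hne).2.1,
        union_avoid h hPW.1 hW hne hfy hPW.2.1 h1, ?_⟩, mem_union_right _ hqW⟩
      exact hPW.2.2.mono (inter_subset_inter_right subset_union_left)

end STPath

namespace STPath

/-! ### Trees crossing a chain of cuts once -/
set_option linter.unusedSectionVars false
variable {V : Type*} [Fintype V]

/-- The number of members of the family `𝒞` crossed by the edge `e`. -/
def crossNum (𝒞 : Finset (Finset V)) (e : Sym2 V) : ℕ := #{L ∈ 𝒞 | e ∈ cutEdges L}

/-- An `FTree` that admits no improving exchange with respect to the number of crossings with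
`𝒞`. -/
structure OptTree (y : Sym2 V → ℝ) (N : ℝ) (𝒞 : Finset (Finset V)) (T : Finset (Sym2 V)) : Prop
    extends FTree y N T where
  opt : ∀ e ∈ T, ∀ f ∉ T, 0 < y f → ¬ f.IsDiag → e ∈ edgesIn (hull (ind T) 1 f) →
    f ∈ edgesIn (hull y N e) → crossNum 𝒞 e ≤ crossNum 𝒞 f

lemma exists_optTree {y : Sym2 V → ℝ} {N : ℝ} (h : Sub y N) (hN : 0 < N) (hV : Tight y N univ)
    (𝒞 : Finset (Finset V)) : ∃ T, OptTree y N 𝒞 T := by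
  obtain ⟨T0, hT0⟩ := exists_ftree h hN hV
  obtain ⟨T, hT, hmin⟩ := exists_min_image
    (univ.filter fun T : Finset (Sym2 V) => FTree y N T)
    (fun T => ∑ e ∈ T, crossNum 𝒞 e) ⟨T0, by simp [hT0]⟩
  simp only [mem_filter, mem_univ, true_and] at hT hmin
  refine ⟨T, hT, ?_⟩
  intro e he f hf hfy hfd heS hfW
  have h1 := hmin (insert f (T.erase e)) ⟨forest_exchange hT.forest he hf hfd heS, by
      intro e' he'; rcases mem_insert.1 he' with rfl | he'
      · exact hfy
      · exact hT.supp e' (mem_of_mem_erase he'), by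
      intro U hU
      have h2 := hT.tt U hU
      rw [tt_iff] at h2 ⊢
      refine ⟨h2.1, ?_⟩
      have h3 := card_filter_exchange he hf U
      by_cases heU : e ∈ edgesIn U
      · have : f ∈ edgesIn U := edgesIn_mono (hull_subset hU heU) hfW
        simp only [this, heU, if_true] at h3; omega
      · have : f ∉ edgesIn U := fun hfU =>
          heU (edgesIn_mono (hull_subset (hT.tt U hU) hfU) heS)
        simp only [this, heU, if_false] at h3; omega⟩
  rw [sum_insert (by simp [hf]), ← add_sum_erase T _ he] at h1
  omega

/-- The hypotheses on a chain `𝒞` of cuts under which some tree of the minimal face crosses each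
member of `𝒞` exactly once. -/
structure GoodChain (y : Sym2 V → ℝ) (N : ℝ) (𝒞 : Finset (Finset V)) : Prop where
  nonempty : ∀ L ∈ 𝒞, L.Nonempty
  proper : ∀ L ∈ 𝒞, L ≠ univ
  chain : ∀ L ∈ 𝒞, ∀ L' ∈ 𝒞, L ⊆ L' ∨ L' ⊆ L
  layer : ∀ L L', (L = ∅ ∨ L ∈ 𝒞) → (L' = univ ∨ L' ∈ 𝒞) → L ⊂ L' →
    N * (#(L' \ L) - 2) < ins y (L' \ L)
  cut : ∀ L ∈ 𝒞, ∑ e ∈ cutEdges L, y e < 2 * N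
  cut₂ : ∀ L ∈ 𝒞, ∀ L' ∈ 𝒞, L ≠ L' → ∑ e ∈ cutEdges L with e ∈ cutEdges L', y e < N

lemma ins_layer {y : Sym2 V → ℝ} {N : ℝ} (h : Sub y N) {U D : Finset V} (hU : Tight y N U)
    (hD : N * (#D - 2) < ins y D) : N * (#(U ∩ D) - 2) < ins y (U ∩ D) := by
  have h1 := ins_uncross y U D
  have h3 := h.le (U ∪ D) (hU.1.mono subset_union_left)
  have h4 : (#(U ∩ D) : ℝ) + #(U ∪ D) = #U + #D := by
    exact_mod_cast card_inter_add_card_union U D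
  have h5 : 0 ≤ ∑ e ∈ edgesIn univ with e ∈ cutEdges (U \ D) ∧ e ∈ cutEdges (D \ U), y e :=
    sum_nonneg fun e _ => h.nonneg e
  have h6 := hU.2
  have h8 : N * #(U ∩ D) + N * #(U ∪ D) = N * #U + N * #D := by
    rw [← mul_add, h4, mul_add]
  linarith

/-- Two tight sets crossing the same member of the chain intersect. -/
lemma crossing_meet {y : Sym2 V → ℝ} {N : ℝ} (h : Sub y N) {A W W' : Finset V}
    (hA : ∑ e ∈ cutEdges A, y e < 2 * N) (hW : Tight y N W) (hW' : Tight y N W')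
    (h1 : (W ∩ A).Nonempty) (h2 : (W \ A).Nonempty)
    (h1' : (W' ∩ A).Nonempty) (h2' : (W' \ A).Nonempty) : (W ∩ W').Nonempty := by
  by_contra hne
  rw [not_nonempty_iff_eq_empty, ← disjoint_iff_inter_eq_empty] at hne
  have e1 := tight_cross h hW h1 h2
  have e2 := tight_cross h hW' h1' h2'
  have hd : Disjoint ((edgesIn W).filter (· ∈ cutEdges A)) ((edgesIn W').filter (· ∈ cutEdges A)) := by
    rw [disjoint_left]
    intro e he he'
    rw [mem_filter] at he he'
    induction e using Sym2.ind with
    | _ a b => exact disjoint_left.1 hne (mem_edgesIn.1 he.1).1 (mem_edgesIn.1 he'.1).1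
  have e3 := sum_union (f := y) hd
  have e4 : ∑ e ∈ (edgesIn W).filter (· ∈ cutEdges A) ∪ (edgesIn W').filter (· ∈ cutEdges A), y e
      ≤ ∑ e ∈ cutEdges A, y e := by
    apply sum_le_sum_of_subset_of_nonneg
    · intro e he
      rw [mem_union, mem_filter, mem_filter] at he
      tauto
    · exact fun e _ _ => h.nonneg e
  linarith

lemma crossNum_eq_zero {𝒞 : Finset (Finset V)} {A B : Finset V}
    (hcons : ∀ L ∈ 𝒞, L ⊆ A ∨ B ⊆ L) {f : Sym2 V} (hf : f ∈ edgesIn (B \ A)) :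
    crossNum 𝒞 f = 0 := by
  rw [crossNum, card_eq_zero, filter_eq_empty_iff]
  intro L hL hc
  induction f using Sym2.ind with
  | _ a b =>
    simp only [mem_edgesIn, mem_sdiff, mem_cut] at hf hc
    rcases hcons L hL with h | h
    · have h1 := @h a; have h2 := @h b; tauto
    · have h1 := @h a; have h2 := @h b; tauto

lemma one_le_crossNum {𝒞 : Finset (Finset V)} {L : Finset V} (hL : L ∈ 𝒞) {e : Sym2 V}
    (he : e ∈ cutEdges L) : 1 ≤ crossNum 𝒞 e :=
  card_pos.2 ⟨L, mem_filter.2 ⟨hL, he⟩⟩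

/-- An optimal tree is connected on the trace of a tight set on a layer between two consecutive
members of the chain. -/
lemma layer_one {y : Sym2 V → ℝ} {N : ℝ} (h : Sub y N)
    {𝒞 : Finset (Finset V)} (hC𝒞 : GoodChain y N 𝒞) {T : Finset (Sym2 V)} (hT : OptTree y N 𝒞 T)
    {A B : Finset V} (hA : A = ∅ ∨ A ∈ 𝒞) (hB : B = univ ∨ B ∈ 𝒞) (hAB : A ⊂ B)
    (hcons : ∀ L ∈ 𝒞, L ⊆ A ∨ B ⊆ L) :
    ∀ n, ∀ U : Finset V, #U = n → Tight y N U → (U ∩ (B \ A)).Nonempty → TT T (U ∩ (B \ A)) := by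
  intro n
  induction n using Nat.strong_induction_on with
  | _ n ih =>
  intro U hUn hU hX
  by_contra hcon
  set X := U ∩ (B \ A) with hXdef
  have hXU : X ⊆ U := inter_subset_left
  have memX : ∀ a, a ∈ X ↔ a ∈ U ∧ a ∈ B ∧ a ∉ A := by
    intro a; simp [hXdef]
  obtain ⟨u0, hu0⟩ := hX
  obtain ⟨C, hCX, hu0C, hC, habs, hclosed⟩ := exists_comp hT.forest hu0
  have hCne : (X \ C).Nonempty := by
    rw [sdiff_nonempty]; intro hXC
    exact hcon (by rw [Subset.antisymm hXC hCX]; exact hC)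
  obtain ⟨f, hfX, hfC, hfy⟩ := exists_cross h (ins_layer h hU (hC𝒞.layer A B hA hB hAB))
    ⟨u0, mem_inter.2 ⟨hu0, hu0C⟩⟩ hCne
  have hfT : f ∉ T := fun hf => hclosed f hf hfX hfC
  have hfd := not_diag_of_cut hfC
  have hfU := edgesIn_mono hXU hfX
  have hwf : crossNum 𝒞 f = 0 := crossNum_eq_zero hcons (edgesIn_mono inter_subset_right hfX)
  have hSU := hull_subset (hT.tt U hU) hfU
  have hS := hull_tight hT.forest.2 (hT.tt U hU) hfU
  have hfS := mem_hull (y := ind T) (N := 1) hfd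
  -- tight sets inside `U` that avoid `f` and meet `C`
  set P : Finset V → Prop := fun W => Tight y N W ∧ W ⊆ U ∧ f ∉ edgesIn W ∧ (W ∩ C).Nonempty with hP
  have hPD : ∀ W, P W → ∀ a ∈ W, a ∈ B → a ∉ A → a ∈ C := by
    rintro W ⟨hW, hWU, hfW, hWC⟩ a haW haB haA
    have hss : W ⊂ U := hWU.ssubset_of_ne fun heq => hfW (heq ▸ hfU)
    have hne : ((W ∩ (B \ A)) ∩ C).Nonempty := by
      obtain ⟨z, hz⟩ := hWC
      rw [mem_inter] at hz
      have := (memX z).1 (hCX hz.2)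
      exact ⟨z, by simp [hz, this]⟩
    have h1 := ih _ (by rw [← hUn]; exact card_lt_card hss) W rfl hW (hne.mono inter_subset_left)
    exact habs _ (inter_subset_inter_right hWU) h1 hne (by simp [haW, haB, haA])
  obtain ⟨u, v, rfl, huC, hvC⟩ := cut_rep hfC
  have hv := (memX v).1 (mem_edgesIn.1 hfX).2.1
  set PA := ∃ W, P W ∧ (W ∩ A).Nonempty ∧ (W \ A).Nonempty with hPA
  set PB := ∃ W, P W ∧ (W ∩ B).Nonempty ∧ (W \ B).Nonempty with hPB
  set Cp : Finset V := univ.filter fun a => a ∈ C ∨ (PA ∧ a ∈ U ∧ a ∈ A) ∨ (PB ∧ a ∈ U ∧ a ∉ B)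
    with hCp
  have memCp : ∀ a, a ∈ Cp ↔ a ∈ C ∨ (PA ∧ a ∈ U ∧ a ∈ A) ∨ (PB ∧ a ∈ U ∧ a ∉ B) := by
    intro a; rw [hCp, mem_filter]; simp
  obtain ⟨e, heT, heS, hecut⟩ := tt_cross hT.forest hS (C := Cp)
    ⟨u, mem_inter.2 ⟨(mem_edgesIn.1 hfS).1, (memCp u).2 (Or.inl huC)⟩⟩
    ⟨v, mem_sdiff.2 ⟨(mem_edgesIn.1 hfS).2.1, fun hv' => by
      rcases (memCp v).1 hv' with h1 | h1 | h1
      · exact hvC h1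
      · exact hv.2.2 h1.2.2
      · exact h1.2.2 hv.2.1⟩⟩
  have hed := not_diag_of_cut hecut
  have heU := edgesIn_mono hSU heS
  have hWU : hull y N e ⊆ U := hull_subset hU heU
  have hW := hull_tight h hU heU
  have heW := mem_hull (y := y) (N := N) hed
  have hlow : ∀ L ∈ 𝒞, e ∈ cutEdges L → s(u, v) ∉ edgesIn (hull y N e) := by
    intro L hL he hf
    have h1 := hT.opt e heT _ hfT hfy hfd heS hf
    have h2 := one_le_crossNum hL he
    omega
  obtain ⟨p, q, rfl, hp, hq⟩ := cut_rep hecut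
  rw [memCp] at hp hq
  push Not at hq
  rw [mem_edgesIn] at heU
  obtain ⟨hpU, hqU, hpq⟩ := heU
  have hpW := (mem_edgesIn.1 heW).1
  have hqW := (mem_edgesIn.1 heW).2.1
  set W := hull y N s(p, q)
  have hA' : ∀ a ∈ A, A ∈ 𝒞 := by
    intro a ha
    rcases hA with rfl | hA
    · simp at ha
    · exact hA
  have hB' : ∀ a ∉ B, B ∈ 𝒞 := by
    intro a ha
    rcases hB with rfl | hB
    · simp at ha
    · exact hB
  have hsub : ∀ a ∈ A, a ∈ B := fun a ha => hAB.1 ha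
  -- a witness crossing the same member of the chain as `W` may be merged with `W`
  have merge : ∀ L ∈ 𝒞, (W ∩ L).Nonempty → (W \ L).Nonempty → s(u, v) ∉ edgesIn W →
      ∀ W0, P W0 → (W0 ∩ L).Nonempty → (W0 \ L).Nonempty → P (W0 ∪ W) := by
    intro L hL h1 h2 hf W0 hW0 h3 h4
    have hne := crossing_meet h (hC𝒞.cut L hL) hW0.1 hW h3 h4 h1 h2
    exact ⟨(tight_uncross h hW0.1 hW hne).2.1, union_subset hW0.2.1 hWU,
      union_avoid h hW0.1 hW hne hfy hW0.2.2.1 hf,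
      hW0.2.2.2.mono (inter_subset_inter_right subset_union_left)⟩
  rcases hp with hpC | ⟨hpa, -, hpA⟩ | ⟨hpb, -, hpB⟩
  · have hp' := (memX p).1 (hCX hpC)
    have hPW : s(u, v) ∉ edgesIn W → P W :=
      fun hf => ⟨hW, hWU, hf, p, mem_inter.2 ⟨hpW, hpC⟩⟩
    by_cases hqA : q ∈ A
    · have h1 := hlow A (hA' q hqA) (mem_cut.2 (Or.inr ⟨hp'.2.2, hqA⟩))
      exact hq.2.1 ⟨W, hPW h1, ⟨q, mem_inter.2 ⟨hqW, hqA⟩⟩, ⟨p, mem_sdiff.2 ⟨hpW, hp'.2.2⟩⟩⟩ hqU hqA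
    by_cases hqB : q ∈ B
    · refine hclosed _ heT ?_ (mem_cut.2 (Or.inl ⟨hpC, hq.1⟩))
      rw [mem_edgesIn]
      exact ⟨hCX hpC, (memX q).2 ⟨hqU, hqB, hqA⟩, hpq⟩
    · have h1 := hlow B (hB' q hqB) (mem_cut.2 (Or.inl ⟨hp'.2.1, hqB⟩))
      exact hqB (hq.2.2 ⟨W, hPW h1, ⟨p, mem_inter.2 ⟨hpW, hp'.2.1⟩⟩, ⟨q, mem_sdiff.2 ⟨hqW, hqB⟩⟩⟩ hqU)
  · have hqA : q ∉ A := hq.2.1 hpa hqU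
    have h1 := hlow A (hA' p hpA) (mem_cut.2 (Or.inl ⟨hpA, hqA⟩))
    obtain ⟨W0, hW0, h2, h3⟩ := hpa
    have hm := merge A (hA' p hpA) ⟨p, mem_inter.2 ⟨hpW, hpA⟩⟩ ⟨q, mem_sdiff.2 ⟨hqW, hqA⟩⟩ h1 W0 hW0 h2 h3
    by_cases hqB : q ∈ B
    · exact hq.1 (hPD _ hm q (mem_union_right _ hqW) hqB hqA)
    · exact hqB (hq.2.2 ⟨_, hm, ⟨p, by simp [hpW, hsub p hpA]⟩, ⟨q, by simp [hqW, hqB]⟩⟩ hqU)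
  · have hqB : q ∈ B := hq.2.2 hpb hqU
    have h1 := hlow B (hB' p hpB) (mem_cut.2 (Or.inr ⟨hpB, hqB⟩))
    obtain ⟨W0, hW0, h2, h3⟩ := hpb
    have hm := merge B (hB' p hpB) ⟨q, mem_inter.2 ⟨hqW, hqB⟩⟩ ⟨p, mem_sdiff.2 ⟨hpW, hpB⟩⟩ h1 W0 hW0 h2 h3
    by_cases hqA : q ∈ A
    · exact hq.2.1 ⟨_, hm, ⟨q, by simp [hqW, hqA]⟩,
        ⟨p, by simp only [mem_sdiff, mem_union]; exact ⟨Or.inr hpW, fun h => hpB (hsub p h)⟩⟩⟩ hqU hqA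
    · exact hq.1 (hPD _ hm q (mem_union_right _ hqW) hqB hqA)

end STPath

namespace STPath
set_option linter.unusedSectionVars false
variable {V : Type*} [Fintype V]

/-- The analogue of `layer_one` for two adjacent layers. -/
lemma layer_two {y : Sym2 V → ℝ} {N : ℝ} (h : Sub y N)
    {𝒞 : Finset (Finset V)} (hC𝒞 : GoodChain y N 𝒞) {T : Finset (Sym2 V)} (hT : OptTree y N 𝒞 T)
    {A Q B : Finset V} (hA : A = ∅ ∨ A ∈ 𝒞) (hQ : Q ∈ 𝒞) (hB : B = univ ∨ B ∈ 𝒞) (hAQ : A ⊂ Q)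
    (hQB : Q ⊂ B) (hcons : ∀ L ∈ 𝒞, L ⊆ A ∨ Q ⊆ L) (hcons' : ∀ L ∈ 𝒞, L ⊆ Q ∨ B ⊆ L) :
    ∀ n, ∀ U : Finset V, #U = n → Tight y N U → (U ∩ (B \ A)).Nonempty → TT T (U ∩ (B \ A)) := by
  intro n
  induction n using Nat.strong_induction_on with
  | _ n ih =>
  intro U hUn hU hX
  have hsub1 : ∀ a ∈ A, a ∈ Q := fun a ha => hAQ.1 ha
  have hsub2 : ∀ a ∈ Q, a ∈ B := fun a ha => hQB.1 ha
  have hAB : A ⊂ B := hAQ.trans hQB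
  have hun : U ∩ (B \ A) = U ∩ (Q \ A) ∪ U ∩ (B \ Q) := by
    ext a
    have := hsub1 a
    have := hsub2 a
    simp only [mem_inter, mem_sdiff, mem_union]
    tauto
  have hdis : Disjoint (U ∩ (Q \ A)) (U ∩ (B \ Q)) := by
    rw [disjoint_left]; intro a; simp only [mem_inter, mem_sdiff]; tauto
  by_cases h1 : (U ∩ (Q \ A)).Nonempty
  swap
  · rw [not_nonempty_iff_eq_empty] at h1
    rw [hun, h1, empty_union] at hX ⊢
    exact layer_one h hC𝒞 hT (Or.inr hQ) hB hQB hcons' _ U rfl hU hX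
  by_cases h2 : (U ∩ (B \ Q)).Nonempty
  swap
  · rw [not_nonempty_iff_eq_empty] at h2
    rw [hun, h2, union_empty] at hX ⊢
    exact layer_one h hC𝒞 hT hA (Or.inr hQ) hAQ hcons _ U rfl hU hX
  have t1 := layer_one h hC𝒞 hT hA (Or.inr hQ) hAQ hcons _ U rfl hU h1
  have t2 := layer_one h hC𝒞 hT (Or.inr hQ) hB hQB hcons' _ U rfl hU h2
  -- it suffices to find a tree edge inside `U` between the two layers
  have key : ∀ e ∈ T, e ∈ edgesIn (U ∩ (B \ A)) → e ∈ cutEdges Q → TT T (U ∩ (B \ A)) := by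
    intro e he heX hc
    obtain ⟨p, q, rfl, hp, hq⟩ := cut_rep hc
    simp only [mem_edgesIn, mem_inter, mem_sdiff] at heX
    rw [hun]
    refine tt_join hT.forest t1 t2 hdis he ?_ ?_
    · simp only [mem_inter, mem_sdiff]; tauto
    · simp only [mem_inter, mem_sdiff]; tauto
  obtain ⟨f, hfX, hfQ, hfy⟩ := exists_cross h (C := Q) (ins_layer h hU (hC𝒞.layer A B hA hB hAB))
    (by obtain ⟨a, ha⟩ := h1
        simp only [mem_inter, mem_sdiff] at ha
        exact ⟨a, by simp only [mem_inter, mem_sdiff]; exact ⟨⟨ha.1, hsub2 a ha.2.1, ha.2.2⟩, ha.2.1⟩⟩)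
    (by obtain ⟨a, ha⟩ := h2
        simp only [mem_inter, mem_sdiff] at ha
        exact ⟨a, by
          simp only [mem_inter, mem_sdiff]
          exact ⟨⟨ha.1, ha.2.1, fun h => ha.2.2 (hsub1 a h)⟩, ha.2.2⟩⟩)
  by_cases hfT : f ∈ T
  · exact key f hfT hfX hfQ
  have hfd := not_diag_of_cut hfQ
  have hfU := edgesIn_mono inter_subset_left hfX
  have hwf : crossNum 𝒞 f ≤ 1 := by
    rw [crossNum, card_le_one_iff_subset_singleton]
    refine ⟨Q, fun L hL => ?_⟩
    rw [mem_filter] at hL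
    rw [mem_singleton]
    obtain ⟨hL, hc⟩ := hL
    induction f using Sym2.ind with
    | _ a b =>
      simp only [mem_edgesIn, mem_inter, mem_sdiff, mem_cut] at hfX hc
      rcases hcons L hL with h3 | h3
      · have h4 := @h3 a; have h5 := @h3 b; tauto
      rcases hcons' L hL with h6 | h6
      · exact Subset.antisymm h6 h3
      · have h4 := @h6 a; have h5 := @h6 b; tauto
  have hSU := hull_subset (hT.tt U hU) hfU
  have hS := hull_tight hT.forest.2 (hT.tt U hU) hfU
  have hfS := mem_hull (y := ind T) (N := 1) hfd
  obtain ⟨e, heT, heS, heQ⟩ := tt_cross hT.forest hS (C := Q)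
    (by obtain ⟨a, b, rfl, ha, hb⟩ := cut_rep hfQ
        exact ⟨a, mem_inter.2 ⟨(mem_edgesIn.1 hfS).1, ha⟩⟩)
    (by obtain ⟨a, b, rfl, ha, hb⟩ := cut_rep hfQ
        exact ⟨b, mem_sdiff.2 ⟨(mem_edgesIn.1 hfS).2.1, hb⟩⟩)
  have hed := not_diag_of_cut heQ
  have heU := edgesIn_mono hSU heS
  have hWU : hull y N e ⊆ U := hull_subset hU heU
  have hW := hull_tight h hU heU
  have heW := mem_hull (y := y) (N := N) hed
  by_cases hfW : f ∈ edgesIn (hull y N e)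
  · have h3 := hT.opt e heT f hfT hfy hfd heS hfW
    have hone : ∀ L ∈ 𝒞, e ∈ cutEdges L → L = Q := by
      intro L hL he
      exact card_le_one.1 (h3.trans hwf) L (mem_filter.2 ⟨hL, he⟩) Q (mem_filter.2 ⟨hQ, heQ⟩)
    refine key e heT ?_ heQ
    obtain ⟨p, q, rfl, hp, hq⟩ := cut_rep heQ
    rw [mem_edgesIn] at heU
    simp only [mem_edgesIn, mem_inter, mem_sdiff]
    have hqA : q ∉ A := fun h => hq (hsub1 q h)
    have hpA : p ∉ A := by
      intro hpA
      rcases hA with rfl | hA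
      · simp at hpA
      · exact hAQ.ne (hone A hA (mem_cut.2 (Or.inl ⟨hpA, hqA⟩)))
    have hqB : q ∈ B := by
      by_contra hqB
      rcases hB with rfl | hB
      · simp at hqB
      · exact hQB.ne' (hone B hB (mem_cut.2 (Or.inl ⟨hsub2 p hp, hqB⟩)))
    exact ⟨⟨heU.1, hsub2 p hp, hpA⟩, ⟨heU.2.1, hqB, hqA⟩, heU.2.2⟩
  · set W := hull y N e
    have hss : W ⊂ U := hWU.ssubset_of_ne fun heq => hfW (heq ▸ hfU)
    have c1 : (W ∩ Q).Nonempty := by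
      obtain ⟨p, q, rfl, hp, hq⟩ := cut_rep heQ
      exact ⟨p, mem_inter.2 ⟨(mem_edgesIn.1 heW).1, hp⟩⟩
    have c2 : (W \ Q).Nonempty := by
      obtain ⟨p, q, rfl, hp, hq⟩ := cut_rep heQ
      exact ⟨q, mem_sdiff.2 ⟨(mem_edgesIn.1 heW).2.1, hq⟩⟩
    have hmass := tight_cross h hW c1 c2
    have hbig : ∀ L ∈ 𝒞, Q ≠ L →
        ¬ ∀ g ∈ edgesIn W, g ∈ cutEdges Q → g ∈ cutEdges L := by
      intro L hL hne hall
      have h3 := hC𝒞.cut₂ Q hQ L hL hne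
      have h4 : ∑ e ∈ edgesIn W with e ∈ cutEdges Q, y e ≤
          ∑ e ∈ cutEdges Q with e ∈ cutEdges L, y e := by
        apply sum_le_sum_of_subset_of_nonneg
        · intro g hg
          rw [mem_filter] at hg ⊢
          exact ⟨hg.2, hall g hg.1 hg.2⟩
        · exact fun e _ _ => h.nonneg e
      linarith
    have d1 : ∃ a ∈ W, a ∈ Q ∧ a ∉ A := by
      by_contra hn
      push Not at hn
      rcases hA with rfl | hA
      · obtain ⟨a, ha⟩ := c1
        rw [mem_inter] at ha
        simpa using hn a ha.1 ha.2
      · refine hbig A hA hAQ.ne' fun g hg hgQ => ?_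
        obtain ⟨p, q, rfl, hp, hq⟩ := cut_rep hgQ
        rw [mem_edgesIn] at hg
        exact mem_cut.2 (Or.inl ⟨hn p hg.1 hp, fun h => hq (hsub1 q h)⟩)
    have d2 : ∃ a ∈ W, a ∈ B ∧ a ∉ Q := by
      by_contra hn
      push Not at hn
      rcases hB with rfl | hB
      · obtain ⟨a, ha⟩ := c2
        rw [mem_sdiff] at ha
        exact ha.2 (hn a ha.1 (mem_univ _))
      · refine hbig B hB hQB.ne fun g hg hgQ => ?_
        obtain ⟨p, q, rfl, hp, hq⟩ := cut_rep hgQ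
        rw [mem_edgesIn] at hg
        exact mem_cut.2 (Or.inl ⟨hsub2 p hp, fun h => hq (hn q hg.2.1 h)⟩)
    obtain ⟨a, haW, haQ, haA⟩ := d1
    obtain ⟨b, hbW, hbB, hbQ⟩ := d2
    have haX : a ∈ W ∩ (B \ A) := by
      simp only [mem_inter, mem_sdiff]; exact ⟨haW, hsub2 a haQ, haA⟩
    have hbX : b ∈ W ∩ (B \ A) := by
      simp only [mem_inter, mem_sdiff]; exact ⟨hbW, hbB, fun h => hbQ (hsub1 b h)⟩
    have h3 := ih _ (by rw [← hUn]; exact card_lt_card hss) W rfl hW ⟨a, haX⟩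
    obtain ⟨g, hgT, hgW, hgQ⟩ := tt_cross hT.forest h3 (C := Q)
      ⟨a, mem_inter.2 ⟨haX, haQ⟩⟩ ⟨b, mem_sdiff.2 ⟨hbX, hbQ⟩⟩
    exact key g hgT (edgesIn_mono (inter_subset_inter_right hWU) hgW) hgQ

lemma exists_pred {y : Sym2 V → ℝ} {N : ℝ} {𝒞 : Finset (Finset V)} (hC : GoodChain y N 𝒞)
    {Q : Finset V} (hQ : Q ∈ 𝒞) :
    ∃ A, (A = ∅ ∨ A ∈ 𝒞) ∧ A ⊂ Q ∧ ∀ L ∈ 𝒞, L ⊆ A ∨ Q ⊆ L := by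
  obtain ⟨A, hA, hmax⟩ := exists_max_image
    (univ.filter fun A : Finset V => (A = ∅ ∨ A ∈ 𝒞) ∧ A ⊂ Q) card
    ⟨∅, by simpa using hC.nonempty Q hQ⟩
  simp only [mem_filter, mem_univ, true_and] at hA hmax
  refine ⟨A, hA.1, hA.2, fun L hL => ?_⟩
  by_contra hcon
  push Not at hcon
  have hLQ : L ⊆ Q := (hC.chain L hL Q hQ).resolve_right hcon.2
  have h1 := hmax L ⟨Or.inr hL, hLQ, hcon.2⟩
  have h2 : A ⊆ L := by
    rcases hA.1 with rfl | hA'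
    · exact empty_subset _
    · exact (hC.chain A hA' L hL).resolve_right hcon.1
  exact hcon.1 (eq_of_subset_of_card_le h2 h1).ge

lemma exists_succ {y : Sym2 V → ℝ} {N : ℝ} {𝒞 : Finset (Finset V)} (hC : GoodChain y N 𝒞)
    {Q : Finset V} (hQ : Q ∈ 𝒞) :
    ∃ B, (B = univ ∨ B ∈ 𝒞) ∧ Q ⊂ B ∧ ∀ L ∈ 𝒞, L ⊆ Q ∨ B ⊆ L := by
  obtain ⟨B, hB, hmin⟩ := exists_min_image
    (univ.filter fun B : Finset V => (B = univ ∨ B ∈ 𝒞) ∧ Q ⊂ B) card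
    ⟨univ, by simpa [ssubset_univ_iff] using hC.proper Q hQ⟩
  simp only [mem_filter, mem_univ, true_and] at hB hmin
  refine ⟨B, hB.1, hB.2, fun L hL => ?_⟩
  by_contra hcon
  push Not at hcon
  have hLQ : Q ⊆ L := (hC.chain L hL Q hQ).resolve_left hcon.1
  have h1 := hmin L ⟨Or.inr hL, hLQ, hcon.1⟩
  have h2 : L ⊆ B := by
    rcases hB.1 with rfl | hB'
    · exact subset_univ _
    · exact (hC.chain B hB' L hL).resolve_left hcon.2
  exact hcon.2 (eq_of_subset_of_card_le h2 h1).ge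

/-- An optimal tree is connected on each member of the chain; induction over the chain from below,
using `layer_two` to attach the next layer. -/
lemma tt_lower {y : Sym2 V → ℝ} {N : ℝ} (h : Sub y N) (hV : Tight y N univ)
    {𝒞 : Finset (Finset V)} (hC : GoodChain y N 𝒞) {T : Finset (Sym2 V)} (hT : OptTree y N 𝒞 T) :
    ∀ n, ∀ Q ∈ 𝒞, #Q = n → TT T Q := by
  intro n
  induction n using Nat.strong_induction_on with
  | _ n ih =>
  intro Q hQ hn
  obtain ⟨P, hP, hPQ, hcons⟩ := exists_pred hC hQ
  rcases hP with rfl | hP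
  · have h1 := layer_one h hC hT (Or.inl rfl) (Or.inr hQ) hPQ hcons _ univ rfl hV
    simp only [sdiff_empty, univ_inter] at h1
    exact h1 (hC.nonempty Q hQ)
  · have h1 := ih _ (by rw [← hn]; exact card_lt_card hPQ) P hP rfl
    obtain ⟨O, hO, hOP, hcons'⟩ := exists_pred hC hP
    have h2 := layer_two h hC hT hO hP (Or.inr hQ) hOP hPQ hcons' hcons _ univ rfl hV
    rw [univ_inter] at h2
    have h3 := h2 (sdiff_nonempty.2 (hOP.trans hPQ).2)
    have h4 := (tight_uncross hT.forest.2 h1 h3 (by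
      obtain ⟨a, ha⟩ := sdiff_nonempty.2 hOP.2
      rw [mem_sdiff] at ha
      exact ⟨a, by simp only [mem_inter, mem_sdiff]; exact ⟨ha.1, hPQ.1 ha.1, ha.2⟩⟩)).2.1
    convert h4 using 1
    ext a
    have h5 : a ∈ _ → a ∈ _ := fun ha => hPQ.1 ha
    have h6 : a ∈ _ → a ∈ _ := fun ha => hOP.1 ha
    simp only [mem_union, mem_sdiff]; tauto

/-- The analogue of `tt_lower` for the complements, by induction from above. -/
lemma tt_upper {y : Sym2 V → ℝ} {N : ℝ} (h : Sub y N) (hV : Tight y N univ)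
    {𝒞 : Finset (Finset V)} (hC : GoodChain y N 𝒞) {T : Finset (Sym2 V)} (hT : OptTree y N 𝒞 T) :
    ∀ n, ∀ Q ∈ 𝒞, #(univ \ Q) = n → TT T (univ \ Q) := by
  intro n
  induction n using Nat.strong_induction_on with
  | _ n ih =>
  intro Q hQ hn
  obtain ⟨P, hP, hPQ, hcons⟩ := exists_succ hC hQ
  rcases hP with rfl | hP
  · have h1 := layer_one h hC hT (Or.inr hQ) (Or.inl rfl) hPQ hcons _ univ rfl hV
    rw [univ_inter] at h1
    exact h1 (sdiff_nonempty.2 hPQ.2)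
  · have h1 := ih _ (by
      rw [← hn]; apply card_lt_card
      rw [← compl_eq_univ_sdiff, ← compl_eq_univ_sdiff, compl_ssubset_compl]
      exact hPQ) P hP rfl
    obtain ⟨B, hB, hOP, hcons'⟩ := exists_succ hC hP
    have h2 := layer_two h hC hT (Or.inr hQ) hP hB hPQ hOP hcons hcons' _ univ rfl hV
    rw [univ_inter] at h2
    have h3 := h2 (sdiff_nonempty.2 (hPQ.trans hOP).2)
    have h4 := (tight_uncross hT.forest.2 h1 h3 (by
      obtain ⟨a, ha⟩ := sdiff_nonempty.2 hOP.2
      rw [mem_sdiff] at ha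
      exact ⟨a, by
        simp only [mem_inter, mem_sdiff]
        exact ⟨⟨mem_univ _, ha.2⟩, ha.1, fun h => ha.2 (hPQ.1 h)⟩⟩)).2.1
    convert h4 using 1
    ext a
    have h5 : a ∈ _ → a ∈ _ := fun ha => hPQ.1 ha
    have h6 : a ∈ _ → a ∈ _ := fun ha => hOP.1 ha
    simp only [mem_union, mem_sdiff, mem_univ, true_and]; tauto

/-- A spanning tree: a forest connected on the whole vertex set. -/
def IsTree (T : Finset (Sym2 V)) : Prop := Forest T ∧ TT T univ

/-- The face lemma: some spanning tree of the minimal face of `y / N` crosses every member of a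
good chain exactly once. -/
theorem face_lemma {y : Sym2 V → ℝ} {N : ℝ} (h : Sub y N) (hN : 0 < N) (hV : Tight y N univ)
    {𝒞 : Finset (Finset V)} (hC : GoodChain y N 𝒞) :
    ∃ T, FTree y N T ∧ IsTree T ∧ ∀ L ∈ 𝒞, #{e ∈ T | e ∈ cutEdges L} = 1 := by
  obtain ⟨T, hT⟩ := exists_optTree h hN hV 𝒞
  refine ⟨T, hT.toFTree, ⟨hT.forest, hT.tt univ hV⟩, fun L hL => ?_⟩
  have h1 := tt_lower h hV hC hT _ L hL rfl
  have h2 := tt_upper h hV hC hT _ L hL rfl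
  have h3 := sum_edgesIn_split (subset_univ L) (ind T)
  have h4 := (hT.tt univ hV).2
  have h5 := h1.2
  have h6 := h2.2
  have h7 : (#(univ \ L) : ℝ) + #L = #(univ : Finset V) := by
    exact_mod_cast card_sdiff_add_card_eq_card (subset_univ L)
  have h8 : ∑ e ∈ edgesIn univ with e ∈ cutEdges L, ind T e = #{e ∈ T | e ∈ cutEdges L} := by
    simp only [ind]
    rw [← sum_filter, sum_const, nsmul_eq_mul, mul_one]
    congr 2
    ext e
    have h9 : e ∈ T → e ∈ edgesIn univ := fun he => hT.forest.1 he
    simp only [mem_filter]; tauto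
  simp only [ins] at *
  have : (#{e ∈ T | e ∈ cutEdges L} : ℝ) = 1 := by linarith
  exact_mod_cast this

end STPath

namespace STPath

/-! ### Narrow cuts of the LP solution -/
set_option linter.unusedSectionVars false
variable {V : Type*} [Fintype V]

/-- The mass of `x` on the cut of `U`. -/
def cx (x : Sym2 V → ℝ) (U : Finset V) : ℝ := ∑ e ∈ cutEdges U, x e

lemma filter_cut (U : Finset V) :
    (edgesIn (univ : Finset V)).filter (· ∈ cutEdges U) = cutEdges U := by
  ext e
  rw [mem_filter, and_iff_right_iff_imp]
  intro he
  simp [edgesIn, not_diag_of_cut he]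

lemma cx_eq (x : Sym2 V → ℝ) (U : Finset V) :
    cx x U = ∑ e ∈ edgesIn (univ : Finset V), if e ∈ cutEdges U then x e else 0 := by
  rw [cx, ← sum_filter, filter_cut]

lemma cx_compl (x : Sym2 V → ℝ) (U : Finset V) : cx x (univ \ U) = cx x U := by
  rw [cx, cx]
  apply sum_congr _ fun _ _ => rfl
  ext e
  induction e using Sym2.ind with
  | _ a b => simp only [mem_cut, mem_sdiff, mem_univ, true_and]; tauto

lemma cx_univ (x : Sym2 V → ℝ) : cx x univ = 0 := by
  rw [cx]
  apply sum_eq_zero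
  intro e he
  obtain ⟨a, b, rfl, ha, hb⟩ := cut_rep he
  simp at hb

variable {s t : V} {x : Sym2 V → ℝ}

lemma lpBound_singleton (hst : s ≠ t) (v : V) :
    lpBound s t {v} = 2 - (if v = s then 1 else 0) - (if v = t then 1 else 0) := by
  rw [lpBound]
  by_cases h1 : v = s
  · subst h1; simp [hst]; norm_num
  · by_cases h2 : v = t
    · subst h2; simp [h1]; norm_num
    · simp [h1, h2, singleton_inter_of_notMem]

lemma lpBound_eq (hst : s ≠ t) (U : Finset V) :
    lpBound s t U = if (s ∈ U ↔ t ∈ U) then 2 else 1 := by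
  rw [lpBound]
  by_cases h1 : s ∈ U <;> by_cases h2 : t ∈ U
  · have : U ∩ {s, t} = {s, t} := by
      ext a; simp only [mem_inter, mem_insert, mem_singleton]
      constructor
      · exact fun h => h.2
      · rintro (rfl | rfl) <;> simp [h1, h2]
    simp [this, card_pair hst, h1, h2]
  · have : U ∩ {s, t} = {s} := by
      ext a; simp only [mem_inter, mem_insert, mem_singleton]
      constructor
      · rintro ⟨h, rfl | rfl⟩
        · rfl
        · exact absurd h h2
      · rintro rfl; simp [h1]
    simp [this, h1, h2]
  · have : U ∩ {s, t} = {t} := by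
      ext a; simp only [mem_inter, mem_insert, mem_singleton]
      constructor
      · rintro ⟨h, rfl | rfl⟩
        · exact absurd h h1
        · rfl
      · rintro rfl; simp [h2]
    simp [this, h1, h2]
  · have : U ∩ {s, t} = ∅ := by
      ext a; simp only [mem_inter, mem_insert, mem_singleton, notMem_empty, iff_false]
      rintro ⟨h, rfl | rfl⟩
      · exact absurd h h1
      · exact absurd h h2
    simp [this, h1, h2]

lemma lp_cut_two (hst : s ≠ t) (hx : SubtourLP s t x) {U : Finset V} (hU : U.Nonempty)
    (hU' : U ≠ univ) (h : s ∈ U ↔ t ∈ U) : 2 ≤ cx x U := by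
  have := hx.2.2 U hU hU'
  rwa [lpBound_eq hst, if_pos h] at this

lemma lp_cut_one (hst : s ≠ t) (hx : SubtourLP s t x) {U : Finset V} (hU : U.Nonempty)
    (hU' : U ≠ univ) : 1 ≤ cx x U := by
  have := hx.2.2 U hU hU'
  rw [lpBound_eq hst] at this
  split_ifs at this
  · exact le_trans (by norm_num) this
  · exact this

lemma lp_ins (hst : s ≠ t) (hx : SubtourLP s t x) (U : Finset V) :
    2 * ins x U = 2 * #U - (if s ∈ U then 1 else 0) - (if t ∈ U then 1 else 0) - cx x U := by
  have h1 := sum_stars (subset_univ U) x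
  rw [filter_cut] at h1
  have h2 : ∀ v ∈ U, ∑ e ∈ edgesIn (univ : Finset V) with v ∈ e, x e =
      2 - (if v = s then 1 else 0) - (if v = t then 1 else 0) := by
    intro v _
    rw [← lpBound_singleton hst, ← hx.2.1 v, ← filter_cut, cut_singleton]
  rw [sum_congr rfl h2] at h1
  simp only [sum_sub_distrib, sum_const, nsmul_eq_mul, sum_ite_eq'] at h1
  simp only [ins, cx]
  linarith

lemma lp_sub (hst : s ≠ t) (hx : SubtourLP s t x) : Sub x 1 := by
  refine ⟨hx.1, fun U hU => ?_⟩
  have h1 := lp_ins hst hx U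
  have h0 : 0 ≤ cx x U := sum_nonneg fun e _ => hx.1 e
  by_cases hs : s ∈ U <;> by_cases ht : t ∈ U <;> simp only [hs, ht, if_true, if_false] at h1
  · linarith
  · have := lp_cut_one hst hx hU (by rintro rfl; simp at ht)
    linarith
  · have := lp_cut_one hst hx hU (by rintro rfl; simp at hs)
    linarith
  · have := lp_cut_two hst hx hU (by rintro rfl; simp at hs) (by simp [hs, ht])
    linarith

lemma lp_tight (hst : s ≠ t) (hx : SubtourLP s t x) : Tight x 1 univ := by
  refine ⟨⟨s, mem_univ s⟩, ?_⟩
  have h1 := lp_ins hst hx univ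
  rw [cx_univ] at h1
  simp only [mem_univ, if_true] at h1
  linarith

/-- The narrow cuts: the sides containing `s` of the `s`-`t` cuts of mass less than `2`. -/
def narrow (s t : V) (x : Sym2 V → ℝ) : Finset (Finset V) :=
  univ.filter fun L => s ∈ L ∧ t ∉ L ∧ cx x L < 2

lemma mem_narrow {L : Finset V} : L ∈ narrow s t x ↔ s ∈ L ∧ t ∉ L ∧ cx x L < 2 := by
  simp [narrow]

lemma narrow_one_le (hst : s ≠ t) (hx : SubtourLP s t x) {L : Finset V} (hL : L ∈ narrow s t x) :
    1 ≤ cx x L := by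
  rw [mem_narrow] at hL
  exact lp_cut_one hst hx ⟨s, hL.1⟩ (by rintro rfl; simp at hL)

lemma cx_posi (hx0 : ∀ e, 0 ≤ x e) (A B : Finset V) :
    cx x (A \ B) + cx x (B \ A) ≤ cx x A + cx x B := by
  rw [cx_eq, cx_eq, cx_eq, cx_eq, ← sum_add_distrib, ← sum_add_distrib]
  apply sum_le_sum
  intro e _
  have := hx0 e
  induction e using Sym2.ind with
  | _ a b =>
    simp only [mem_cut, mem_sdiff]
    by_cases h1 : a ∈ A <;> by_cases h2 : a ∈ B <;> by_cases h3 : b ∈ A <;> by_cases h4 : b ∈ B <;>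
      simp [h1, h2, h3, h4] <;> linarith

lemma cx_layer {A B : Finset V} (h : A ⊆ B) :
    cx x (B \ A) + 2 * ∑ e ∈ cutEdges A with e ∈ cutEdges B, x e = cx x A + cx x B := by
  have h0 : ∑ e ∈ cutEdges A with e ∈ cutEdges B, x e =
      ∑ e ∈ edgesIn (univ : Finset V), if e ∈ cutEdges A ∧ e ∈ cutEdges B then x e else 0 := by
    rw [← sum_filter, ← filter_filter, filter_cut]
  rw [h0, cx_eq, cx_eq, cx_eq, mul_sum, ← sum_add_distrib, ← sum_add_distrib]
  apply sum_congr rfl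
  intro e _
  induction e using Sym2.ind with
  | _ a b =>
    have ha := @h a
    have hb := @h b
    simp only [mem_cut, mem_sdiff]
    by_cases h1 : a ∈ A <;> by_cases h2 : a ∈ B <;> by_cases h3 : b ∈ A <;> by_cases h4 : b ∈ B <;>
      simp [h1, h2, h3, h4] at ha hb ⊢ <;> ring

lemma narrow_chain (hst : s ≠ t) (hx : SubtourLP s t x) {L L' : Finset V}
    (hL : L ∈ narrow s t x) (hL' : L' ∈ narrow s t x) : L ⊆ L' ∨ L' ⊆ L := by
  rw [mem_narrow] at hL hL'
  by_contra hcon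
  push Not at hcon
  have h1 := cx_posi hx.1 L L'
  have h2 := lp_cut_two hst hx (sdiff_nonempty.2 hcon.1)
    (fun h => by have := mem_univ t; rw [← h, mem_sdiff] at this; exact hL.2.1 this.1)
    (by simp [hL, hL'])
  have h3 := lp_cut_two hst hx (sdiff_nonempty.2 hcon.2)
    (fun h => by have := mem_univ t; rw [← h, mem_sdiff] at this; exact hL'.2.1 this.1)
    (by simp [hL, hL'])
  linarith

lemma tree_card {T : Finset (Sym2 V)} (hT : IsTree T) : (ins (ind T) univ) = (#(univ : Finset V) : ℝ) - 1 := by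
  rw [hT.2.2]; ring

lemma tree_cut {T : Finset (Sym2 V)} (hT : IsTree T) {U : Finset V} (hU : U.Nonempty)
    (hU' : U ≠ univ) : ∃ e ∈ T, e ∈ cutEdges U := by
  obtain ⟨e, h1, _, h2⟩ := tt_cross hT.1 hT.2 (C := U) (by simpa using hU)
    (by rw [sdiff_nonempty]; exact fun h => hU' (univ_subset_iff.1 h))
  exact ⟨e, h1, h2⟩

lemma cx_ind (T : Finset (Sym2 V)) (U : Finset V) : cx (ind T) U = #{e ∈ T | e ∈ cutEdges U} := by
  simp only [cx, ind]
  rw [← sum_filter, sum_const, nsmul_eq_mul, mul_one]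
  congr 2
  ext e; simp only [mem_filter]; tauto

end STPath

namespace STPath

/-! ### The layered decomposition -/
set_option linter.unusedSectionVars false
variable {V : Type*} [Fintype V] {s t : V} {x : Sym2 V → ℝ}

/-- An admissible pair `(T, I)`: a spanning tree `T` and an upper level set `I` of `2 - x(δ(·))`
on the narrow cuts such that `T` crosses each cut of `I` exactly once. -/
structure Good (s t : V) (x : Sym2 V → ℝ) (i : Finset (Sym2 V) × Finset (Finset V)) : Prop where
  tree : IsTree i.1
  one : ∀ L ∈ i.2, #{e ∈ i.1 | e ∈ cutEdges L} = 1
  level : ∃ ρ : ℝ, i.2 = (narrow s t x).filter fun L => ρ < 2 - cx x L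

/-- What is left of `x` after the trees of `p` are removed. -/
def res (x : Sym2 V → ℝ) (p : Finset (Sym2 V) × Finset (Finset V) → ℝ) (e : Sym2 V) : ℝ :=
  x e - ∑ i, p i * ind i.1 e

/-- A layered decomposition of total weight `r`: the trees of `p` are removed from `x`, staying in
the accordingly scaled spanning tree polytope. -/
structure Layered (s t : V) (x : Sym2 V → ℝ) (r : ℝ)
    (p : Finset (Sym2 V) × Finset (Finset V) → ℝ) : Prop where
  nonneg : ∀ i, 0 ≤ p i
  good : ∀ i, ¬ Good s t x i → p i = 0
  total : ∑ i, p i = r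
  layer : ∀ L ∈ narrow s t x, ∑ i with L ∈ i.2, p i = min (2 - cx x L) r
  sub : Sub (res x p) (1 - r)

lemma sum_res (x : Sym2 V → ℝ) (p : Finset (Sym2 V) × Finset (Finset V) → ℝ)
    (F : Finset (Sym2 V)) :
    ∑ e ∈ F, res x p e = ∑ e ∈ F, x e - ∑ i, p i * ∑ e ∈ F, ind i.1 e := by
  simp only [res, sum_sub_distrib, mul_sum]
  rw [sum_comm]

lemma sum_weight_le {r : ℝ} {p : Finset (Sym2 V) × Finset (Finset V) → ℝ}
    (hp : Layered s t x r p) {g : Finset (Sym2 V) × Finset (Finset V) → ℝ} {M : ℝ}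
    (hg : ∀ i, Good s t x i → g i ≤ M) : ∑ i, p i * g i ≤ r * M := by
  rw [← hp.total, sum_mul]
  apply sum_le_sum
  intro i _
  by_cases hi : Good s t x i
  · exact mul_le_mul_of_nonneg_left (hg i hi) (hp.nonneg i)
  · simp [hp.good i hi]

lemma sum_weight_ge {r : ℝ} {p : Finset (Sym2 V) × Finset (Finset V) → ℝ}
    (hp : Layered s t x r p) {g : Finset (Sym2 V) × Finset (Finset V) → ℝ} {M : ℝ}
    (hg : ∀ i, Good s t x i → M ≤ g i) : r * M ≤ ∑ i, p i * g i := by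
  rw [← hp.total, sum_mul]
  apply sum_le_sum
  intro i _
  by_cases hi : Good s t x i
  · exact mul_le_mul_of_nonneg_left (hg i hi) (hp.nonneg i)
  · simp [hp.good i hi]

lemma res_tight (hst : s ≠ t) (hx : SubtourLP s t x) {r : ℝ}
    {p : Finset (Sym2 V) × Finset (Finset V) → ℝ} (hp : Layered s t x r p) :
    Tight (res x p) (1 - r) univ := by
  refine ⟨⟨s, mem_univ s⟩, ?_⟩
  have h1 := sum_res x p (edgesIn univ)
  have h2 := (lp_tight hst hx).2
  have h3 := sum_weight_le hp (g := fun i => ins (ind i.1) univ) (M := #(univ : Finset V) - 1)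
    (fun i hi => (tree_card hi.tree).le)
  have h4 := sum_weight_ge hp (g := fun i => ins (ind i.1) univ) (M := #(univ : Finset V) - 1)
    (fun i hi => (tree_card hi.tree).ge)
  simp only [ins] at *
  linarith

/-- The residual vector after removing weight `r` satisfies the hypotheses of `face_lemma` for the
narrow cuts that are still to be crossed once. -/
lemma res_goodChain (hst : s ≠ t) (hx : SubtourLP s t x) {r : ℝ} (hr1 : r < 1)
    {p : Finset (Sym2 V) × Finset (Finset V) → ℝ} (hp : Layered s t x r p) :
    GoodChain (res x p) (1 - r) ((narrow s t x).filter fun L => r < 2 - cx x L) := by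
  have mem : ∀ L, L ∈ ((narrow s t x).filter fun L => r < 2 - cx x L) ↔
      L ∈ narrow s t x ∧ r < 2 - cx x L := fun L => mem_filter
  have hle : ∀ e, res x p e ≤ x e := by
    intro e
    have : 0 ≤ ∑ i, p i * ind i.1 e :=
      sum_nonneg fun i _ => mul_nonneg (hp.nonneg i) (by simp only [ind]; split_ifs <;> norm_num)
    simp only [res]; linarith
  -- a lower bound for the mass inside a layer
  have hD : ∀ D : Finset V, D.Nonempty → #D - 2 + r < ins x D →
      (1 - r) * (#D - 2) < ins (res x p) D := by
    intro D hD h1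
    have h2 := sum_res x p (edgesIn D)
    have h3 := sum_weight_le hp (g := fun i => ins (ind i.1) D) (M := #D - 1)
      (fun i hi => by have := hi.tree.1.2.le D hD; linarith)
    simp only [ins] at *
    linarith
  have hcc : ∀ L L', L ∈ narrow s t x → L' ∈ narrow s t x → r < 2 - cx x L → r < 2 - cx x L' →
      L ⊂ L' → 2 ≤ cx x (L' \ L) := by
    intro L L' hL hL' _ _ h
    rw [mem_narrow] at hL hL'
    refine lp_cut_two hst hx (sdiff_nonempty.2 h.2) ?_ (by simp [hL, hL'])
    intro h'
    have := mem_univ t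
    rw [← h', mem_sdiff] at this
    exact hL'.2.1 this.1
  refine ⟨?_, ?_, ?_, ?_, ?_, ?_⟩
  · intro L hL
    exact ⟨s, (mem_narrow.1 ((mem L).1 hL).1).1⟩
  · rintro L hL rfl
    exact (mem_narrow.1 ((mem univ).1 hL).1).2.1 (mem_univ t)
  · intro L hL L' hL'
    exact narrow_chain hst hx ((mem L).1 hL).1 ((mem L').1 hL').1
  · intro L L' hL hL' hss
    have hne := sdiff_nonempty.2 hss.2
    have hins := lp_ins hst hx (L' \ L)
    rcases hL with rfl | hL <;> rcases hL' with rfl | hL'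
    · rw [sdiff_empty, (res_tight hst hx hp).2]; linarith
    · rw [mem] at hL'
      have h1 := mem_narrow.1 hL'.1
      apply hD _ hne
      rw [sdiff_empty] at hins ⊢
      simp only [h1, if_true, if_false] at hins
      linarith [hL'.2]
    · rw [mem] at hL
      have h1 := mem_narrow.1 hL.1
      apply hD _ hne
      rw [cx_compl] at hins
      simp only [mem_sdiff, mem_univ, h1, not_true, not_false_iff, and_true, and_false, if_true,
        if_false] at hins
      linarith [hL.2]
    · rw [mem] at hL hL'
      have h1 := mem_narrow.1 hL.1
      have h2 := mem_narrow.1 hL'.1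
      apply hD _ hne
      simp only [mem_sdiff, h1, h2, not_true, not_false_iff, and_true, and_false, if_false] at hins
      have h3 := cx_layer (x := x) hss.1
      have h4 : 0 ≤ ∑ e ∈ cutEdges L with e ∈ cutEdges L', x e := sum_nonneg fun e _ => hx.1 e
      linarith [hL.2, hL'.2]
  · intro L hL
    rw [mem] at hL
    have h1 := mem_narrow.1 hL.1
    have h2 := sum_res x p (cutEdges L)
    have h3 := sum_weight_ge hp (g := fun i => cx (ind i.1) L) (M := 1) (fun i hi => by
      obtain ⟨e, he, hc⟩ := tree_cut hi.tree (U := L) ⟨s, h1.1⟩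
        (by rintro rfl; exact h1.2.1 (mem_univ t))
      have : 0 < #{e ∈ i.1 | e ∈ cutEdges L} := card_pos.2 ⟨e, mem_filter.2 ⟨he, hc⟩⟩
      rw [cx_ind]
      exact_mod_cast this)
    have h4 := hL.2
    simp only [cx] at *
    linarith
  · have key : ∀ L L', L ∈ narrow s t x → L' ∈ narrow s t x → r < 2 - cx x L →
        r < 2 - cx x L' → L ⊂ L' → ∑ e ∈ cutEdges L with e ∈ cutEdges L', x e < 1 - r := by
      intro L L' hL hL' h1 h2 h3
      have h4 := hcc L L' hL hL' h1 h2 h3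
      have h5 := cx_layer (x := x) h3.1
      linarith
    intro L hL L' hL' hne
    rw [mem] at hL hL'
    refine lt_of_le_of_lt (sum_le_sum fun e _ => hle e) ?_
    rcases narrow_chain hst hx hL.1 hL'.1 with h | h
    · exact key L L' hL.1 hL'.1 hL.2 hL'.2 (h.ssubset_of_ne hne)
    · have h1 := key L' L hL'.1 hL.1 hL'.2 hL.2 (h.ssubset_of_ne hne.symm)
      have h2 : (cutEdges L).filter (· ∈ cutEdges L') = (cutEdges L').filter (· ∈ cutEdges L) := by
        ext e; simp only [mem_filter]; tauto
      rwa [h2]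

/-- A layered decomposition of weight less than `1` can be extended, using a tree from
`face_lemma`. -/
lemma layered_extend (hst : s ≠ t) (hx : SubtourLP s t x) {r : ℝ} (hr1 : r < 1)
    {p : Finset (Sym2 V) × Finset (Finset V) → ℝ} (hp : Layered s t x r p) :
    ∃ r' p', r < r' ∧ r' ≤ 1 ∧ Layered s t x r' p' := by
  set 𝒞 := (narrow s t x).filter fun L => r < 2 - cx x L with h𝒞
  obtain ⟨T, hF, hT, hone⟩ := face_lemma hp.sub (by linarith) (res_tight hst hx hp)
    (res_goodChain hst hx hr1 hp)
  set y := res x p with hy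
  have small : ∀ a : ℝ, 0 < a → ∀ᶠ ε in nhdsWithin (0 : ℝ) (Set.Ioi 0), ε < a := by
    intro a ha
    filter_upwards [Ioo_mem_nhdsGT ha] with ε hε
    exact hε.2
  have n0 : (0 : ℝ) < #(univ : Finset V) := by exact_mod_cast card_pos.2 ⟨s, mem_univ s⟩
  have ev : ∀ᶠ ε in nhdsWithin (0 : ℝ) (Set.Ioi 0), 0 < ε ∧ ε < 1 - r ∧
      (∀ L : Finset V, L ∈ 𝒞 → ε < 2 - cx x L - r) ∧ (∀ e : Sym2 V, e ∈ T → ε < y e) ∧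
      (∀ U : Finset V, U.Nonempty → ¬ Tight y (1 - r) U →
        ε < ((1 - r) * (#U - 1) - ins y U) / #(univ : Finset V)) := by
    refine Filter.Eventually.and self_mem_nhdsWithin ?_
    refine Filter.Eventually.and (small _ (by linarith)) ?_
    refine Filter.Eventually.and ?_ (Filter.Eventually.and ?_ ?_)
    · rw [Filter.eventually_all]
      intro L
      by_cases hL : L ∈ 𝒞
      · filter_upwards [small (2 - cx x L - r) (by have := (mem_filter.1 hL).2; linarith)]
          with ε hε _ using hε
      · exact Filter.Eventually.of_forall fun ε h => absurd h hL
    · rw [Filter.eventually_all]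
      intro e
      by_cases he : e ∈ T
      · filter_upwards [small (y e) (hF.supp e he)] with ε hε _ using hε
      · exact Filter.Eventually.of_forall fun ε h => absurd h he
    · rw [Filter.eventually_all]
      intro U
      by_cases hU : U.Nonempty ∧ ¬ Tight y (1 - r) U
      · have h1 := hp.sub.le U hU.1
        have h2 : ins y U ≠ (1 - r) * (#U - 1) := fun h => hU.2 ⟨hU.1, h⟩
        have h3 := lt_of_le_of_ne h1 h2
        filter_upwards [small _ (div_pos (sub_pos.2 h3) n0)] with ε hε _ _ using hε
      · exact Filter.Eventually.of_forall fun ε h h' => absurd ⟨h, h'⟩ hU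
  obtain ⟨ε, hε0, hε1, hεL, hεe, hεU⟩ := ev.exists
  have hgood : Good s t x (T, 𝒞) := ⟨hT, hone, r, rfl⟩
  set p' : Finset (Sym2 V) × Finset (Finset V) → ℝ := fun i => p i + if i = (T, 𝒞) then ε else 0
    with hp'
  have hres : ∀ e, res x p' e = y e - ε * ind T e := by
    intro e
    simp only [hy, res, hp', add_mul, sum_add_distrib, ite_mul, zero_mul, sum_ite_eq', mem_univ,
      if_true]
    ring
  refine ⟨r + ε, p', by linarith, by linarith, ?_, ?_, ?_, ?_, ?_, ?_⟩
  · intro i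
    have := hp.nonneg i
    simp only [hp']; split_ifs <;> linarith
  · intro i hi
    have : i ≠ (T, 𝒞) := by rintro rfl; exact hi hgood
    simp [hp', this, hp.good i hi]
  · simp [hp', sum_add_distrib, hp.total]
  · intro L hL
    have h1 := hp.layer L hL
    simp only [hp', sum_add_distrib, h1, sum_ite_eq', mem_filter, mem_univ, true_and]
    by_cases hLC : L ∈ 𝒞
    · have h2 := hεL L hLC
      rw [if_pos hLC, min_eq_right (by linarith), min_eq_right (by linarith)]
    · have h2 : 2 - cx x L ≤ r := by
        by_contra h; exact hLC (mem_filter.2 ⟨hL, not_le.1 h⟩)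
      rw [if_neg hLC, min_eq_left h2, min_eq_left (by linarith), add_zero]
  · intro e
    rw [hres]
    by_cases he : e ∈ T
    · simp only [ind, he, if_true]; linarith [hεe e he]
    · simp only [ind, he, if_false]; linarith [hp.sub.nonneg e]
  · intro U hU
    have h1 : ins (res x p') U = ins y U - ε * ins (ind T) U := by
      simp only [ins, hres, sum_sub_distrib, mul_sum]
    rw [h1]
    by_cases htt : Tight y (1 - r) U
    · rw [htt.2, (hF.tt U htt).2]
      linarith
    · have h2 := hεU U hU htt
      rw [lt_div_iff₀ n0] at h2
      have h3 : 0 ≤ ins (ind T) U := sum_nonneg fun e _ => hT.1.2.nonneg e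
      have h4 : (#U : ℝ) ≤ #(univ : Finset V) := by exact_mod_cast card_le_univ U
      nlinarith

/-- The attainable weights `r` form a compact set, so `layered_extend` forces the value `1`. -/
lemma layered_exists (hst : s ≠ t) (hx : SubtourLP s t x) : ∃ p, Layered s t x 1 p := by
  set K : Set (ℝ × (Finset (Sym2 V) × Finset (Finset V) → ℝ)) :=
    {q | 0 ≤ q.1 ∧ q.1 ≤ 1 ∧ Layered s t x q.1 q.2} with hK
  have hclosed : IsClosed K := by
    have hKe : K = {q | 0 ≤ q.1 ∧ q.1 ≤ 1 ∧ (∀ i, 0 ≤ q.2 i) ∧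
        (∀ i, ¬ Good s t x i → q.2 i = 0) ∧ (∑ i, q.2 i = q.1) ∧
        (∀ L, L ∈ narrow s t x → ∑ i with L ∈ i.2, q.2 i = min (2 - cx x L) q.1) ∧
        (∀ e, 0 ≤ res x q.2 e) ∧
        (∀ U : Finset V, U.Nonempty → ins (res x q.2) U ≤ (1 - q.1) * (#U - 1))} := by
      ext q
      simp only [hK, Set.mem_ofPred_eq]
      constructor
      · rintro ⟨h1, h2, h3⟩
        exact ⟨h1, h2, h3.nonneg, h3.good, h3.total, h3.layer, h3.sub.nonneg, h3.sub.le⟩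
      · rintro ⟨h1, h2, h3, h4, h5, h6, h7, h8⟩
        exact ⟨h1, h2, h3, h4, h5, h6, h7, h8⟩
    rw [hKe]
    simp only [Set.ofPred_and, Set.ofPred_forall]
    have hc : ∀ e, Continuous fun q : ℝ × (Finset (Sym2 V) × Finset (Finset V) → ℝ) =>
        res x q.2 e := by
      intro e; simp only [res]; fun_prop
    refine (isClosed_le (by fun_prop) (by fun_prop)).inter ?_
    refine (isClosed_le (by fun_prop) (by fun_prop)).inter ?_
    refine (isClosed_iInter fun i => isClosed_le (by fun_prop) (by fun_prop)).inter ?_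
    refine (isClosed_iInter fun i => isClosed_iInter fun _ =>
      isClosed_eq (by fun_prop) (by fun_prop)).inter ?_
    refine (isClosed_eq (by fun_prop) (by fun_prop)).inter ?_
    refine (isClosed_iInter fun i => isClosed_iInter fun _ =>
      isClosed_eq (by fun_prop) (by fun_prop)).inter ?_
    refine (isClosed_iInter fun i => isClosed_le (by fun_prop) (hc i)).inter ?_
    refine isClosed_iInter fun i => isClosed_iInter fun _ => isClosed_le ?_ (by fun_prop)
    simp only [ins]
    exact continuous_finsetSum _ fun e _ => hc e
  have hcomp : IsCompact K := by
    refine IsCompact.of_isClosed_subset ((isCompact_Icc (a := (0 : ℝ)) (b := 1)).prod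
      (isCompact_univ_pi fun _ : Finset (Sym2 V) × Finset (Finset V) =>
        isCompact_Icc (a := (0 : ℝ)) (b := 1))) hclosed ?_
    rintro ⟨r, p⟩ ⟨h0, h1, hp⟩
    refine ⟨⟨h0, h1⟩, fun i _ => ⟨hp.nonneg i, ?_⟩⟩
    refine le_trans ?_ h1
    rw [← hp.total]
    exact single_le_sum (f := p) (fun i _ => hp.nonneg i) (mem_univ i)
  have hne : K.Nonempty := by
    refine ⟨(0, 0), le_refl _, zero_le_one, ⟨fun _ => le_refl _, fun _ _ => rfl, by simp, ?_, ?_⟩⟩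
    · intro L hL
      rw [min_eq_right (by have := (mem_narrow.1 hL).2.2; linarith)]
      simp
    · have : res x (0 : Finset (Sym2 V) × Finset (Finset V) → ℝ) = x := by
        ext e; simp [res]
      simpa [this] using lp_sub hst hx
  obtain ⟨⟨r, p⟩, ⟨h0, h1, hp⟩, hmax⟩ := hcomp.exists_isMaxOn hne continuous_fst.continuousOn
  rcases lt_or_eq_of_le h1 with hlt | heq
  · obtain ⟨r', p', h2, h3, h4⟩ := layered_extend hst hx hlt hp
    have h5 : r' ≤ r := hmax (a := (r', p')) ⟨h0.trans h2.le, h3, h4⟩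
    linarith
  · simp only at heq
    subst heq
    exact ⟨p, hp⟩

/-- The layered decomposition of `x` into spanning trees: the pairs `(T, I)` with
`L ∈ I` have total weight `2 - x(δ(L))`. -/
theorem layered_decomposition (hst : s ≠ t) (hx : SubtourLP s t x) :
    ∃ p : Finset (Sym2 V) × Finset (Finset V) → ℝ, (∀ i, 0 ≤ p i) ∧
      (∀ i, ¬ Good s t x i → p i = 0) ∧ ∑ i, p i = 1 ∧
      (∀ L ∈ narrow s t x, ∑ i with L ∈ i.2, p i = 2 - cx x L) ∧
      ∀ e, ¬ e.IsDiag → x e = ∑ i, p i * ind i.1 e := by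
  obtain ⟨p, hp⟩ := layered_exists hst hx
  refine ⟨p, hp.nonneg, hp.good, hp.total, ?_, ?_⟩
  · intro L hL
    rw [hp.layer L hL, min_eq_left]
    have := narrow_one_le hst hx hL
    linarith
  · intro e he
    have h1 := hp.sub.le univ ⟨s, mem_univ s⟩
    have h2 : res x p e ≤ ins (res x p) univ := by
      rw [ins]
      exact single_le_sum (f := res x p) (fun e _ => hp.sub.nonneg e) (by simp [edgesIn, he])
    have h3 := hp.sub.nonneg e
    simp only [sub_self, zero_mul] at h1
    have h4 : res x p e = 0 := by linarith
    simp only [res] at h4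
    linarith

end STPath

namespace STPath

/-! ### Paths in trees and the payment bound -/
set_option linter.unusedSectionVars false
variable {V : Type*} [Fintype V] {s t : V} {x : Sym2 V → ℝ}

/-- The handshake identity for a cut. -/
lemma deg_cut {J : Finset (Sym2 V)} (hJ : J ⊆ edgesIn univ) (U : Finset V) :
    ∑ v ∈ U, #{e ∈ J | v ∈ e} = 2 * #{e ∈ J | e ∈ edgesIn U} + #{e ∈ J | e ∈ cutEdges U} := by
  have h1 := sum_stars (subset_univ U) (ind J)
  have h2 : ∀ v ∈ U, ∑ e ∈ edgesIn (univ : Finset V) with v ∈ e, ind J e = #{e ∈ J | v ∈ e} := by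
    intro v _
    simp only [ind]
    rw [← sum_filter, sum_const, nsmul_eq_mul, mul_one]
    congr 2
    ext e
    have := @hJ e
    simp only [mem_filter]; tauto
  have h3 : ∑ e ∈ edgesIn U, ind J e = #{e ∈ J | e ∈ edgesIn U} := ins_ind J U
  have h4 := cx_ind J U
  rw [cx] at h4
  rw [sum_congr rfl h2, h3, filter_cut, h4] at h1
  exact_mod_cast h1

/-- A spanning tree contains an `s`-`t` path, as an edge set of the right parities. -/
lemma exists_stJoin {T : Finset (Sym2 V)} (hT : IsTree T) (s t : V) :
    ∃ P ⊆ T, ∀ v, Odd #{e ∈ P | v ∈ e} ↔ (v = s ↔ ¬ v = t) := by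
  set R : Finset V := univ.filter fun w => ∃ P ⊆ T, ∀ v, Odd #{e ∈ P | v ∈ e} ↔ (v = s ↔ ¬ v = w)
    with hR
  have memR : ∀ w, w ∈ R ↔ ∃ P ⊆ T, ∀ v, Odd #{e ∈ P | v ∈ e} ↔ (v = s ↔ ¬ v = w) := by
    intro w; rw [hR, mem_filter]; simp
  have hs : s ∈ R := (memR s).2 ⟨∅, by simp, by intro v; simp⟩
  suffices R = univ from (memR t).1 (this ▸ mem_univ t)
  by_contra hne
  obtain ⟨e, heT, hc⟩ := tree_cut hT ⟨s, hs⟩ hne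
  have hd := not_diag_of_cut hc
  obtain ⟨a, b, rfl, ha, hb⟩ := cut_rep hc
  apply hb
  rw [memR] at ha ⊢
  obtain ⟨P, hPT, hP⟩ := ha
  refine ⟨symmDiff P {s(a, b)}, ?_, fun v => ?_⟩
  · intro e he
    rw [mem_symmDiff, mem_singleton] at he
    rcases he with ⟨h, _⟩ | ⟨rfl, _⟩
    · exact hPT h
    · exact heT
  · have h1 : (symmDiff P {s(a, b)}).filter (v ∈ ·) =
        symmDiff (P.filter (v ∈ ·)) (({s(a, b)} : Finset (Sym2 V)).filter (v ∈ ·)) := by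
      ext e; simp only [mem_filter, mem_symmDiff]; tauto
    have h2 : Odd #(({s(a, b)} : Finset (Sym2 V)).filter (v ∈ ·)) ↔ (v = a ∨ v = b) := by
      rw [filter_singleton]
      by_cases h : v = a ∨ v = b <;> simp [h]
    have hab : a ≠ b := by simpa using hd
    have h3 := odd_card_symmDiff (P.filter (v ∈ ·)) (({s(a, b)} : Finset (Sym2 V)).filter (v ∈ ·))
    rw [hP v, h2] at h3
    have h4 : Odd #((symmDiff P {s(a, b)}).filter (v ∈ ·)) ↔
        ¬ ((v = s ↔ ¬ v = a) ↔ (v = a ∨ v = b)) := by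
      rw [h1]; convert h3
    refine Iff.trans ?_ (h4.trans ?_)
    · exact Iff.of_eq (by congr!)
    have h5 : v = a → ¬ v = b := by rintro rfl; exact hab
    have key : ∀ p q r : Prop, (q → ¬ r) → (¬ ((p ↔ ¬ q) ↔ (q ∨ r)) ↔ (p ↔ ¬ r)) := by
      intro p q r; by_cases p <;> by_cases q <;> by_cases r <;> simp_all
    exact key _ _ _ h5

/-- A set of tree edges with odd degrees exactly at `s` and `t` meets every `s`-`t` cut. -/
lemma stJoin_cut {T P : Finset (Sym2 V)} (hT : IsTree T) (hPT : P ⊆ T)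
    (hP : ∀ v, Odd #{e ∈ P | v ∈ e} ↔ (v = s ↔ ¬ v = t)) {U : Finset V} (hs : s ∈ U) (ht : t ∉ U) :
    1 ≤ #{e ∈ P | e ∈ cutEdges U} := by
  have h1 := deg_cut (hPT.trans hT.1.1) U
  have h2 : Odd (∑ v ∈ U, #{e ∈ P | v ∈ e}) := by
    rw [odd_sum_iff_odd_card_odd]
    have : U.filter (fun v => Odd #{e ∈ P | v ∈ e}) = {s} := by
      ext v
      rw [mem_filter, hP v, mem_singleton]
      constructor
      · rintro ⟨hv, h⟩
        have : v ≠ t := by rintro rfl; exact ht hv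
        tauto
      · rintro rfl
        have : v ≠ t := by rintro rfl; exact ht hs
        exact ⟨hs, by tauto⟩
    rw [this]; simp
  rw [h1] at h2
  by_contra hcon
  have : #{e ∈ P | e ∈ cutEdges U} = 0 := by omega
  rw [this] at h2
  exact (Nat.not_odd_iff_even.2 (by simp)) h2

/-- Edges avoiding all cuts of a chain inside `W` have little mass, since they lie within
layers. -/
lemma uncrossed_mass (h : Sub x 1) : ∀ n, ∀ (I : Finset (Finset V)) (W : Finset V), #I = n →
    (∀ L ∈ I, L.Nonempty ∧ L ⊂ W) → (∀ L ∈ I, ∀ L' ∈ I, L ⊆ L' ∨ L' ⊆ L) → W.Nonempty →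
    ∑ e ∈ edgesIn W, (if ∀ L ∈ I, e ∉ cutEdges L then x e else 0) ≤ #W - 1 - #I := by
  intro n
  induction n with
  | zero =>
    intro I W hI _ _ hW
    rw [card_eq_zero] at hI
    subst hI
    have := h.le W hW
    simp only [ins] at this
    simpa using this
  | succ n ih =>
    intro I W hI hL hch hW
    obtain ⟨M, hM, hmax⟩ := exists_max_image I card (card_pos.1 (by omega))
    have hMW := (hL M hM).2
    have hne := (hL M hM).1
    have hsub : ∀ L ∈ I, L ⊆ M := by
      intro L hLI
      rcases hch L hLI M hM with h1 | h1
      · exact h1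
      · exact (eq_of_subset_of_card_le h1 (hmax L hLI)).ge
    have h1 := ih (I.erase M) M (by rw [card_erase_of_mem hM]; omega)
      (fun L h => ⟨(hL L (mem_of_mem_erase h)).1,
        (hsub L (mem_of_mem_erase h)).ssubset_of_ne (ne_of_mem_erase h)⟩)
      (fun L h L' h' => hch L (mem_of_mem_erase h) L' (mem_of_mem_erase h')) hne
    have h2 := h.le (W \ M) (sdiff_nonempty.2 hMW.2)
    rw [sum_edgesIn_split hMW.1]
    have h3 : ∑ e ∈ edgesIn W with e ∈ cutEdges M,
        (if ∀ L ∈ I, e ∉ cutEdges L then x e else 0) = 0 := by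
      apply sum_eq_zero
      intro e he
      rw [if_neg]
      intro hall
      exact hall M hM (mem_filter.1 he).2
    have h4 : ∑ e ∈ edgesIn (W \ M), (if ∀ L ∈ I, e ∉ cutEdges L then x e else 0) ≤
        ins x (W \ M) := by
      apply sum_le_sum
      intro e _
      split_ifs
      · exact le_refl _
      · exact h.nonneg e
    have h5 : ∑ e ∈ edgesIn M, (if ∀ L ∈ I, e ∉ cutEdges L then x e else 0) ≤
        ∑ e ∈ edgesIn M, (if ∀ L ∈ I.erase M, e ∉ cutEdges L then x e else 0) := by
      apply sum_le_sum
      intro e _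
      by_cases h6 : ∀ L ∈ I, e ∉ cutEdges L
      · rw [if_pos h6, if_pos (fun L hL => h6 L (mem_of_mem_erase hL))]
      · rw [if_neg h6]; split_ifs
        · exact h.nonneg e
        · exact le_refl _
    have h6 : (#(W \ M) : ℝ) + #M = #W := by
      exact_mod_cast card_sdiff_add_card_eq_card hMW.1
    have h7 : (#(I.erase M) : ℝ) + 1 = #I := by
      exact_mod_cast card_erase_add_one hM
    linarith

/-- The edges crossing some cut of `I` have mass at least the number of cuts. -/
lemma crossed_mass (hst : s ≠ t) (hx : SubtourLP s t x) {I : Finset (Finset V)}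
    (hI : I ⊆ narrow s t x) :
    (#I : ℝ) ≤ ∑ e ∈ edgesIn (univ : Finset V), (if ∃ L ∈ I, e ∈ cutEdges L then x e else 0) := by
  have h1 := uncrossed_mass (lp_sub hst hx) _ I univ rfl (fun L hL => by
      have := mem_narrow.1 (hI hL)
      exact ⟨⟨s, this.1⟩, ssubset_univ_iff.2 (by rintro rfl; exact this.2.1 (mem_univ t))⟩)
    (fun L hL L' hL' => narrow_chain hst hx (hI hL) (hI hL')) ⟨s, mem_univ s⟩
  have h2 := (lp_tight hst hx).2
  have h3 : ins x univ = ∑ e ∈ edgesIn (univ : Finset V), (if ∃ L ∈ I, e ∈ cutEdges L then x e else 0)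
      + ∑ e ∈ edgesIn univ, (if ∀ L ∈ I, e ∉ cutEdges L then x e else 0) := by
    rw [ins, ← sum_add_distrib]
    apply sum_congr rfl
    intro e _
    by_cases h : ∃ L ∈ I, e ∈ cutEdges L
    · have h' : ¬ ∀ L ∈ I, e ∉ cutEdges L := by push Not; exact h
      rw [if_pos h, if_neg h', add_zero]
    · have h' : ∀ L ∈ I, e ∉ cutEdges L := by push Not at h; exact h
      rw [if_neg h, if_pos h', zero_add]
  linarith

/-- If every edge pays at least the weight of each cut of `I` it crosses, then the total payment
covers the total weight of `I`. -/
lemma payment (hst : s ≠ t) (hx : SubtourLP s t x) : ∀ n, ∀ (I : Finset (Finset V))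
    (κ : Finset V → ℝ) (g : Sym2 V → ℝ), #I = n → I ⊆ narrow s t x → (∀ L ∈ I, 0 ≤ κ L) →
    (∀ e, 0 ≤ g e) → (∀ e, ∀ L ∈ I, e ∈ cutEdges L → κ L ≤ g e) →
    ∑ L ∈ I, κ L ≤ ∑ e ∈ edgesIn (univ : Finset V), x e * g e := by
  intro n
  induction n with
  | zero =>
    intro I κ g hI _ _ hg _
    rw [card_eq_zero] at hI
    subst hI
    rw [sum_empty]
    exact sum_nonneg fun e _ => mul_nonneg (hx.1 e) (hg e)
  | succ n ih =>
    intro I κ g hI hIn hκ hg hgk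
    obtain ⟨M, hM, hmin⟩ := exists_min_image I κ (card_pos.1 (by omega))
    have h1 := ih (I.erase M) (fun L => κ L - κ M)
      (fun e => g e - if ∃ L ∈ I, e ∈ cutEdges L then κ M else 0)
      (by rw [card_erase_of_mem hM]; omega) ((erase_subset _ _).trans hIn)
      (fun L hL => sub_nonneg.2 (hmin L (mem_of_mem_erase hL)))
      (fun e => by
        split_ifs with h
        · obtain ⟨L, hL, he⟩ := h
          linarith [hmin L hL, hgk e L hL he]
        · linarith [hg e])
      (fun e L hL he => by
        rw [if_pos ⟨L, mem_of_mem_erase hL, he⟩]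
        linarith [hgk e L (mem_of_mem_erase hL) he])
    have h2 := crossed_mass hst hx hIn
    have h3 : ∑ e ∈ edgesIn (univ : Finset V),
        x e * (g e - if ∃ L ∈ I, e ∈ cutEdges L then κ M else 0) =
        ∑ e ∈ edgesIn (univ : Finset V), x e * g e - κ M *
          ∑ e ∈ edgesIn (univ : Finset V), (if ∃ L ∈ I, e ∈ cutEdges L then x e else 0) := by
      rw [mul_sum, ← sum_sub_distrib]
      apply sum_congr rfl
      intro e _
      split_ifs <;> ring
    rw [h3] at h1
    have h4 : ∑ L ∈ I.erase M, (κ L - κ M) = ∑ L ∈ I, κ L - κ M * #I := by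
      rw [← add_sum_erase I κ hM, sum_sub_distrib, sum_const, nsmul_eq_mul]
      have : (#(I.erase M) : ℝ) + 1 = #I := by exact_mod_cast card_erase_add_one hM
      rw [← this]; ring
    rw [h4] at h1
    have h5 := mul_le_mul_of_nonneg_left h2 (hκ M hM)
    linarith

end STPath

namespace STPath

/-! ### Tours from a tree with cut edges removed -/
set_option linter.unusedSectionVars false
variable {V : Type*} [Fintype V] {s t : V} {x : Sym2 V → ℝ}

/-- A multiset of edges that is connected on `V` and whose odd vertices are exactly
`s` and `t`. -/
structure Valid (s t : V) (M : Multiset (Sym2 V)) : Prop where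
  diag : ∀ e ∈ M, ¬ e.IsDiag
  par : ∀ v, Even (M.countP (v ∈ ·) + (if v = s then 1 else 0) + (if v = t then 1 else 0))
  conn : ∀ U : Finset V, U.Nonempty → U ≠ univ → ∃ e ∈ M, e ∈ cutEdges U

/-- A spanning tree `T` together with a chain `I` of `s`-`t` cuts, each crossed exactly once
by `T`. -/
structure Comb (s t : V) (T : Finset (Sym2 V)) (I : Finset (Finset V)) : Prop where
  tree : IsTree T
  hs : ∀ L ∈ I, s ∈ L
  ht : ∀ L ∈ I, t ∉ L
  chain : ∀ L ∈ I, ∀ L' ∈ I, L ⊆ L' ∨ L' ⊆ L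
  one : ∀ L ∈ I, #{e ∈ T | e ∈ cutEdges L} = 1

lemma Comb.unique {T : Finset (Sym2 V)} {I : Finset (Finset V)} (h : Comb s t T I)
    {L : Finset V} (hL : L ∈ I) {e f : Sym2 V} (he : e ∈ T) (hf : f ∈ T)
    (h1 : e ∈ cutEdges L) (h2 : f ∈ cutEdges L) : e = f :=
  card_le_one.1 (h.one L hL).le _ (mem_filter.2 ⟨he, h1⟩) _ (mem_filter.2 ⟨hf, h2⟩)

/-- A tree edge crosses at most one cut of the chain: otherwise the layer between two such
cuts would be disconnected from the rest of the tree. -/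
lemma Comb.cross_unique {T : Finset (Sym2 V)} {I : Finset (Finset V)} (h : Comb s t T I)
    {e : Sym2 V} (he : e ∈ T) {L L' : Finset V} (hL : L ∈ I) (hL' : L' ∈ I)
    (h1 : e ∈ cutEdges L) (h2 : e ∈ cutEdges L') : L = L' := by
  have main : ∀ L ∈ I, ∀ L' ∈ I, e ∈ cutEdges L → e ∈ cutEdges L' → L ⊆ L' → L' ⊆ L := by
    intro L hL L' hL' h1 h2 hsub
    by_contra hn
    obtain ⟨f, hf, hfc⟩ := tree_cut h.tree (sdiff_nonempty.2 hn) (by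
      intro hu
      have : s ∈ L' \ L := hu ▸ mem_univ s
      exact (mem_sdiff.1 this).2 (h.hs L hL))
    have hfe : f = e := by
      have : f ∈ cutEdges L ∨ f ∈ cutEdges L' := by
        induction f using Sym2.ind with
        | _ a b =>
          simp only [mem_cut, mem_sdiff] at hfc ⊢
          tauto
      rcases this with h3 | h3
      · exact h.unique hL hf he h3 h1
      · exact h.unique hL' hf he h3 h2
    subst hfe
    induction f using Sym2.ind with
    | _ a b =>
      have ha := @hsub a
      have hb := @hsub b
      simp only [mem_cut, mem_sdiff] at hfc h1 h2
      tauto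
  rcases h.chain L hL L' hL' with h3 | h3
  · exact h3.antisymm (main L hL L' hL' h1 h2 h3)
  · exact (main L' hL' L hL h2 h1 h3).antisymm h3

/-- The cost of the edges of `T` in the cut of `L`. -/
def kap (c : Sym2 V → ℝ) (T : Finset (Sym2 V)) (L : Finset V) : ℝ :=
  ∑ e ∈ T with e ∈ cutEdges L, c e

lemma Comb.sum_kap {T : Finset (Sym2 V)} {I : Finset (Finset V)} (h : Comb s t T I)
    (c : Sym2 V → ℝ) {I' : Finset (Finset V)} (hI' : I' ⊆ I) :
    ∑ e ∈ T with ∃ L ∈ I', e ∈ cutEdges L, c e = ∑ L ∈ I', kap c T L := by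
  have h1 : T.filter (fun e => ∃ L ∈ I', e ∈ cutEdges L) =
      I'.biUnion fun L => T.filter (· ∈ cutEdges L) := by
    ext e; simp only [mem_filter, mem_biUnion]; tauto
  rw [h1, sum_biUnion]
  · rfl
  · intro L hL L' hL' hne
    rw [Function.onFun, disjoint_left]
    intro e he he'
    rw [mem_filter] at he he'
    exact hne (h.cross_unique he.1 (hI' hL) (hI' hL') he.2 he'.2)

/-- The symmetric difference of a family of cuts is a cut. -/
lemma parity_cut (A : Finset (Finset V)) (U : Finset V) :
    ∃ W : Finset V, ∀ e : Sym2 V,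
      e ∈ cutEdges W ↔ ¬ (Odd #{L ∈ A | e ∈ cutEdges L} ↔ e ∈ cutEdges U) := by
  refine ⟨univ.filter fun v => ¬ (Odd #{L ∈ A | v ∈ L} ↔ v ∈ U), fun e => ?_⟩
  induction e using Sym2.ind with
  | _ a b =>
    have h1 : A.filter (fun L => s(a, b) ∈ cutEdges L) =
        symmDiff (A.filter (a ∈ ·)) (A.filter (b ∈ ·)) := by
      ext L; simp only [mem_filter, mem_symmDiff, mem_cut]; tauto
    have h2 : Odd #{L ∈ A | s(a, b) ∈ cutEdges L} ↔
        ¬ (Odd #{L ∈ A | a ∈ L} ↔ Odd #{L ∈ A | b ∈ L}) := by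
      rw [h1]
      convert odd_card_symmDiff (A.filter (a ∈ ·)) (A.filter (b ∈ ·))
    rw [h2, mem_cut, mem_cut]
    simp only [mem_filter, mem_univ, true_and]
    generalize Odd #{L ∈ A | a ∈ L} = p
    generalize Odd #{L ∈ A | b ∈ L} = q
    by_cases p <;> by_cases q <;> by_cases a ∈ U <;> by_cases b ∈ U <;> simp_all

/-- The parity of a cut with respect to the vertices whose degree in `F` has to be corrected. -/
lemma odd_inter {F : Finset (Sym2 V)} (hF : F ⊆ edgesIn univ) (s t : V) (U : Finset V) :
    Odd #(U ∩ univ.filter fun v =>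
      Odd (#{e ∈ F | v ∈ e} + (if v = s then 1 else 0) + (if v = t then 1 else 0))) ↔
    Odd (#{e ∈ F | e ∈ cutEdges U} + (if s ∈ U then 1 else 0) + (if t ∈ U then 1 else 0)) := by
  have h1 : U ∩ univ.filter (fun v =>
      Odd (#{e ∈ F | v ∈ e} + (if v = s then 1 else 0) + (if v = t then 1 else 0))) =
      U.filter (fun v =>
      Odd (#{e ∈ F | v ∈ e} + (if v = s then 1 else 0) + (if v = t then 1 else 0))) := by
    ext v; simp
  rw [h1, ← odd_sum_iff_odd_card_odd, sum_add_distrib, sum_add_distrib, deg_cut hF,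
    sum_ite_eq', sum_ite_eq']
  simp only [Nat.odd_iff]
  omega

lemma countP_val (S : Finset (Sym2 V)) (v : V) : S.val.countP (v ∈ ·) = #{e ∈ S | v ∈ e} := by
  rw [Multiset.countP_eq_card_filter]; rfl

end STPath

namespace STPath
set_option linter.unusedSectionVars false
variable {V : Type*} [Fintype V] {s t : V} {x : Sym2 V → ℝ}

lemma kap_nonneg {c : Sym2 V → ℝ} (hc : ∀ e : Sym2 V, ¬ e.IsDiag → 0 < c e) (T : Finset (Sym2 V))
    (L : Finset V) : 0 ≤ kap c T L :=
  sum_nonneg fun e he => (hc e (not_diag_of_cut (mem_filter.1 he).2)).le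

/-- The edges of `T` that have to be doubled when the join `J` is added: those in cuts that are
not the largest cut of any edge of `J`. -/
def dbl (T J : Finset (Sym2 V)) (I : Finset (Finset V)) (m : Sym2 V → Finset V) :
    Finset (Sym2 V) :=
  T.filter fun e => ∃ L ∈ I \ J.image m, e ∈ cutEdges L

/-- Connectivity of the tour. If no edge crossed `U`, the tree would cross `U` only in cuts of
`I`; the symmetric difference of `U` with these cuts is crossed by no tree edge but by the edge
of `J` assigned to the smallest of them. -/
lemma Comb.conn {T : Finset (Sym2 V)} {I : Finset (Finset V)} (h : Comb s t T I)
    {J : Finset (Sym2 V)} {R : Type*} [LinearOrder R]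
    (r : Finset V → R) (hr : Set.InjOn r I)
    (m : Sym2 V → Finset V)
    (hm : ∀ e, ∀ L ∈ I, e ∈ cutEdges L → r L ≤ r (m e))
    (hm' : ∀ e ∈ J, m e ∈ I → e ∈ cutEdges (m e))
    {U : Finset V} (hU : U.Nonempty) (hU' : U ≠ univ) :
    ∃ e, (e ∈ T.filter (fun e => ∀ L ∈ I, e ∉ cutEdges L) ∨ e ∈ J ∨ e ∈ dbl T J I m) ∧
      e ∈ cutEdges U := by
  by_contra hcon
  push Not at hcon
  set A := I.filter fun L => ∃ e ∈ T, e ∈ cutEdges L ∧ e ∈ cutEdges U with hA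
  have memA : ∀ L, L ∈ A ↔ L ∈ I ∧ ∃ e ∈ T, e ∈ cutEdges L ∧ e ∈ cutEdges U := by
    intro L; rw [hA, mem_filter]
  have hT : ∀ e ∈ T, e ∈ cutEdges U → ∃ L ∈ A, e ∈ cutEdges L := by
    intro e he heU
    by_contra hn
    push Not at hn
    refine hcon e (Or.inl (mem_filter.2 ⟨he, fun L hL hc => ?_⟩)) heU
    exact hn L ((memA L).2 ⟨hL, e, he, hc, heU⟩) hc
  obtain ⟨e0, he0, hc0⟩ := tree_cut h.tree hU hU'
  obtain ⟨L1, hL1, _⟩ := hT e0 he0 hc0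
  obtain ⟨L0, hL0, hmin⟩ := exists_min_image A r ⟨L1, hL1⟩
  obtain ⟨hL0I, f, hfT, hfL, hfU⟩ := (memA L0).1 hL0
  -- `L0` is not doubled, so it is the largest cut of some edge of `J`
  obtain ⟨e, heJ, hem⟩ : ∃ e ∈ J, m e = L0 := by
    by_contra hn
    refine hcon f (Or.inr (Or.inr (mem_filter.2 ⟨hfT, L0, ?_, hfL⟩))) hfU
    rw [mem_sdiff, mem_image]
    exact ⟨hL0I, hn⟩
  obtain ⟨W, hW⟩ := parity_cut A U
  have hW1 : ∀ g ∈ T, g ∉ cutEdges W := by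
    intro g hg
    rw [hW, not_not]
    constructor
    · intro ho
      obtain ⟨L, hL⟩ := card_pos.1 ho.pos
      rw [mem_filter] at hL
      obtain ⟨hLI, g', hg', h1, h2⟩ := (memA L).1 hL.1
      rwa [h.unique hLI hg hg' hL.2 h1]
    · intro hgU
      obtain ⟨L, hL, hc⟩ := hT g hg hgU
      have : A.filter (fun L => g ∈ cutEdges L) = {L} := by
        ext L'
        rw [mem_filter, mem_singleton]
        constructor
        · rintro ⟨h1, h2⟩
          exact h.cross_unique hg ((memA _).1 h1).1 ((memA _).1 hL).1 h2 hc
        · rintro rfl; exact ⟨hL, hc⟩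
      rw [this]; simp
  have hW2 : e ∈ cutEdges W := by
    rw [hW]
    have : A.filter (fun L => e ∈ cutEdges L) = {L0} := by
      ext L'
      rw [mem_filter, mem_singleton]
      constructor
      · rintro ⟨h1, h2⟩
        have hI := ((memA _).1 h1).1
        exact hr hI hL0I (le_antisymm (hem ▸ hm e L' hI h2) (hmin L' h1))
      · rintro rfl; exact ⟨hL0, hem ▸ hm' e heJ (hem ▸ hL0I)⟩
    rw [this]
    have := hcon e (Or.inr (Or.inl heJ))
    simp [this]
  obtain ⟨a, b, rfl, ha, hb⟩ := cut_rep hW2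
  obtain ⟨g, hg, hgW⟩ := tree_cut h.tree ⟨a, ha⟩ (by rintro rfl; simp at hb)
  exact hW1 g hg hgW

/-- Every edge crossing the chain gets a largest cut it crosses, with respect to a linear order
of `I` that refines the order by `k`. -/
lemma exists_largest {I : Finset (Finset V)} (hI : ∀ L ∈ I, L.Nonempty)
    (hch : ∀ L ∈ I, ∀ L' ∈ I, L ⊆ L' ∨ L' ⊆ L) (k : Finset V → ℝ) :
    ∃ r : Finset V → ℝ ×ₗ ℕ, Set.InjOn r I ∧ (∀ L L', r L ≤ r L' → k L ≤ k L') ∧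
    ∃ m : Sym2 V → Finset V, (∀ e, ∀ L ∈ I, e ∈ cutEdges L → r L ≤ r (m e)) ∧
      (∀ e, m e ∈ I → e ∈ cutEdges (m e)) ∧
      ∀ e, (∃ L ∈ I, e ∈ cutEdges L) → m e ∈ I := by
  refine ⟨fun L => toLex (k L, #L), ?_, ?_, ?_⟩
  · intro L hL L' hL' h
    have h1 : #L = #L' := (Prod.ext_iff.1 (toLex.injective h)).2
    rcases hch L hL L' hL' with h2 | h2
    · exact eq_of_subset_of_card_le h2 h1.ge
    · exact (eq_of_subset_of_card_le h2 h1.le).symm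
  · intro L L' h
    rcases Prod.Lex.le_iff.1 h with h1 | h1
    · exact h1.le
    · exact h1.1.le
  · have : ∀ e : Sym2 V, ∃ M : Finset V,
        (∀ L ∈ I, e ∈ cutEdges L → toLex (k L, #L) ≤ toLex (k M, #M)) ∧
        (M ∈ I → e ∈ cutEdges M) ∧ ((∃ L ∈ I, e ∈ cutEdges L) → M ∈ I) := by
      intro e
      by_cases he : ∃ L ∈ I, e ∈ cutEdges L
      · obtain ⟨L, hL, hc⟩ := he
        obtain ⟨M, hM, hmax⟩ := exists_max_image (I.filter fun L => e ∈ cutEdges L)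
          (fun L => toLex (k L, #L)) ⟨L, mem_filter.2 ⟨hL, hc⟩⟩
        rw [mem_filter] at hM
        exact ⟨M, fun L hL hc => hmax L (mem_filter.2 ⟨hL, hc⟩), fun _ => hM.2, fun _ => hM.1⟩
      · refine ⟨∅, fun L hL hc => absurd ⟨L, hL, hc⟩ he, fun h => ?_, fun h => absurd h he⟩
        exact absurd (hI ∅ h) not_nonempty_empty
    choose m hm using this
    exact ⟨m, fun e => (hm e).1, fun e => (hm e).2.1, fun e => (hm e).2.2⟩

/-- The tour built from a tree with the edges in the cuts `I` removed: a join that pays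
`2 * h e` extra per edge covers the cost of reconnecting. -/
lemma Comb.tour {T : Finset (Sym2 V)} {I : Finset (Finset V)} (hC : Comb s t T I)
    {c : Sym2 V → ℝ} (hc : ∀ e : Sym2 V, ¬ e.IsDiag → 0 < c e) :
    ∃ h g : Sym2 V → ℝ, (∀ e, 0 ≤ g e) ∧
      (∀ e, (∀ L ∈ I, ∀ L' ∈ I, e ∈ cutEdges L → e ∈ cutEdges L' → L = L') → h e = 0) ∧
      (∀ e, ∀ L ∈ I, e ∈ cutEdges L → kap c T L ≤ g e) ∧
      (∀ e, h e + g e = ∑ L ∈ I with e ∈ cutEdges L, kap c T L) ∧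
      ∀ y : Sym2 V → ℝ, (∀ e, 0 ≤ y e) →
        (∀ U : Finset V, U.Nonempty → U ≠ univ → 1 ≤ ∑ e ∈ cutEdges U, y e) →
        ∃ M, Valid s t M ∧ (M.map c).sum ≤ ∑ e ∈ T, c e - ∑ L ∈ I, kap c T L +
          ∑ e ∈ edgesIn univ, (c e + 2 * h e) * y e := by
  have hk := kap_nonneg hc T
  obtain ⟨r, hr, hrk, m, hm1, hm2, hm3⟩ :=
    exists_largest (fun L hL => ⟨s, hC.hs L hL⟩) hC.chain (kap c T)
  set h : Sym2 V → ℝ := fun e => ∑ L ∈ I with e ∈ cutEdges L ∧ L ≠ m e, kap c T L with hh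
  set g : Sym2 V → ℝ := fun e => if ∃ L ∈ I, e ∈ cutEdges L then kap c T (m e) else 0 with hg
  have h0 : ∀ e, 0 ≤ h e := fun e => sum_nonneg fun L _ => hk L
  refine ⟨h, g, ?_, ?_, ?_, ?_, ?_⟩
  · intro e; simp only [hg]; split_ifs
    · exact hk _
    · exact le_rfl
  · intro e he
    apply sum_eq_zero
    intro L hL
    rw [mem_filter] at hL
    exfalso
    have h1 := hm3 e ⟨L, hL.1, hL.2.1⟩
    exact hL.2.2 (he L hL.1 _ h1 hL.2.1 (hm2 e h1))
  · intro e L hL he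
    simp only [hg]
    rw [if_pos ⟨L, hL, he⟩]
    exact hrk _ _ (hm1 e L hL he)
  · intro e
    by_cases he : ∃ L ∈ I, e ∈ cutEdges L
    · have h1 := hm3 e he
      simp only [hg, hh]
      have h2 := sum_erase_add (a := m e) (I.filter fun L => e ∈ cutEdges L) (kap c T)
        (mem_filter.2 ⟨h1, hm2 e h1⟩)
      rw [if_pos he, ← h2]
      congr 1
      apply sum_congr _ fun _ _ => rfl
      ext L; simp only [mem_filter, mem_erase]; tauto
    · simp only [hg, hh]
      rw [if_neg he, add_zero, sum_eq_zero, sum_eq_zero]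
      · intro L hL; exact absurd ⟨L, (mem_filter.1 hL).1, (mem_filter.1 hL).2⟩ he
      · intro L hL; exact absurd ⟨L, (mem_filter.1 hL).1, (mem_filter.1 hL).2.1⟩ he
  · intro y hy0 hy
    set F := T.filter (fun e => ∀ L ∈ I, e ∉ cutEdges L) with hF
    have hTe : T ⊆ edgesIn univ := hC.tree.1.1
    have hFe : F ⊆ edgesIn univ := (filter_subset _ _).trans hTe
    set O : Finset V := univ.filter fun v =>
      Odd (#{e ∈ F | v ∈ e} + (if v = s then 1 else 0) + (if v = t then 1 else 0)) with hO
    have hOU := odd_inter hFe s t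
    have hOe : Even #O := by
      have h1 := hOU univ
      rw [univ_inter] at h1
      rw [← Nat.not_odd_iff_even, h1]
      have : F.filter (fun e => e ∈ cutEdges (univ : Finset V)) = ∅ := by
        apply filter_eq_empty_iff.2
        intro e _ he
        obtain ⟨a, b, rfl, ha, hb⟩ := cut_rep he
        simp at hb
      rw [this]; simp
    obtain ⟨J, hJ, hJc⟩ := joinThm _ univ rfl O (subset_univ _) hOe (fun e => c e + 2 * h e)
      (fun e he => by have := hc e he; have := h0 e; linarith) y ⟨hy0, fun U _ hodd => by
        rw [filter_cut]
        refine hy U ?_ ?_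
        · rw [nonempty_iff_ne_empty]; rintro rfl; simp at hodd
        · rintro rfl
          rw [univ_inter] at hodd
          exact Nat.not_odd_iff_even.2 hOe hodd⟩
    set D := dbl T J I m with hD
    have hDT : D ⊆ T := filter_subset _ _
    refine ⟨F.val + J.val + 2 • D.val, ⟨?_, ?_, ?_⟩, ?_⟩
    · have hnd : ∀ e ∈ edgesIn (univ : Finset V), ¬ e.IsDiag := fun e he => (mem_filter.1 he).2
      intro e he
      simp only [Multiset.mem_add, two_nsmul, mem_val] at he
      apply hnd
      rcases he with (he | he) | (he | he)
      · exact hFe he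
      · exact hJ.1 he
      · exact hTe (hDT he)
      · exact hTe (hDT he)
    · intro v
      rw [two_nsmul, Multiset.countP_add, Multiset.countP_add, Multiset.countP_add, countP_val,
        countP_val, countP_val]
      have h1 := hJ.2 v
      rw [hO, mem_filter] at h1
      simp only [mem_univ, true_and, Nat.odd_iff] at h1
      rw [Nat.even_iff]
      omega
    · intro U hU hU'
      obtain ⟨e, he, heU⟩ := hC.conn (J := J) r hr m hm1 (fun e _ => hm2 e) hU hU'
      refine ⟨e, ?_, heU⟩
      simp only [Multiset.mem_add, two_nsmul, mem_val]
      tauto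
    · have e1 : ((F.val + J.val + 2 • D.val).map c).sum =
          ∑ e ∈ F, c e + ∑ e ∈ J, c e + 2 * ∑ e ∈ D, c e := by
        rw [two_nsmul, Multiset.map_add, Multiset.map_add, Multiset.map_add, Multiset.sum_add,
          Multiset.sum_add, Multiset.sum_add]
        change ∑ e ∈ F, c e + ∑ e ∈ J, c e + (∑ e ∈ D, c e + ∑ e ∈ D, c e) = _
        ring
      have e2 : ∑ e ∈ F, c e + ∑ L ∈ I, kap c T L = ∑ e ∈ T, c e := by
        rw [← hC.sum_kap c subset_rfl,
          ← sum_filter_not_add_sum_filter T (fun e => ∃ L ∈ I, e ∈ cutEdges L)]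
        congr 1
        apply sum_congr _ fun _ _ => rfl
        ext e; simp only [hF, mem_filter]; push Not; rfl
      have e3 : ∑ e ∈ D, c e = ∑ L ∈ I \ J.image m, kap c T L := hC.sum_kap c sdiff_subset
      have e4 : ∑ L ∈ I \ J.image m, kap c T L ≤ ∑ e ∈ J, h e := by
        simp only [hh, sum_filter]
        rw [sum_comm]
        calc ∑ L ∈ I \ J.image m, kap c T L ≤ ∑ L ∈ I \ J.image m,
              ∑ e ∈ J, (if e ∈ cutEdges L ∧ L ≠ m e then kap c T L else 0) := by
              apply sum_le_sum
              intro L hL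
              rw [mem_sdiff, mem_image] at hL
              have hLI := hL.1
              -- removing the cut edges leaves an odd number of odd vertices on each side of `L`
              have hodd : Odd #(L ∩ O) := by
                rw [hO, hOU, if_pos (hC.hs L hLI), if_neg (hC.ht L hLI)]
                have : F.filter (fun e => e ∈ cutEdges L) = ∅ := by
                  apply filter_eq_empty_iff.2
                  intro e he
                  exact (mem_filter.1 he).2 L hLI
                rw [this]; simp
              have h1 := deg_cut hJ.1 L
              have h2 : Odd (∑ v ∈ L, #{e ∈ J | v ∈ e}) := by
                rw [odd_sum_iff_odd_card_odd]
                convert hodd using 2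
                ext v; rw [mem_filter, mem_inter, hJ.2 v]
              rw [h1] at h2
              have h3 : 0 < #{e ∈ J | e ∈ cutEdges L} := by
                rw [Nat.odd_iff] at h2; omega
              obtain ⟨e, he⟩ := card_pos.1 h3
              rw [mem_filter] at he
              have h4 := single_le_sum (f := fun e =>
                if e ∈ cutEdges L ∧ L ≠ m e then kap c T L else 0) (s := J)
                (fun e _ => by split_ifs; exacts [hk L, le_rfl]) he.1
              have h5 : L ≠ m e := fun h => hL.2 ⟨e, he.1, h.symm⟩
              simp only [he.2, h5, ne_eq, not_false_eq_true, and_self, if_true] at h4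
              exact h4
          _ ≤ _ := by
              apply sum_le_sum_of_subset_of_nonneg sdiff_subset
              intro L _ _
              exact sum_nonneg fun e _ => by split_ifs; exacts [hk L, le_rfl]
      rw [e1, e3]
      simp only [sum_add_distrib, ← mul_sum] at hJc
      linarith

end STPath

namespace STPath

/-! ### The fractional join -/
set_option linter.unusedSectionVars false
variable {V : Type*} [Fintype V] {s t : V} {x : Sym2 V → ℝ}

/-- A convex combination `p` of spanning trees with level sets of narrow cuts, as provided by
`layered_decomposition`. -/
structure Decomp (s t : V) (x : Sym2 V → ℝ) (p : Finset (Sym2 V) × Finset (Finset V) → ℝ) :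
    Prop where
  nonneg : ∀ i, 0 ≤ p i
  good : ∀ i, ¬ Good s t x i → p i = 0
  total : ∑ i, p i = 1
  mass : ∀ L ∈ narrow s t x, ∑ i with L ∈ i.2, p i = 2 - cx x L
  edge : ∀ e : Sym2 V, ¬ e.IsDiag → x e = ∑ i, p i * ind i.1 e

lemma Good.sub {i : Finset (Sym2 V) × Finset (Finset V)} (h : Good s t x i) :
    i.2 ⊆ narrow s t x := by
  obtain ⟨ρ, hρ⟩ := h.level
  rw [hρ]; exact filter_subset _ _

lemma Good.comb (hst : s ≠ t) (hx : SubtourLP s t x)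
    {i : Finset (Sym2 V) × Finset (Finset V)} (h : Good s t x i) : Comb s t i.1 i.2 where
  tree := h.tree
  hs _ hL := (mem_narrow.1 (h.sub hL)).1
  ht _ hL := (mem_narrow.1 (h.sub hL)).2.1
  chain _ hL _ hL' := narrow_chain hst hx (h.sub hL) (h.sub hL')
  one := h.one

/-- Level sets are nested. -/
lemma Good.nested {i j : Finset (Sym2 V) × Finset (Finset V)} (hi : Good s t x i)
    (hj : Good s t x j) {L : Finset V} (hL : L ∈ j.2) (hL' : L ∉ i.2) : i.2 ⊆ j.2 := by
  have hLn := hj.sub hL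
  obtain ⟨ρ, hρ⟩ := hi.level
  obtain ⟨σ, hσ⟩ := hj.level
  rw [hρ, mem_filter] at hL'
  rw [hσ, mem_filter] at hL
  rw [hρ, hσ]
  intro M hM
  rw [mem_filter] at hM ⊢
  have : ¬ ρ < 2 - cx x L := fun h => hL' ⟨hLn, h⟩
  exact ⟨hM.1, by linarith [hL.2, hM.2]⟩

/-- The amount missing in the narrow cut `L` after taking half of `x` and a sixteenth of an
`s`-`t` path. -/
def eta (x : Sym2 V → ℝ) (L : Finset V) : ℝ := max ((2 - cx x L) / 2 - 1 / 16) 0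

/-- The mass of the unique tree edges in the cut of `L`, over all trees whose level set
contains `L`. -/
def vv (p : Finset (Sym2 V) × Finset (Finset V) → ℝ) (L : Finset V) (e : Sym2 V) : ℝ :=
  ∑ i with L ∈ i.2, p i * ind (i.1.filter (· ∈ cutEdges L)) e

/-- The cost of `vv p L`. -/
def KK (p : Finset (Sym2 V) × Finset (Finset V) → ℝ) (c : Sym2 V → ℝ) (L : Finset V) : ℝ :=
  ∑ i with L ∈ i.2, p i * kap c i.1 L

lemma eta_nonneg (L : Finset V) : 0 ≤ eta x L := le_max_right _ _

lemma ind_nonneg' (T : Finset (Sym2 V)) (e : Sym2 V) : 0 ≤ ind T e := by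
  rw [ind]; split_ifs <;> norm_num

lemma sum_ind_cut (T : Finset (Sym2 V)) (L : Finset V) :
    ∑ e ∈ cutEdges L, ind (T.filter (· ∈ cutEdges L)) e = #{e ∈ T | e ∈ cutEdges L} := by
  have := cx_ind (T.filter (· ∈ cutEdges L)) L
  rw [cx, filter_filter] at this
  simpa using this

/-- The fractional join used for the tree `T` with cuts `I`. -/
def frac (s t : V) (x : Sym2 V → ℝ) (p : Finset (Sym2 V) × Finset (Finset V) → ℝ)
    (T P : Finset (Sym2 V)) (I : Finset (Finset V)) (e : Sym2 V) : ℝ :=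
  x e / 2 + 1 / 16 * ind P e + ∑ L ∈ I, eta x L * ind (T.filter (· ∈ cutEdges L)) e +
    ∑ L ∈ narrow s t x \ I, eta x L / (2 - cx x L) * vv p L e

lemma vv_nonneg {p : Finset (Sym2 V) × Finset (Finset V) → ℝ} (hp : ∀ i, 0 ≤ p i) (L : Finset V)
    (e : Sym2 V) : 0 ≤ vv p L e :=
  sum_nonneg fun i _ => mul_nonneg (hp i) (ind_nonneg' _ _)

lemma cut_compl (U : Finset V) : cutEdges (univ \ U) = cutEdges U := by
  ext e
  induction e using Sym2.ind with
  | _ a b => simp only [mem_cut, mem_sdiff, mem_univ, true_and]; tauto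

section
variable {p : Finset (Sym2 V) × Finset (Finset V) → ℝ} {T P : Finset (Sym2 V)}
  {I : Finset (Finset V)}

lemma frac_parts (D : Decomp s t x p) (T P : Finset (Sym2 V))
    (I : Finset (Finset V)) (e : Sym2 V) :
    0 ≤ ind P e ∧ 0 ≤ ∑ L ∈ I, eta x L * ind (T.filter (· ∈ cutEdges L)) e ∧
    0 ≤ ∑ L ∈ narrow s t x \ I, eta x L / (2 - cx x L) * vv p L e := by
  refine ⟨ind_nonneg' _ _, sum_nonneg fun L _ => mul_nonneg (eta_nonneg L) (ind_nonneg' _ _),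
    sum_nonneg fun L hL => mul_nonneg (div_nonneg (eta_nonneg L) ?_) (vv_nonneg D.nonneg _ _)⟩
  have := (mem_narrow.1 (mem_sdiff.1 hL).1).2.2
  linarith

lemma vv_cut (D : Decomp s t x p) {L : Finset V} (hL : L ∈ narrow s t x) :
    ∑ e ∈ cutEdges L, vv p L e = 2 - cx x L := by
  rw [← D.mass L hL]
  simp only [vv]
  rw [sum_comm]
  apply sum_congr rfl
  intro i hi
  rw [← mul_sum, sum_ind_cut]
  by_cases hg : Good s t x i
  · rw [hg.one L (mem_filter.1 hi).2]; simp
  · rw [D.good i hg]; simp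

lemma frac_narrow (D : Decomp s t x p) (hT : IsTree T) (hPT : P ⊆ T)
    (hP : ∀ v, Odd #{e ∈ P | v ∈ e} ↔ (v = s ↔ ¬ v = t))
    (hone : ∀ L ∈ I, #{e ∈ T | e ∈ cutEdges L} = 1) {L : Finset V} (hL : L ∈ narrow s t x) :
    1 ≤ ∑ e ∈ cutEdges L, frac s t x p T P I e := by
  have hL' := mem_narrow.1 hL
  have hz : 0 < 2 - cx x L := by linarith [hL'.2.2]
  simp only [frac]
  rw [sum_add_distrib, sum_add_distrib, sum_add_distrib, ← sum_div, ← mul_sum]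
  have h1 : (1 : ℝ) ≤ ∑ e ∈ cutEdges L, ind P e := by
    have h2 := cx_ind P L
    rw [cx] at h2
    rw [h2]
    exact_mod_cast stJoin_cut hT hPT hP hL'.1 hL'.2.1
  have h2 : eta x L ≤ ∑ e ∈ cutEdges L,
      ∑ L ∈ I, eta x L * ind (T.filter (· ∈ cutEdges L)) e + ∑ e ∈ cutEdges L,
      ∑ L ∈ narrow s t x \ I, eta x L / (2 - cx x L) * vv p L e := by
    by_cases hLI : L ∈ I
    · have h3 : eta x L ≤ ∑ e ∈ cutEdges L,
          ∑ L ∈ I, eta x L * ind (T.filter (· ∈ cutEdges L)) e := by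
        calc eta x L = ∑ e ∈ cutEdges L, eta x L * ind (T.filter (· ∈ cutEdges L)) e := by
              rw [← mul_sum, sum_ind_cut, hone L hLI]; simp
          _ ≤ _ := by
              apply sum_le_sum
              intro e _
              exact single_le_sum
                (f := fun L => eta x L * ind (T.filter (· ∈ cutEdges L)) e)
                (fun L _ => mul_nonneg (eta_nonneg L) (ind_nonneg' _ _)) hLI
      have h4 := sum_nonneg fun e (_ : e ∈ cutEdges L) => (frac_parts D T P I e).2.2
      linarith
    · have h3 : eta x L ≤ ∑ e ∈ cutEdges L,
          ∑ L ∈ narrow s t x \ I, eta x L / (2 - cx x L) * vv p L e := by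
        calc eta x L = ∑ e ∈ cutEdges L, eta x L / (2 - cx x L) * vv p L e := by
              rw [← mul_sum, vv_cut D hL, div_mul_cancel₀ _ hz.ne']
          _ ≤ _ := by
              apply sum_le_sum
              intro e _
              refine single_le_sum
                (f := fun L => eta x L / (2 - cx x L) * vv p L e)
                (fun L hL => mul_nonneg (div_nonneg (eta_nonneg L) ?_) (vv_nonneg D.nonneg _ _))
                (mem_sdiff.2 ⟨hL, hLI⟩)
              linarith [(mem_narrow.1 (mem_sdiff.1 hL).1).2.2]
      have h4 := sum_nonneg fun e (_ : e ∈ cutEdges L) => (frac_parts D T P I e).2.1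
      linarith
  have h3 : (2 - cx x L) / 2 - 1 / 16 ≤ eta x L := le_max_left _ _
  rw [cx] at h3
  linarith

lemma frac_cut (hst : s ≠ t) (hx : SubtourLP s t x) (D : Decomp s t x p) (hT : IsTree T)
    (hPT : P ⊆ T) (hP : ∀ v, Odd #{e ∈ P | v ∈ e} ↔ (v = s ↔ ¬ v = t))
    (hone : ∀ L ∈ I, #{e ∈ T | e ∈ cutEdges L} = 1) {U : Finset V} (hU : U.Nonempty)
    (hU' : U ≠ univ) : 1 ≤ ∑ e ∈ cutEdges U, frac s t x p T P I e := by
  by_cases h2 : 2 ≤ cx x U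
  · have : cx x U / 2 ≤ ∑ e ∈ cutEdges U, frac s t x p T P I e := by
      rw [cx, sum_div]
      apply sum_le_sum
      intro e _
      have := frac_parts D T P I e
      rw [frac]; linarith
    linarith
  · by_cases hs : s ∈ U <;> by_cases ht : t ∈ U
    · exact absurd (lp_cut_two hst hx hU hU' (by simp [hs, ht])) h2
    · exact frac_narrow D hT hPT hP hone (mem_narrow.2 ⟨hs, ht, not_le.1 h2⟩)
    · rw [← cut_compl]
      exact frac_narrow D hT hPT hP hone
        (mem_narrow.2 ⟨by simp [hs], by simp [ht], by rw [cx_compl]; exact not_le.1 h2⟩)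
    · exact absurd (lp_cut_two hst hx hU hU' (by simp [hs, ht])) h2

lemma sum_mul_ind {S : Finset (Sym2 V)} (hS : S ⊆ edgesIn univ) (f : Sym2 V → ℝ) :
    ∑ e ∈ edgesIn (univ : Finset V), f e * ind S e = ∑ e ∈ S, f e := by
  simp only [ind, mul_ite, mul_one, mul_zero]
  rw [← sum_filter]
  apply sum_congr _ fun _ _ => rfl
  ext e; rw [mem_filter]
  exact ⟨fun h => h.2, fun h => ⟨hS h, h⟩⟩

/-- The tour obtained from one tree of the decomposition. -/
lemma tour_one (hst : s ≠ t) (hx : SubtourLP s t x) (D : Decomp s t x p)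
    {c : Sym2 V → ℝ} (hc : ∀ e : Sym2 V, ¬ e.IsDiag → 0 < c e)
    {i : Finset (Sym2 V) × Finset (Finset V)} (hi : Good s t x i) (hPT : P ⊆ i.1)
    (hP : ∀ v, Odd #{e ∈ P | v ∈ e} ↔ (v = s ↔ ¬ v = t)) :
    ∃ M, Valid s t M ∧ (M.map c).sum ≤ ∑ e ∈ i.1, c e + 1 / 2 * ∑ e ∈ edgesIn univ, c e * x e +
      1 / 16 * ∑ e ∈ P, c e + ∑ L ∈ i.2, (eta x L - (2 - cx x L)) * kap c i.1 L +
      ∑ L ∈ narrow s t x \ i.2, eta x L / (2 - cx x L) * KK p c L := by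
  have hC := hi.comb hst hx
  obtain ⟨h, g, hg0, hh, hkg, hhg, hy⟩ := hC.tour hc
  obtain ⟨M, hM, hcost⟩ := hy (frac s t x p i.1 P i.2) (fun e => by
      have := frac_parts D i.1 P i.2 e
      have := hx.1 e
      rw [frac]; linarith) (fun U hU hU' => frac_cut hst hx D hi.tree hPT hP hi.one hU hU')
  refine ⟨M, hM, hcost.trans ?_⟩
  have hTe : i.1 ⊆ edgesIn univ := hi.tree.1.1
  -- the surcharge `h` vanishes on the tree edges entering the fractional join
  have hTh : ∀ e ∈ i.1, h e = 0 := fun e he =>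
    hh e fun L hL L' hL' h1 h2 => hC.cross_unique he hL hL' h1 h2
  have hjh : ∀ j, Good s t x j → ∀ L ∈ j.2, L ∉ i.2 → ∀ e ∈ j.1, h e = 0 :=
    fun j hj L hL hL' e he => hh e fun L1 hL1 L2 hL2 h1 h2 =>
      (hj.comb hst hx).cross_unique he (hi.nested hj hL hL' hL1) (hi.nested hj hL hL' hL2) h1 h2
  have s1 : ∑ e ∈ edgesIn univ, (c e + 2 * h e) * ind P e = ∑ e ∈ P, c e := by
    rw [sum_mul_ind (hPT.trans hTe)]
    apply sum_congr rfl
    intro e he; rw [hTh e (hPT he)]; ring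
  have s2 : ∀ L, ∑ e ∈ edgesIn univ, (c e + 2 * h e) * ind (i.1.filter (· ∈ cutEdges L)) e =
      kap c i.1 L := by
    intro L
    rw [sum_mul_ind ((filter_subset _ _).trans hTe)]
    apply sum_congr rfl
    intro e he; rw [hTh e (mem_filter.1 he).1]; ring
  have s3 : ∀ L ∈ narrow s t x \ i.2,
      ∑ e ∈ edgesIn univ, (c e + 2 * h e) * vv p L e = KK p c L := by
    intro L hL
    simp only [vv, mul_sum]
    rw [sum_comm, KK]
    apply sum_congr rfl
    intro j hj
    by_cases hg : Good s t x j
    · rw [kap, mul_sum, ← sum_mul_ind ((filter_subset _ _).trans hg.tree.1.1)]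
      apply sum_congr rfl
      intro e _
      rw [ind]
      split_ifs with hm
      · rw [hjh j hg L (mem_filter.1 hj).2 (mem_sdiff.1 hL).2 e (mem_filter.1 hm).1]; ring
      · ring
    · rw [D.good j hg]; simp
  have s4 : ∑ e ∈ edgesIn univ, h e * x e ≤ ∑ L ∈ i.2, (cx x L - 1) * kap c i.1 L := by
    have hpay := payment hst hx _ i.2 (kap c i.1) g rfl hi.sub (fun L _ => kap_nonneg hc _ L)
      hg0 hkg
    have h1 : ∑ e ∈ edgesIn (univ : Finset V), (h e + g e) * x e =
        ∑ L ∈ i.2, cx x L * kap c i.1 L := by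
      simp only [hhg, sum_filter, sum_mul]
      rw [sum_comm]
      apply sum_congr rfl
      intro L _
      rw [cx_eq, sum_mul]
      apply sum_congr rfl
      intro e _
      split_ifs <;> ring
    simp only [add_mul, sum_add_distrib] at h1
    simp only [sub_mul, one_mul, sum_sub_distrib]
    have h2 : ∑ e ∈ edgesIn (univ : Finset V), x e * g e =
      ∑ e ∈ edgesIn (univ : Finset V), g e * x e := sum_congr rfl fun e _ => mul_comm _ _
    linarith
  have key : ∑ e ∈ edgesIn univ, (c e + 2 * h e) * frac s t x p i.1 P i.2 e =
      1 / 2 * ∑ e ∈ edgesIn univ, c e * x e + ∑ e ∈ edgesIn univ, h e * x e +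
      1 / 16 * ∑ e ∈ P, c e + ∑ L ∈ i.2, eta x L * kap c i.1 L +
      ∑ L ∈ narrow s t x \ i.2, eta x L / (2 - cx x L) * KK p c L := by
    rw [← s1, ← sum_congr rfl fun L (_ : L ∈ i.2) => congrArg (eta x L * ·) (s2 L),
      ← sum_congr rfl fun L hL => congrArg (eta x L / (2 - cx x L) * ·) (s3 L hL)]
    simp only [mul_sum]
    rw [sum_comm (s := i.2), sum_comm (s := narrow s t x \ i.2), ← sum_add_distrib,
      ← sum_add_distrib, ← sum_add_distrib, ← sum_add_distrib]
    apply sum_congr rfl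
    intro e _
    rw [frac, mul_add, mul_add, mul_add, mul_sum, mul_sum]
    congr 1
    · congr 1
      · ring
      · exact sum_congr rfl fun L _ => by ring
    · exact sum_congr rfl fun L _ => by ring
  rw [key]
  have h5 : ∑ L ∈ i.2, (eta x L - (2 - cx x L)) * kap c i.1 L =
      ∑ L ∈ i.2, eta x L * kap c i.1 L + ∑ L ∈ i.2, (cx x L - 1) * kap c i.1 L -
      ∑ L ∈ i.2, kap c i.1 L := by
    rw [← sum_add_distrib, ← sum_sub_distrib]
    exact sum_congr rfl fun L _ => by ring
  rw [h5]
  linarith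

end
end STPath

namespace STPath

/-! ### Averaging over the trees -/
set_option linter.unusedSectionVars false
variable {V : Type*} [Fintype V] {s t : V} {x : Sym2 V → ℝ}
  {p : Finset (Sym2 V) × Finset (Finset V) → ℝ} {P : Finset (Sym2 V)}

/-- The tour obtained by doubling the tree edges off the `s`-`t` path. -/
lemma tour_two {T : Finset (Sym2 V)} (hT : IsTree T) (hst : s ≠ t) (c : Sym2 V → ℝ) (hPT : P ⊆ T)
    (hP : ∀ v, Odd #{e ∈ P | v ∈ e} ↔ (v = s ↔ ¬ v = t)) :
    ∃ M, Valid s t M ∧ (M.map c).sum = 2 * ∑ e ∈ T, c e - ∑ e ∈ P, c e := by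
  refine ⟨T.val + (T \ P).val, ⟨?_, ?_, ?_⟩, ?_⟩
  · intro e he
    have : e ∈ T := by
      rw [Multiset.mem_add, mem_val, mem_val, mem_sdiff] at he
      tauto
    exact (mem_filter.1 (hT.1.1 this)).2
  · intro v
    rw [Multiset.countP_add, countP_val, countP_val]
    have h1 : #{e ∈ T \ P | v ∈ e} + #{e ∈ P | v ∈ e} = #{e ∈ T | v ∈ e} := by
      rw [← card_sdiff_add_card_eq_card (filter_subset_filter (v ∈ ·) hPT)]
      congr 2
      ext e; simp only [mem_filter, mem_sdiff]; tauto
    have h2 := hP v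
    rw [Nat.odd_iff] at h2
    rw [Nat.even_iff]
    by_cases hs : v = s
    · have ht : ¬ v = t := fun h => hst (hs.symm.trans h)
      simp only [hs, true_iff] at h2 ⊢
      simp only [hs] at h1 ht
      simp only [ht, not_false_eq_true, iff_true, if_true, if_false] at h2 ⊢
      omega
    · by_cases ht : v = t
      · simp only [ht, not_true, if_true] at h1 h2 ⊢
        simp only [ht] at hs h1 h2
        simp only [hs, if_false, iff_self, iff_true] at h2 ⊢
        omega
      · simp only [hs, ht, if_false, not_false_eq_true, iff_true, iff_false] at h2 ⊢
        omega
  · intro U hU hU'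
    obtain ⟨e, he, hc⟩ := tree_cut hT hU hU'
    exact ⟨e, Multiset.mem_add.2 (Or.inl he), hc⟩
  · rw [Multiset.map_add, Multiset.sum_add]
    change ∑ e ∈ T, c e + ∑ e ∈ T \ P, c e = _
    have := sum_sdiff (f := c) hPT
    linarith

/-- The average cost of a tree of the decomposition is the LP cost. -/
lemma avg_tree (D : Decomp s t x p) (c : Sym2 V → ℝ) :
    ∑ i, p i * ∑ e ∈ i.1, c e = ∑ e ∈ edgesIn univ, c e * x e := by
  have h1 : ∀ e ∈ edgesIn (univ : Finset V), c e * x e = ∑ i, p i * (c e * ind i.1 e) := by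
    intro e he
    rw [D.edge e (mem_filter.1 he).2, mul_sum]
    exact sum_congr rfl fun i _ => by ring
  rw [sum_congr rfl h1, sum_comm]
  apply sum_congr rfl
  intro i _
  by_cases hg : Good s t x i
  · rw [← mul_sum, sum_mul_ind hg.tree.1.1]
  · rw [D.good i hg]; simp

lemma avg_in (D : Decomp s t x p) (c : Sym2 V → ℝ) (f : Finset V → ℝ) :
    ∑ i, p i * ∑ L ∈ i.2, f L * kap c i.1 L = ∑ L ∈ narrow s t x, f L * KK p c L := by
  simp only [KK, mul_sum, sum_filter]
  rw [sum_comm]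
  apply sum_congr rfl
  intro i _
  by_cases hg : Good s t x i
  · rw [← sum_filter_add_sum_filter_not (narrow s t x) (· ∈ i.2)]
    rw [add_eq_left.2]
    · have : (narrow s t x).filter (· ∈ i.2) = i.2 := by
        ext L; rw [mem_filter]; exact ⟨fun h => h.2, fun h => ⟨hg.sub h, h⟩⟩
      rw [this]
      apply sum_congr rfl
      intro L hL
      rw [if_pos hL]; ring
    · apply sum_eq_zero
      intro L hL
      rw [if_neg (mem_filter.1 hL).2, mul_zero]
  · simp [D.good i hg]

lemma avg_out (D : Decomp s t x p) (f : Finset V → ℝ) :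
    ∑ i, p i * ∑ L ∈ narrow s t x \ i.2, f L =
      ∑ L ∈ narrow s t x, f L * (1 - (2 - cx x L)) := by
  have h1 : ∀ L ∈ narrow s t x, f L * (1 - (2 - cx x L)) =
      ∑ i : Finset (Sym2 V) × Finset (Finset V), if L ∉ i.2 then p i * f L else 0 := by
    intro L hL
    rw [← D.mass L hL, ← D.total, ← sum_filter_add_sum_filter_not univ
      (fun i : Finset (Sym2 V) × Finset (Finset V) => L ∈ i.2), add_sub_cancel_left, mul_sum,
      ← sum_filter]
    exact sum_congr rfl fun i _ => mul_comm _ _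
  rw [sum_congr rfl h1, sum_comm]
  apply sum_congr rfl
  intro i _
  rw [mul_sum, ← sum_filter]
  apply sum_congr _ fun _ _ => rfl
  ext L; simp

/-- The first tour and the second tour of each tree, weighted `16 : 1` and averaged over the
decomposition, have cost at most `26 / 17` times the LP cost. -/
lemma exists_valid (hst : s ≠ t) (hx : SubtourLP s t x)
    {c : Sym2 V → ℝ} (hc : ∀ e : Sym2 V, ¬ e.IsDiag → 0 < c e) :
    ∃ M, Valid s t M ∧ (M.map c).sum ≤ (3 / 2 + 1 / 34) * ∑ e ∈ edgesIn univ, c e * x e := by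
  by_contra hcon
  push Not at hcon
  obtain ⟨p, h1, h2, h3, h4, h5⟩ := layered_decomposition hst hx
  have D : Decomp s t x p := ⟨h1, h2, h3, h4, h5⟩
  set C := ∑ e ∈ edgesIn univ, c e * x e with hC
  -- `16/17` of the first tour and `1/17` of the second: the path contributions cancel
  have main : ∀ i, Good s t x i → 26 * C < 18 * ∑ e ∈ i.1, c e + 8 * C +
      16 * (∑ L ∈ i.2, (eta x L - (2 - cx x L)) * kap c i.1 L) +
      16 * ∑ L ∈ narrow s t x \ i.2, eta x L / (2 - cx x L) * KK p c L := by
    intro i hi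
    obtain ⟨P, hPT, hP⟩ := exists_stJoin hi.tree s t
    obtain ⟨M, hM, hMc⟩ := tour_one hst hx D hc hi hPT hP
    obtain ⟨M', hM', hMc'⟩ := tour_two hi.tree hst c hPT hP
    have := hcon M hM
    have := hcon M' hM'
    linarith
  have hle : ∀ i, p i * (26 * C) ≤ p i * (18 * ∑ e ∈ i.1, c e + 8 * C +
      16 * (∑ L ∈ i.2, (eta x L - (2 - cx x L)) * kap c i.1 L) +
      16 * ∑ L ∈ narrow s t x \ i.2, eta x L / (2 - cx x L) * KK p c L) := by
    intro i
    by_cases hg : Good s t x i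
    · exact mul_le_mul_of_nonneg_left (main i hg).le (h1 i)
    · rw [h2 i hg]; simp
  obtain ⟨j, hj⟩ : ∃ j, p j ≠ 0 := by
    by_contra hn
    push Not at hn
    rw [sum_congr rfl fun i _ => hn i] at h3
    simp at h3
  have hlt := sum_lt_sum (fun i _ => hle i) ⟨j, mem_univ j, mul_lt_mul_of_pos_left
    (main j (by by_contra hg; exact hj (h2 j hg))) (lt_of_le_of_ne (h1 j) hj.symm)⟩
  have e1 : ∑ i, p i * (26 * C) = 26 * C := by rw [← sum_mul, h3, one_mul]
  have e2 : ∑ i, p i * (18 * ∑ e ∈ i.1, c e + 8 * C +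
      16 * (∑ L ∈ i.2, (eta x L - (2 - cx x L)) * kap c i.1 L) +
      16 * ∑ L ∈ narrow s t x \ i.2, eta x L / (2 - cx x L) * KK p c L) =
      18 * C + 8 * C + 16 * (∑ L ∈ narrow s t x, (eta x L - (2 - cx x L)) * KK p c L) +
      16 * ∑ L ∈ narrow s t x, eta x L / (2 - cx x L) * KK p c L * (1 - (2 - cx x L)) := by
    have a1 : 18 * C = ∑ i, p i * (18 * ∑ e ∈ i.1, c e) := by
      rw [hC, ← avg_tree D, mul_sum]
      exact sum_congr rfl fun i _ => by ring
    have a2 : 8 * C = ∑ i, p i * (8 * C) := by rw [← sum_mul, h3, one_mul]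
    rw [← avg_in D, ← avg_out D, a1]
    nth_rewrite 2 [a2]
    rw [mul_sum univ _ (16 : ℝ), mul_sum univ _ (16 : ℝ), ← sum_add_distrib, ← sum_add_distrib,
      ← sum_add_distrib]
    exact sum_congr rfl fun i _ => by ring
  have e3 : ∑ L ∈ narrow s t x, (eta x L - (2 - cx x L)) * KK p c L +
      ∑ L ∈ narrow s t x, eta x L / (2 - cx x L) * KK p c L * (1 - (2 - cx x L)) ≤ 0 := by
    rw [← sum_add_distrib]
    apply sum_nonpos
    intro L hL
    have hz : 0 < 2 - cx x L := by linarith [(mem_narrow.1 hL).2.2]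
    have hK : 0 ≤ KK p c L := sum_nonneg fun i _ => mul_nonneg (h1 i) (kap_nonneg hc _ _)
    set z := 2 - cx x L with hzd
    have he : eta x L ≤ z ^ 2 := by
      rw [eta]
      -- `z ^ 2 - z / 2 + 1 / 16` is a square
      exact max_le (by nlinarith [sq_nonneg (z - 1 / 4)]) (sq_nonneg z)
    have : (eta x L - z) * KK p c L + eta x L / z * KK p c L * (1 - z) =
        -((z ^ 2 - eta x L) / z * KK p c L) := by
      field_simp; ring
    rw [this, neg_nonpos]
    exact mul_nonneg (div_nonneg (by linarith) hz.le) hK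
  rw [e1, e2] at hlt
  linarith

lemma lcost_mono {c c' : Sym2 V → ℝ} (h : ∀ e, c e ≤ c' e) (l : List V) :
    lcost c l ≤ lcost c' l := by
  unfold lcost
  exact List.sum_le_sum fun q _ => h _

end STPath

/-- The `3/2 + 1/34` bound for the metric `s`–`t` path TSP: for every metric cost
function `c` and every feasible solution `x` of the subtour elimination LP there is a
Hamiltonian `s`–`t` path of cost at most `(3/2 + 1/34)` times the LP cost of `x`. -/
theorem st_path_tsp_ratio {V : Type*} [Fintype V] (hV : 2 ≤ Fintype.card V)
    (s t : V) (hst : s ≠ t)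
    (c : Sym2 V → ℝ) (hc0 : ∀ e : Sym2 V, ¬ e.IsDiag → 0 ≤ c e)
    (htri : ∀ u v w : V, u ≠ v → v ≠ w → u ≠ w → c s(u, w) ≤ c s(u, v) + c s(v, w))
    (x : Sym2 V → ℝ) (hx : SubtourLP s t x) :
    ∃ l : List V, l.Nodup ∧ (∀ v : V, v ∈ l) ∧ l.head? = some s ∧ l.getLast? = some t ∧
      ((l.zip l.tail).map fun p => c s(p.1, p.2)).sum ≤
        (3 / 2 + 1 / 34) * ∑ e ∈ Finset.univ.filter (fun e : Sym2 V => ¬ e.IsDiag), c e * x e := by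
  set R := (3 / 2 + 1 / 34) * ∑ e ∈ Finset.univ.filter (fun e : Sym2 V => ¬ e.IsDiag), c e * x e
    with hR
  have hE : STPath.edgesIn (univ : Finset V) = univ.filter (fun e : Sym2 V => ¬ e.IsDiag) := by
    ext e; simp [STPath.edgesIn]
  -- tours for the strictly positive costs `c + ε`
  have hε : ∀ ε : ℝ, 0 < ε → ∃ l : List V, (l.Nodup ∧ (∀ v : V, v ∈ l) ∧ l.head? = some s ∧
      l.getLast? = some t) ∧ STPath.lcost c l ≤ R + ε * ((3 / 2 + 1 / 34) *
        ∑ e ∈ univ.filter (fun e : Sym2 V => ¬ e.IsDiag), x e) := by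
    intro ε hε
    obtain ⟨M, hM, hMc⟩ := STPath.exists_valid hst hx (c := fun e => c e + ε)
      (fun e he => by have := hc0 e he; linarith)
    obtain ⟨l, h1, h2, h3, h4, h5⟩ := STPath.ham_of_multigraph s t hst (fun e => c e + ε)
      (fun e he => by have := hc0 e he; linarith)
      (fun u v w h1 h2 h3 => by have := htri u v w h1 h2 h3; linarith) M hM.diag hM.par hM.conn
    refine ⟨l, ⟨h1, h2, h3, h4⟩, ?_⟩
    have h6 := STPath.lcost_mono (c := c) (c' := fun e => c e + ε) (fun e => by linarith) l
    rw [hE] at hMc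
    simp only [add_mul, sum_add_distrib, ← mul_sum] at hMc
    have h7 := h6.trans (h5.trans hMc)
    rw [hR]
    linarith
  set S : Set (List V) := {l | l.Nodup ∧ (∀ v : V, v ∈ l) ∧ l.head? = some s ∧
      l.getLast? = some t} with hS
  have hfin : S.Finite := by
    refine (List.finite_length_eq V (Fintype.card V)).subset ?_
    rintro l ⟨h1, h2, _⟩
    rw [Set.mem_ofPred_eq, ← List.toFinset_card_of_nodup h1, ← Finset.card_univ]
    congr 1
    ext v; simp [h2 v]
  obtain ⟨l1, hl1, _⟩ := hε 1 one_pos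
  obtain ⟨l, hl, hmin⟩ := Set.exists_min_image S (STPath.lcost c) hfin ⟨l1, hl1⟩
  refine ⟨l, hl.1, hl.2.1, hl.2.2.1, hl.2.2.2, ?_⟩
  change STPath.lcost c l ≤ R
  set X := (3 / 2 + 1 / 34) * ∑ e ∈ univ.filter (fun e : Sym2 V => ¬ e.IsDiag), x e with hX
  have hX0 : 0 ≤ X := mul_nonneg (by norm_num) (sum_nonneg fun e _ => hx.1 e)
  apply le_of_forall_pos_le_add
  intro δ hδ
  obtain ⟨l', hl', hc'⟩ := hε (δ / (X + 1)) (by positivity)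
  have h1 : δ / (X + 1) * X ≤ δ := by
    rw [div_mul_eq_mul_div, div_le_iff₀ (by positivity)]
    nlinarith
  linarith [hmin l' hl']
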